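/- arXiv:1702.04969 — 2 statements merged into one kernel-verified Lean document; each statement's English description precedes it below -/
import Mathlib

section
/- Let n ≥ 2, let p, q, r > 1, let α > 0, β, γ be real and 0 < a ≤ 1 satisfy γ < n/r, β < n/q, 1 - n/p < α < n/p' (where p' = p/(p-1)), and γ - n/r = a(1 - α - n/p) + (1-a)(β - n/q). Let 1 ≤ q₂ ≤ q₃ ≤ ∞ and 1 ≤ q₁ ≤ ∞ satisfy 1/q₁ = a/q₂ + (1-a)/q₃. Set Δ = γ + aα - (1-a)β and assume 0 ≤ Δ ≤ a. Then there exists a constant C > 0 such that for every smooth compactly supported f : ℝⁿ → ℝ, ‖ |x|^{-γ} f ‖_{r,q₁} ≤ C ‖ |x|^{α} |∇f| ‖_{p,q₂}^{a} · ‖ |x|^{-β} f ‖_{q,q₃}^{1-a}. -/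
open MeasureTheory Set ENNReal

/-- The distribution function `μ_f(λ) = μ{x : |f x| > λ}` of a function. -/
noncomputable def distribFn {α : Type*} [MeasurableSpace α] (μ : Measure α)
    (f : α → ℝ) (l : ℝ≥0∞) : ℝ≥0∞ :=
  μ {x | l < ENNReal.ofReal |f x|}

/-- The decreasing rearrangement `f*(t) = inf {λ > 0 : μ_f(λ) ≤ t}`. -/
noncomputable def rearr {α : Type*} [MeasurableSpace α] (μ : Measure α)
    (f : α → ℝ) (t : ℝ) : ℝ≥0∞ :=
  sInf {l : ℝ≥0∞ | 0 < l ∧ distribFn μ f l ≤ ENNReal.ofReal t}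

/-- The Lorentz `L^{p,q}` (quasi)norm
`‖f‖_{p,q} = (∫₀^∞ (t^{1/p} f*(t))^q dt/t)^{1/q}` for `q < ∞`, and
`‖f‖_{p,∞} = sup_{t>0} t^{1/p} f*(t)`. -/
noncomputable def lorentz {α : Type*} [MeasurableSpace α] (μ : Measure α)
    (p q : ℝ≥0∞) (f : α → ℝ) : ℝ≥0∞ :=
  if q = ∞ then ⨆ t ∈ Ioi (0 : ℝ), ENNReal.ofReal t ^ p.toReal⁻¹ * rearr μ f t
  else (∫⁻ t in Ioi (0 : ℝ),
      (ENNReal.ofReal t ^ p.toReal⁻¹ * rearr μ f t) ^ q.toReal / ENNReal.ofReal t) ^ q.toReal⁻¹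

/-- Decreasing rearrangement of an extended nonnegative function. -/
noncomputable def RR {X : Type*} [MeasurableSpace X] (μ : Measure X)
    (u : X → ℝ≥0∞) (t : ℝ≥0∞) : ℝ≥0∞ :=
  sInf {l : ℝ≥0∞ | 0 < l ∧ μ {x | l < u x} ≤ t}

section RRsec
variable {X : Type*} [MeasurableSpace X] {μ : Measure X}

lemma RR_le_of (u : X → ℝ≥0∞) (t l : ℝ≥0∞) (h : μ {x | l < u x} ≤ t) : RR μ u t ≤ l := by
  refine le_of_forall_gt_imp_ge_of_dense fun l' hl' => ?_
  refine sInf_le ⟨lt_of_le_of_lt (zero_le) hl', le_trans (measure_mono ?_) h⟩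
  intro x hx
  exact lt_trans hl' hx

lemma meas_RR_le (u : X → ℝ≥0∞) (t : ℝ≥0∞) : μ {x | RR μ u t < u x} ≤ t := by
  by_cases hA : RR μ u t = ∞
  · simp [hA]
  obtain ⟨φ, hφ, hφl, hφt⟩ := exists_seq_strictAnti_tendsto' (lt_top_iff_ne_top.2 hA)
  have hset : {x | RR μ u t < u x} = ⋃ n, {x | φ n < u x} := by
    ext x
    simp only [mem_ofPred_eq, mem_iUnion]
    constructor
    · intro hx
      exact ((hφt.eventually (gt_mem_nhds hx)).exists)
    · rintro ⟨n, hn⟩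
      exact lt_trans (hφl n).1 hn
  have hmono : Monotone fun n => {x | φ n < u x} := by
    intro m n hmn x hx
    exact lt_of_le_of_lt (hφ.antitone hmn) hx
  rw [hset, hmono.measure_iUnion]
  refine iSup_le fun n => ?_
  obtain ⟨l, hl, hlt⟩ := sInf_lt_iff.1 (hφl n).1
  refine le_trans (measure_mono ?_) hl.2
  intro x hx
  exact lt_trans hlt hx

lemma RR_le_iff (u : X → ℝ≥0∞) (t l : ℝ≥0∞) : RR μ u t ≤ l ↔ μ {x | l < u x} ≤ t := by
  refine ⟨fun h => le_trans (measure_mono ?_) (meas_RR_le u t), RR_le_of u t l⟩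
  intro x hx
  exact lt_of_le_of_lt h hx

lemma RR_anti (u : X → ℝ≥0∞) : Antitone (RR μ u) := by
  intro s t hst
  rw [RR_le_iff]
  exact (meas_RR_le u s).trans hst

lemma RR_mono_ae {u v : X → ℝ≥0∞} (h : ∀ᵐ x ∂μ, u x ≤ v x) (t : ℝ≥0∞) :
    RR μ u t ≤ RR μ v t := by
  rw [RR_le_iff]
  refine le_trans (measure_mono_ae ?_) (meas_RR_le v t)
  filter_upwards [h] with x hx hx2
  exact lt_of_lt_of_le hx2 hx

lemma RR_mul (u v : X → ℝ≥0∞) (t : ℝ≥0∞) :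
    RR μ (fun x => u x * v x) (2 * t) ≤ RR μ u t * RR μ v t := by
  rw [RR_le_iff, two_mul]
  refine le_trans (le_trans (measure_mono ?_) (measure_union_le _ _))
    (add_le_add (meas_RR_le u t) (meas_RR_le v t))
  intro x hx
  by_contra hcon
  simp only [mem_union, mem_ofPred_eq, not_or, not_lt] at hcon
  exact absurd hx (not_lt.2 (mul_le_mul' hcon.1 hcon.2))

lemma RR_add (u v : X → ℝ≥0∞) (t : ℝ≥0∞) :
    RR μ (fun x => u x + v x) (2 * t) ≤ RR μ u t + RR μ v t := by
  rw [RR_le_iff, two_mul]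
  refine le_trans (le_trans (measure_mono ?_) (measure_union_le _ _))
    (add_le_add (meas_RR_le u t) (meas_RR_le v t))
  intro x hx
  by_contra hcon
  simp only [mem_union, mem_ofPred_eq, not_or, not_lt] at hcon
  exact absurd hx (not_lt.2 (add_le_add hcon.1 hcon.2))

lemma RR_rpow (u : X → ℝ≥0∞) (t : ℝ≥0∞) {b : ℝ} (hb : 0 ≤ b) :
    RR μ (fun x => u x ^ b) t ≤ RR μ u t ^ b := by
  rw [RR_le_iff]
  refine le_trans (measure_mono ?_) (meas_RR_le u t)
  intro x hx
  by_contra hcon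
  simp only [mem_ofPred_eq, not_lt] at hcon
  exact absurd hx (not_lt.2 (ENNReal.rpow_le_rpow hcon hb))

lemma RR_const_mul (u : X → ℝ≥0∞) (t c : ℝ≥0∞) :
    RR μ (fun x => c * u x) t ≤ c * RR μ u t := by
  rw [RR_le_iff]
  refine le_trans (measure_mono ?_) (meas_RR_le u t)
  intro x hx
  by_contra hcon
  simp only [mem_ofPred_eq, not_lt] at hcon
  exact absurd hx (not_lt.2 (mul_le_mul' le_rfl hcon))

/-- Real powers of two, as extended nonnegative reals. -/
noncomputable def e2 (x : ℝ) : ℝ≥0∞ := (2 : ℝ≥0∞) ^ x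

lemma e2_add (x y : ℝ) : e2 (x + y) = e2 x * e2 y :=
  ENNReal.rpow_add _ _ (by norm_num) (by norm_num)
lemma e2_zero : e2 0 = 1 := by simp [e2]
lemma e2_one : e2 1 = 2 := by simp [e2]
lemma e2_pos (x : ℝ) : 0 < e2 x := ENNReal.rpow_pos (by norm_num) (by norm_num)
lemma e2_ne_zero (x : ℝ) : e2 x ≠ 0 := (e2_pos x).ne'
lemma e2_ne_top (x : ℝ) : e2 x ≠ ∞ := by
  simp only [e2]
  exact ENNReal.rpow_ne_top_of_ne_zero (by norm_num) (by norm_num)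
lemma e2_mono : Monotone e2 := by
  intro x y h
  exact ENNReal.rpow_le_rpow_of_exponent_le (by norm_num) h
lemma e2_rpow (x y : ℝ) : e2 x ^ y = e2 (x * y) := by
  simp only [e2]; rw [ENNReal.rpow_mul]
lemma e2_cancel (x : ℝ) : e2 x * e2 (-x) = 1 := by rw [← e2_add]; simp [e2_zero]
lemma e2_ofReal (x : ℝ) : e2 x = ENNReal.ofReal ((2 : ℝ) ^ x) := by
  rw [e2, ← ENNReal.ofReal_rpow_of_pos (by norm_num)]; simp

/-- Averages over small sets are controlled by the dyadic rearrangement. -/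
lemma setLIntegral_le_dyadic {u : X → ℝ≥0∞} (hu : AEMeasurable u μ) (m : ℤ) (E : Set X)
    (hE : μ E ≤ e2 m) :
    ∫⁻ x in E, u x ∂μ ≤ 2 * ∑' j : ℕ, e2 (m - j) * RR μ u (e2 (m - j - 1)) := by
  have hle : ∀ᵐ x ∂μ, u x ≤ RR μ u (e2 m) +
      ∑' j : ℕ, indicator {x | RR μ u (e2 (m - j)) < u x}
        (fun _ => RR μ u (e2 (m - j - 1))) x := by
    have hnull : μ (⋂ j : ℕ, {x | RR μ u (e2 (m - j)) < u x}) = 0 := by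
      have h1 : ∀ j : ℕ, μ (⋂ j : ℕ, {x | RR μ u (e2 (m - j)) < u x}) ≤ e2 (m - j) := fun j =>
        (measure_mono (iInter_subset _ j)).trans (meas_RR_le u _)
      have h2 : Filter.Tendsto (fun j : ℕ => e2 (m - j)) Filter.atTop (nhds 0) := by
        have : ∀ j : ℕ, e2 (m - j) = e2 m * (2⁻¹ : ℝ≥0∞) ^ j := by
          intro j
          rw [sub_eq_add_neg, e2_add]
          congr 1
          rw [e2, ENNReal.rpow_neg, ENNReal.rpow_natCast, ENNReal.inv_pow]
        simp_rw [this]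
        have h3 := ENNReal.tendsto_pow_atTop_nhds_zero_of_lt_one (r := 2⁻¹) (by simp)
        have := ENNReal.Tendsto.const_mul (a := e2 m) h3 (Or.inr (e2_ne_top _))
        simpa using this
      exact le_antisymm (ge_of_tendsto' h2 h1) (zero_le)
    have hae : ∀ᵐ x ∂μ, x ∉ ⋂ j : ℕ, {x | RR μ u (e2 (m - j)) < u x} :=
      measure_eq_zero_iff_ae_notMem.1 hnull
    filter_upwards [hae] with x hx
    by_cases h0 : u x ≤ RR μ u (e2 m)
    · exact h0.trans le_self_add
    have : ∃ j : ℕ, RR μ u (e2 (m - j)) < u x ∧ u x ≤ RR μ u (e2 (m - j - 1)) := by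
      by_contra hcon
      push Not at hcon
      apply hx
      rw [mem_iInter]
      intro j
      induction j with
      | zero => simpa using h0
      | succ j ih =>
        have := hcon j ih
        simp only [mem_ofPred_eq]
        push_cast
        rwa [← sub_sub]
    obtain ⟨j, hj1, hj2⟩ := this
    refine le_trans ?_ le_add_self
    refine le_trans ?_ (ENNReal.le_tsum j)
    rw [indicator_of_mem (by exact hj1)]
    exact hj2
  have hms : ∀ j : ℕ, NullMeasurableSet {x | RR μ u (e2 (m - j)) < u x} μ := fun j =>
    nullMeasurableSet_lt aemeasurable_const hu
  calc ∫⁻ x in E, u x ∂μ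
      ≤ ∫⁻ x in E, (RR μ u (e2 m) +
      ∑' j : ℕ, indicator {x | RR μ u (e2 (m - j)) < u x}
        (fun _ => RR μ u (e2 (m - j - 1))) x) ∂μ := lintegral_mono_ae (ae_restrict_of_ae hle)
    _ = RR μ u (e2 m) * μ E + ∫⁻ x in E, ∑' j : ℕ, indicator {x | RR μ u (e2 (m - j)) < u x}
        (fun _ => RR μ u (e2 (m - j - 1))) x ∂μ := by
        rw [lintegral_add_left measurable_const]; simp
    _ ≤ RR μ u (e2 m) * μ E + ∫⁻ x, ∑' j : ℕ, indicator {x | RR μ u (e2 (m - j)) < u x}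
        (fun _ => RR μ u (e2 (m - j - 1))) x ∂μ := by
        gcongr
        exact Measure.restrict_le_self
    _ = RR μ u (e2 m) * μ E + ∑' j : ℕ, RR μ u (e2 (m - j - 1)) *
          μ {x | RR μ u (e2 (m - j)) < u x} := by
        rw [lintegral_tsum (fun j => (aemeasurable_const.indicator₀ (hms j)))]
        congr 2
        ext j
        rw [lintegral_indicator_const₀ (hms j)]
    _ ≤ RR μ u (e2 (m - (0 : ℕ) - 1)) * e2 (m - (0 : ℕ)) +
        ∑' j : ℕ, RR μ u (e2 (m - j - 1)) * e2 (m - j) := by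
        gcongr with j
        · apply RR_anti; apply e2_mono; simp
        · simpa using hE
        · exact meas_RR_le u _
    _ ≤ _ := by
        rw [two_mul]
        have : ∀ j : ℕ, RR μ u (e2 (m - j - 1)) * e2 (m - j)
          = e2 (m - j) * RR μ u (e2 (m - j - 1)) := fun j => mul_comm _ _
        simp_rw [this]
        gcongr
        exact ENNReal.le_tsum (f := fun j : ℕ => e2 (m - j) * RR μ u (e2 (m - j - 1))) 0

end RRsec

/-- Sequence norm `ℓ^{1/s}` on the integers. -/
noncomputable def nrm (s : ℝ) (x : ℤ → ℝ≥0∞) : ℝ≥0∞ :=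
  if s = 0 then ⨆ k, x k else (∑' k, x k ^ s⁻¹) ^ s

lemma nrm_mono {s : ℝ} (hs : 0 ≤ s) {x y : ℤ → ℝ≥0∞} (h : ∀ k, x k ≤ y k) :
    nrm s x ≤ nrm s y := by
  unfold nrm
  split_ifs
  · exact iSup_mono h
  · refine ENNReal.rpow_le_rpow (ENNReal.tsum_le_tsum fun k => ?_) hs
    exact ENNReal.rpow_le_rpow (h k) (inv_nonneg.2 hs)

lemma nrm_const_mul {s : ℝ} (hs : 0 ≤ s) (c : ℝ≥0∞) (x : ℤ → ℝ≥0∞) :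
    nrm s (fun k => c * x k) = c * nrm s x := by
  unfold nrm
  split_ifs with h
  · rw [ENNReal.mul_iSup]
  · have : ∀ k, (c * x k) ^ s⁻¹ = c ^ s⁻¹ * x k ^ s⁻¹ := fun k =>
      ENNReal.mul_rpow_of_nonneg _ _ (inv_nonneg.2 hs)
    simp_rw [this]
    rw [ENNReal.tsum_mul_left, ENNReal.mul_rpow_of_nonneg _ _ hs, ← ENNReal.rpow_mul,
      inv_mul_cancel₀ h, ENNReal.rpow_one]

lemma nrm_shift (s : ℝ) (x : ℤ → ℝ≥0∞) (e : ℤ) : nrm s (fun k => x (k + e)) = nrm s x := by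
  unfold nrm
  split_ifs with h
  · exact (Equiv.addRight e).iSup_comp (g := x)
  · congr 1
    exact (Equiv.addRight e).tsum_eq (fun k => x k ^ s⁻¹)

lemma nrm_rpow {s θ : ℝ} (hθ : 0 < θ) (x : ℤ → ℝ≥0∞) :
    nrm (θ * s) (fun k => x k ^ θ) = nrm s x ^ θ := by
  unfold nrm
  by_cases h : s = 0
  · simp only [h, mul_zero, if_true]
    exact ((ENNReal.orderIsoRpow θ hθ).map_iSup x).symm
  · have h' : θ * s ≠ 0 := mul_ne_zero hθ.ne' h
    rw [if_neg h, if_neg h', ← ENNReal.rpow_mul, mul_comm s θ]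
    congr 2
    ext k
    rw [← ENNReal.rpow_mul]
    congr 1
    field_simp

lemma nrm_mul {s t : ℝ} (hs : 0 ≤ s) (ht : 0 ≤ t) (x y : ℤ → ℝ≥0∞) :
    nrm (s + t) (fun k => x k * y k) ≤ nrm s x * nrm t y := by
  have key : ∀ {t : ℝ}, 0 < t → ∀ x y : ℤ → ℝ≥0∞,
      (∑' k, (x k * y k) ^ t⁻¹) ^ t ≤ (⨆ k, x k) * (∑' k, y k ^ t⁻¹) ^ t := by
    intro t ht x y
    have h1 := nrm_const_mul ht.le (⨆ k, x k) y
    have h2 := nrm_mono ht.le (x := fun k => x k * y k) (y := fun k => (⨆ k, x k) * y k)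
      (fun k => mul_le_mul' (le_iSup x k) le_rfl)
    rw [h1] at h2
    simpa only [nrm, if_neg ht.ne'] using h2
  rcases hs.eq_or_lt with rfl | hs'
  · rcases ht.eq_or_lt with rfl | ht'
    · simp only [nrm, add_zero, if_true]
      exact iSup_le fun k => mul_le_mul' (le_iSup x k) (le_iSup y k)
    · rw [zero_add]
      simpa only [nrm, if_true, if_neg ht'.ne'] using key ht' x y
  · rcases ht.eq_or_lt with rfl | ht'
    · rw [add_zero]
      have := key hs' y x
      simp_rw [mul_comm (y _) (x _)] at this
      rw [mul_comm]
      simpa only [nrm, if_true, if_neg hs'.ne', mul_comm] using this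
    · have hst : 0 < s + t := by positivity
      simp only [nrm, if_neg hs'.ne', if_neg ht'.ne', if_neg hst.ne']
      have h := ENNReal.lintegral_mul_norm_pow_le (μ := Measure.count)
        (f := fun k : ℤ => x k ^ s⁻¹) (g := fun k : ℤ => y k ^ t⁻¹)
        (measurable_of_countable _).aemeasurable
        (measurable_of_countable _).aemeasurable
        (p := s / (s + t)) (q := t / (s + t)) (by positivity) (by positivity) (by field_simp)
      simp only [lintegral_count] at h
      have h2 := ENNReal.rpow_le_rpow h hst.le
      rw [ENNReal.mul_rpow_of_nonneg _ _ hst.le, ← ENNReal.rpow_mul, ← ENNReal.rpow_mul,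
        div_mul_cancel₀ _ hst.ne', div_mul_cancel₀ _ hst.ne'] at h2
      refine le_trans (le_of_eq ?_) h2
      congr 2
      ext k
      rw [← ENNReal.rpow_mul, ← ENNReal.rpow_mul, ENNReal.mul_rpow_of_nonneg _ _ (by positivity)]
      congr 2 <;> field_simp

lemma nrm_holder {s t θ η : ℝ} (hs : 0 ≤ s) (ht : 0 ≤ t) (hθ : 0 ≤ θ) (hη : 0 ≤ η)
    (x y : ℤ → ℝ≥0∞) :
    nrm (θ * s + η * t) (fun k => x k ^ θ * y k ^ η) ≤ nrm s x ^ θ * nrm t y ^ η := by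
  have h0 : ∀ {s θ : ℝ}, 0 ≤ s → 0 ≤ θ → ∀ x : ℤ → ℝ≥0∞,
      nrm (θ * s) (fun k => x k ^ θ) ≤ nrm s x ^ θ := by
    intro s θ _ hθ x
    rcases hθ.eq_or_lt with rfl | hθ'
    · simp [nrm]
    · exact (nrm_rpow hθ' x).le
  exact (nrm_mul (mul_nonneg hθ hs) (mul_nonneg hη ht) _ _).trans
    (mul_le_mul' (h0 hs hθ x) (h0 ht hη y))

lemma tsum_e2_ne_top {δ : ℝ} (hδ : 0 < δ) : ∑' j : ℕ, e2 (-(δ * j)) ≠ ∞ := by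
  have : ∀ j : ℕ, e2 (-(δ * j)) = e2 (-δ) ^ j := by
    intro j
    rw [← ENNReal.rpow_natCast, e2_rpow]
    congr 1; ring
  simp_rw [this]
  rw [ENNReal.tsum_geometric]
  simp only [ne_eq, ENNReal.inv_eq_top]
  have : e2 (-δ) < 1 := by
    rw [e2]
    exact ENNReal.rpow_lt_one_of_one_lt_of_neg (by norm_num) (by linarith)
  exact (tsub_pos_of_lt this).ne'

/-- Geometric sums of arbitrary shifts are bounded on the sequence spaces. -/
lemma nrm_geo {s δ : ℝ} (hs : 0 ≤ s) (hδ : 0 < δ) :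
    ∃ C : ℝ≥0∞, C ≠ ∞ ∧ ∀ (x : ℤ → ℝ≥0∞) (e : ℕ → ℤ),
      nrm s (fun k => ∑' j : ℕ, e2 (-(δ * j)) * x (k + e j)) ≤ C * nrm s x := by
  rcases hs.eq_or_lt with rfl | hs'
  · refine ⟨∑' j : ℕ, e2 (-(δ * j)), tsum_e2_ne_top hδ, fun x e => ?_⟩
    simp only [nrm, if_true]
    refine iSup_le fun k => ?_
    rw [← ENNReal.tsum_mul_right]
    exact ENNReal.tsum_le_tsum fun j => mul_le_mul' le_rfl (le_iSup x _)
  · set A := ∑' j : ℕ, e2 (-((δ / 2) * j)) with hA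
    set B := ∑' j : ℕ, e2 (-((δ / 2 * s⁻¹) * j)) with hB
    have hAt : A ≠ ∞ := tsum_e2_ne_top (by positivity)
    have hBt : B ≠ ∞ := tsum_e2_ne_top (by positivity)
    refine ⟨A * B ^ s, ENNReal.mul_ne_top hAt (ENNReal.rpow_ne_top_of_nonneg hs hBt),
      fun x e => ?_⟩
    have h1 : ∀ k, ∑' j : ℕ, e2 (-(δ * j)) * x (k + e j) ≤
        A * ⨆ j : ℕ, e2 (-(δ / 2 * j)) * x (k + e j) := by
      intro k
      rw [hA, ← ENNReal.tsum_mul_right]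
      refine ENNReal.tsum_le_tsum fun j => ?_
      have : -(δ * j) = -(δ / 2 * j) + -(δ / 2 * j) := by ring
      rw [this, e2_add, mul_assoc]
      exact mul_le_mul' le_rfl (le_iSup (fun j : ℕ => e2 (-(δ / 2 * j)) * x (k + e j)) j)
    refine (nrm_mono hs h1).trans ?_
    rw [nrm_const_mul hs, mul_assoc]
    gcongr
    simp only [nrm, if_neg hs'.ne']
    rw [← ENNReal.mul_rpow_of_nonneg _ _ hs]
    refine ENNReal.rpow_le_rpow ?_ hs
    have hsi : 0 < s⁻¹ := inv_pos.2 hs'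
    calc ∑' k, (⨆ j : ℕ, e2 (-(δ / 2 * j)) * x (k + e j)) ^ s⁻¹
        ≤ ∑' k, ∑' j : ℕ, e2 (-((δ / 2 * s⁻¹) * j)) * x (k + e j) ^ s⁻¹ := by
          refine ENNReal.tsum_le_tsum fun k => ?_
          have := (ENNReal.orderIsoRpow s⁻¹ hsi).map_iSup
            (fun j : ℕ => e2 (-(δ / 2 * j)) * x (k + e j))
          simp only [ENNReal.orderIsoRpow_apply] at this
          rw [this]
          refine iSup_le fun j => ?_
          refine le_trans (le_of_eq ?_) (ENNReal.le_tsum j)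
          rw [ENNReal.mul_rpow_of_nonneg _ _ hsi.le, e2_rpow]
          congr 2; ring
      _ = ∑' j : ℕ, ∑' k, e2 (-((δ / 2 * s⁻¹) * j)) * x (k + e j) ^ s⁻¹ := ENNReal.tsum_comm
      _ = ∑' j : ℕ, e2 (-((δ / 2 * s⁻¹) * j)) * ∑' k, x k ^ s⁻¹ := by
          congr 1
          ext j
          rw [ENNReal.tsum_mul_left]
          congr 1
          exact (Equiv.addRight (e j)).tsum_eq (fun k => x k ^ s⁻¹)
      _ = _ := by rw [ENNReal.tsum_mul_right]

/-- Weighted dyadic sequence of the rearrangement. -/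
noncomputable def Sq {X : Type*} [MeasurableSpace X] (μ : Measure X) (s : ℝ)
    (u : X → ℝ≥0∞) (k : ℤ) : ℝ≥0∞ := e2 (k * s) * RR μ u (e2 k)

lemma RR_eq_Sq {X : Type*} [MeasurableSpace X] (μ : Measure X) (s : ℝ)
    (u : X → ℝ≥0∞) (k : ℤ) : RR μ u (e2 k) = e2 (-(k * s)) * Sq μ s u k := by
  rw [Sq, ← mul_assoc, mul_comm (e2 _) (e2 _), e2_cancel, one_mul]

lemma Ioi_eq_iUnion : Ioi (0 : ℝ) = ⋃ k : ℤ, Ico ((2 : ℝ) ^ k) (2 ^ (k + 1)) := by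
  ext x
  simp only [mem_Ioi, mem_iUnion]
  constructor
  · intro hx
    exact exists_mem_Ico_zpow hx (by norm_num)
  · rintro ⟨k, hk⟩
    exact lt_of_lt_of_le (by positivity) hk.1

lemma disjoint_dyadic :
    Pairwise (Function.onFun Disjoint fun k : ℤ => Ico ((2 : ℝ) ^ k) (2 ^ (k + 1))) := by
  have key : ∀ i j : ℤ, i < j →
      Disjoint (Ico ((2 : ℝ) ^ i) (2 ^ (i + 1))) (Ico ((2 : ℝ) ^ j) (2 ^ (j + 1))) := by
    intro i j hij
    rw [Set.disjoint_left]
    intro x hx hy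
    have : (2 : ℝ) ^ (i + 1) ≤ 2 ^ j := zpow_le_zpow_right₀ (by norm_num) (by omega)
    linarith [hx.2, hy.1]
  intro i j hij
  rcases lt_or_gt_of_ne hij with h | h
  · exact key i j h
  · exact (key j i h).symm

lemma e2_int (k : ℤ) : e2 k = ENNReal.ofReal ((2 : ℝ) ^ k) := by
  rw [e2_ofReal, Real.rpow_intCast]

lemma vol_dyadic (k : ℤ) : volume (Ico ((2 : ℝ) ^ k) (2 ^ (k + 1))) = e2 k := by
  rw [Real.volume_Ico, e2_int]
  congr 1
  rw [zpow_add₀ (by norm_num)]; ring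

/-- The frozen Lorentz norm in terms of `RR`. -/
lemma lorentz_le_nrm {X : Type*} [MeasurableSpace X] (μ : Measure X) {p : ℝ} (hp : 0 < p)
    (q : ℝ≥0∞) (hq : 1 ≤ q) (f : X → ℝ) :
    lorentz μ (ENNReal.ofReal p) q f ≤
      e2 p⁻¹ * nrm q.toReal⁻¹ (Sq μ p⁻¹ (fun x => ENNReal.ofReal |f x|)) := by
  set u : X → ℝ≥0∞ := fun x => ENNReal.ofReal |f x|
  have hpt : ∀ k : ℤ, ∀ t ∈ Ico ((2 : ℝ) ^ k) (2 ^ (k + 1)),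
      ENNReal.ofReal t ^ p⁻¹ * rearr μ f t ≤ e2 p⁻¹ * Sq μ p⁻¹ u k := by
    intro k t ht
    have h1 : ENNReal.ofReal t ≤ e2 (k + 1) := by
      have := e2_int (k + 1); push_cast at this; rw [this]
      exact ENNReal.ofReal_le_ofReal ht.2.le
    have h2 : rearr μ f t ≤ RR μ u (e2 k) := by
      change RR μ u (ENNReal.ofReal t) ≤ _
      apply RR_anti; rw [e2_int]; exact ENNReal.ofReal_le_ofReal ht.1
    rw [Sq, ← mul_assoc, ← e2_add]
    refine mul_le_mul' ((ENNReal.rpow_le_rpow h1 (by positivity)).trans (le_of_eq ?_)) h2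
    rw [e2_rpow]; congr 1; ring
  unfold lorentz
  rw [ENNReal.toReal_ofReal hp.le]
  split_ifs with h
  · simp only [h, ENNReal.toReal_top, _root_.inv_zero, nrm, if_true]
    refine iSup₂_le fun t ht => ?_
    obtain ⟨k, hk⟩ := mem_iUnion.1 (Ioi_eq_iUnion ▸ ht)
    exact (hpt k t hk).trans (mul_le_mul' le_rfl (le_iSup (Sq μ p⁻¹ u) k))
  · have hq0 : 0 < q.toReal := ENNReal.toReal_pos (by positivity) h
    rw [← nrm_const_mul (by positivity), nrm, if_neg (by positivity), inv_inv]
    refine ENNReal.rpow_le_rpow ?_ (by positivity)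
    rw [Ioi_eq_iUnion, lintegral_iUnion (fun _ => measurableSet_Ico)
      disjoint_dyadic]
    refine ENNReal.tsum_le_tsum fun k => ?_
    calc _ ≤ ∫⁻ t in Ico ((2 : ℝ) ^ k) (2 ^ (k + 1)),
          (e2 p⁻¹ * Sq μ p⁻¹ u k) ^ q.toReal * e2 (-k) := by
          refine setLIntegral_mono' measurableSet_Ico fun t ht => ?_
          rw [div_eq_mul_inv]
          refine mul_le_mul' (ENNReal.rpow_le_rpow (hpt k t ht) hq0.le) ?_
          rw [e2, ENNReal.rpow_neg, ENNReal.inv_le_inv]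
          change e2 k ≤ _
          rw [e2_int]; exact ENNReal.ofReal_le_ofReal ht.1
      _ = _ := by
          rw [lintegral_const, Measure.restrict_apply_univ, vol_dyadic, mul_assoc,
            mul_comm (e2 _) (e2 k), e2_cancel, mul_one]

lemma nrm_le_lorentz {X : Type*} [MeasurableSpace X] (μ : Measure X) {p : ℝ} (hp : 0 < p)
    (q : ℝ≥0∞) (hq : 1 ≤ q) : ∃ C : ℝ≥0∞, C ≠ ∞ ∧ ∀ (f : X → ℝ) (u : X → ℝ≥0∞),
    u = (fun x => ENNReal.ofReal |f x|) →
    nrm q.toReal⁻¹ (Sq μ p⁻¹ u) ≤ C * lorentz μ (ENNReal.ofReal p) q f := by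
  have hpt : ∀ (f : X → ℝ) (u : X → ℝ≥0∞), u = (fun x => ENNReal.ofReal |f x|) →
      ∀ k : ℤ, ∀ t ∈ Ico ((2 : ℝ) ^ k) (2 ^ (k + 1)),
      Sq μ p⁻¹ u (k + 1) ≤ e2 p⁻¹ * (ENNReal.ofReal t ^ p⁻¹ * rearr μ f t) := by
    rintro f u rfl k t ht
    have h1 : e2 k ≤ ENNReal.ofReal t := by
      rw [e2_int]
      exact ENNReal.ofReal_le_ofReal ht.1
    have h2 : RR μ (fun x => ENNReal.ofReal |f x|) (e2 (k + 1 : ℤ)) ≤ rearr μ f t := by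
      change _ ≤ RR μ _ (ENNReal.ofReal t)
      apply RR_anti; rw [e2_int]; exact ENNReal.ofReal_le_ofReal ht.2.le
    rw [Sq, ← mul_assoc]
    refine mul_le_mul' ?_ h2
    have : ((k + 1 : ℤ) : ℝ) * p⁻¹ = p⁻¹ + k * p⁻¹ := by push_cast; ring
    rw [this, e2_add, ← e2_rpow]
    gcongr
  by_cases h : q = ∞
  · refine ⟨e2 p⁻¹, e2_ne_top _, fun f u hu => ?_⟩
    unfold lorentz
    rw [ENNReal.toReal_ofReal hp.le]
    simp only [h, ENNReal.toReal_top, _root_.inv_zero, nrm, if_true]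
    refine iSup_le fun k => ?_
    have h3 := hpt f u hu (k - 1) ((2 : ℝ) ^ (k - 1)) ⟨le_rfl, by
      apply zpow_lt_zpow_right₀ (by norm_num); omega⟩
    rw [sub_add_cancel] at h3
    refine h3.trans (mul_le_mul' le_rfl ?_)
    exact le_iSup₂_of_le ((2 : ℝ) ^ (k - 1)) (by simp; positivity) le_rfl
  · have hq0 : 0 < q.toReal := ENNReal.toReal_pos (by positivity) h
    refine ⟨e2 p⁻¹ * e2 (q.toReal⁻¹), ENNReal.mul_ne_top (e2_ne_top _) (e2_ne_top _),
      fun f u hu => ?_⟩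
    rw [← nrm_shift _ _ 1]
    have h4 : ∀ k : ℤ, Sq μ p⁻¹ u (k + 1) ≤ e2 p⁻¹ * (e2 (q.toReal⁻¹) *
        (∫⁻ t in Ico ((2 : ℝ) ^ k) (2 ^ (k + 1)),
        (ENNReal.ofReal t ^ p⁻¹ * rearr μ f t) ^ q.toReal / ENNReal.ofReal t) ^ q.toReal⁻¹) := by
      intro k
      have h5 : (e2 (-p⁻¹) * Sq μ p⁻¹ u (k + 1)) ^ q.toReal * e2 (-(k + 1)) * e2 k ≤
          (∫⁻ t in Ico ((2 : ℝ) ^ k) (2 ^ (k + 1)),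
        (ENNReal.ofReal t ^ p⁻¹ * rearr μ f t) ^ q.toReal / ENNReal.ofReal t) := by
        rw [← vol_dyadic, ← setLIntegral_const]
        refine setLIntegral_mono' measurableSet_Ico fun t ht => ?_
        rw [div_eq_mul_inv]
        refine mul_le_mul' (ENNReal.rpow_le_rpow ?_ hq0.le) ?_
        · refine (mul_le_mul' le_rfl (hpt f u hu k t ht)).trans (le_of_eq ?_)
          rw [← mul_assoc, mul_comm (e2 _) (e2 _), e2_cancel, one_mul]
        · rw [e2, ENNReal.rpow_neg, ENNReal.inv_le_inv]
          change _ ≤ e2 (k + 1)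
          have := e2_int (k + 1); push_cast at this; rw [this]
          exact ENNReal.ofReal_le_ofReal ht.2.le
      have h6 := ENNReal.rpow_le_rpow h5 (inv_nonneg.2 hq0.le)
      rw [mul_assoc, ← e2_add, ENNReal.mul_rpow_of_nonneg _ _ (by positivity), e2_rpow,
        ← ENNReal.rpow_mul, mul_inv_cancel₀ hq0.ne', ENNReal.rpow_one] at h6
      have h7 : (-((k : ℝ) + 1) + k) * q.toReal⁻¹ = -q.toReal⁻¹ := by ring
      rw [h7] at h6
      refine le_trans (le_of_eq ?_) (mul_le_mul' (le_refl (e2 p⁻¹))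
        (mul_le_mul' (le_refl (e2 q.toReal⁻¹)) h6))
      rw [mul_comm (e2 (-p⁻¹) * _), ← mul_assoc (e2 q.toReal⁻¹), e2_cancel, one_mul,
        ← mul_assoc, e2_cancel, one_mul]
    refine (nrm_mono (by positivity) h4).trans ?_
    rw [nrm_const_mul (by positivity), nrm_const_mul (by positivity), ← mul_assoc]
    gcongr
    rw [nrm, if_neg (by positivity), lorentz, if_neg h, ENNReal.toReal_ofReal hp.le]
    refine ENNReal.rpow_le_rpow ?_ (by positivity)
    rw [Ioi_eq_iUnion, lintegral_iUnion (fun _ => measurableSet_Ico)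
      disjoint_dyadic]
    refine ENNReal.tsum_le_tsum fun k => ?_
    rw [← ENNReal.rpow_mul, mul_inv_cancel₀ (by positivity), ENNReal.rpow_one]

section Hardy
variable {n : ℕ}

/-- The Hardy weight function. -/
noncomputable def h0f (α : ℝ) (f : EuclideanSpace ℝ (Fin n) → ℝ)
    (x : EuclideanSpace ℝ (Fin n)) : ℝ≥0∞ := ENNReal.ofReal (‖x‖ ^ (α - 1) * |f x|)

/-- The weighted gradient. -/
noncomputable def gf (α : ℝ) (f : EuclideanSpace ℝ (Fin n) → ℝ)
    (x : EuclideanSpace ℝ (Fin n)) : ℝ≥0∞ := ENNReal.ofReal (‖x‖ ^ α * ‖fderiv ℝ f x‖)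

lemma gf_meas {α : ℝ} {f : EuclideanSpace ℝ (Fin n) → ℝ} (hf : ContDiff ℝ 1 f) :
    Measurable (gf α f) := by
  have h : Measurable fun x => ‖fderiv ℝ f x‖ := (hf.continuous_fderiv one_ne_zero).norm.measurable
  unfold gf
  exact ((measurable_norm.pow_const α).mul h).ennreal_ofReal

lemma h0f_meas {α : ℝ} {f : EuclideanSpace ℝ (Fin n) → ℝ} (hf : ContDiff ℝ 1 f) :
    Measurable (h0f α f) := by
  have h : Measurable fun x => |f x| := hf.continuous.abs.measurable
  unfold h0f
  exact ((measurable_norm.pow_const (α - 1)).mul h).ennreal_ofReal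

lemma radial_bound {α : ℝ} {f : EuclideanSpace ℝ (Fin n) → ℝ} (hf : ContDiff ℝ 1 f)
    (hc : HasCompactSupport f) {x : EuclideanSpace ℝ (Fin n)} (hx : x ≠ 0) :
    h0f α f x ≤ ∫⁻ y in Iic (-1 : ℝ), ENNReal.ofReal ((-y) ^ (-α)) * gf α f ((-y) • x) := by
  have hxn : 0 < ‖x‖ := norm_pos_iff.2 hx
  set φ : ℝ → ℝ := fun y => f ((-y) • x) with hφ
  have hφ1 : ContDiff ℝ 1 φ := hf.comp ((contDiff_neg).smul contDiff_const)
  have hφc : HasCompactSupport φ := by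
    have hemb : Topology.IsClosedEmbedding (fun y : ℝ => (-y) • x) :=
      (isClosedEmbedding_smul_left hx).comp (Homeomorph.neg ℝ).isClosedEmbedding
    exact hc.comp_isClosedEmbedding hemb
  have h := HasCompactSupport.enorm_le_lintegral_Ici_deriv hφ1 hφc (-1)
  have hd : ∀ y, ‖deriv φ y‖ₑ ≤ ENNReal.ofReal (‖fderiv ℝ f ((-y) • x)‖ * ‖x‖) := by
    intro y
    have h1 : HasDerivAt (fun y : ℝ => (-y) • x) ((-1 : ℝ) • x) y :=
      (hasDerivAt_neg y).smul_const x
    have h2 : HasFDerivAt f (fderiv ℝ f ((-y) • x)) ((-y) • x) :=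
      ((hf.differentiable one_ne_zero) _).hasFDerivAt
    have h3 := h2.comp_hasDerivAt y h1
    rw [show φ = f ∘ (fun y : ℝ => (-y) • x) from rfl, h3.deriv, ← ofReal_norm]
    apply ENNReal.ofReal_le_ofReal
    refine (ContinuousLinearMap.le_opNorm _ _).trans ?_
    simp [norm_neg]
  have hφm : φ (-1) = f x := by simp [hφ]
  have : h0f α f x = ENNReal.ofReal (‖x‖ ^ (α - 1)) * ‖φ (-1)‖ₑ := by
    rw [hφm, h0f, ENNReal.ofReal_mul (by positivity), ← ofReal_norm, Real.norm_eq_abs]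
  rw [this]
  calc _ ≤ ENNReal.ofReal (‖x‖ ^ (α - 1)) * ∫⁻ y in Iic (-1 : ℝ), ‖deriv φ y‖ₑ := by gcongr
    _ = ∫⁻ y in Iic (-1 : ℝ), ENNReal.ofReal (‖x‖ ^ (α - 1)) * ‖deriv φ y‖ₑ := by
      rw [lintegral_const_mul' _ _ ENNReal.ofReal_ne_top]
    _ ≤ _ := by
      refine setLIntegral_mono' measurableSet_Iic fun y hy => ?_
      have hy' : 0 < -y := by have : y ≤ -1 := hy; linarith
      refine (mul_le_mul' le_rfl (hd y)).trans (le_of_eq ?_)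
      rw [gf, ← ENNReal.ofReal_mul (by positivity), ← ENNReal.ofReal_mul (by positivity)]
      congr 1
      rw [norm_smul, Real.norm_of_nonneg hy'.le, Real.mul_rpow hy'.le hxn.le,
        Real.rpow_sub_one hxn.ne', Real.rpow_neg hy'.le]
      field_simp

lemma RR_dil (g : EuclideanSpace ℝ (Fin n) → ℝ≥0∞) (s : ℝ) (j : ℕ) (hs : (2 : ℝ) ^ j ≤ s)
    (t : ℝ≥0∞) :
    RR volume (fun x => g (s • x)) t ≤ RR volume g (e2 (n * j) * t) := by
  have hs0 : 0 < s := lt_of_lt_of_le (by positivity) hs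
  rw [RR_le_iff]
  have h1 := Measure.addHaar_preimage_smul (volume : Measure (EuclideanSpace ℝ (Fin n)))
    hs0.ne' {x | RR volume g (e2 (n * j) * t) < g x}
  change volume {x | RR volume g (e2 (n * j) * t) < g (s • x)} = _ at h1
  rw [h1]
  refine (mul_le_mul' le_rfl (meas_RR_le g _)).trans ?_
  rw [← mul_assoc]
  refine (mul_le_mul' ?_ le_rfl).trans (one_mul t).le
  rw [finrank_euclideanSpace_fin, e2_ofReal, ← ENNReal.ofReal_mul (by positivity),
    ENNReal.ofReal_le_one, abs_of_pos (by positivity), mul_comm, ← div_eq_mul_inv,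
    div_le_one (by positivity), mul_comm, Real.rpow_mul (by norm_num), Real.rpow_natCast,
    Real.rpow_natCast]
  gcongr

lemma hardy_set [NeZero n] {α : ℝ} (hα : 0 < α) {f : EuclideanSpace ℝ (Fin n) → ℝ}
    (hf : ContDiff ℝ 1 f) (hc : HasCompactSupport f) (E : Set (EuclideanSpace ℝ (Fin n)))
    (K : ℤ) (hE : volume E ≤ e2 K) :
    ∫⁻ x in E, h0f α f x ≤ ∑' j : ℕ, e2 (j * (1 - α)) *
      (2 * ∑' i : ℕ, e2 (K - i) * RR volume (gf α f) (e2 ((K + n * j + (-i - 1) : ℤ)))) := by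
  have hae : ∀ᵐ x ∂(volume.restrict E : Measure (EuclideanSpace ℝ (Fin n))), x ≠ 0 := by
    refine ae_restrict_of_ae ?_
    exact measure_eq_zero_iff_ae_notMem.1 (measure_singleton 0)
  have hgm := gf_meas (α := α) hf
  calc ∫⁻ x in E, h0f α f x
      ≤ ∫⁻ x in E, ∫⁻ y in Iic (-1 : ℝ), ENNReal.ofReal ((-y) ^ (-α)) * gf α f ((-y) • x) := by
        refine lintegral_mono_ae ?_
        filter_upwards [hae] with x hx
        exact radial_bound hf hc hx
    _ = ∫⁻ y in Iic (-1 : ℝ), ∫⁻ x in E, ENNReal.ofReal ((-y) ^ (-α)) * gf α f ((-y) • x) := by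
        rw [lintegral_lintegral_swap]
        apply Measurable.aemeasurable
        have h1 : Measurable fun z : EuclideanSpace ℝ (Fin n) × ℝ => (-z.2) • z.1 := by fun_prop
        have h2 : Measurable fun z : EuclideanSpace ℝ (Fin n) × ℝ =>
          ENNReal.ofReal ((-z.2) ^ (-α)) := by fun_prop
        exact h2.mul (hgm.comp h1)
    _ ≤ ∫⁻ y in ⋃ j : ℕ, Ioc (-(2 : ℝ) ^ (j + 1)) (-(2 : ℝ) ^ j), ∫⁻ x in E,
          ENNReal.ofReal ((-y) ^ (-α)) * gf α f ((-y) • x) := by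
        refine lintegral_mono_set ?_
        intro y hy
        have hy' : y ≤ -1 := hy
        obtain ⟨j, hj⟩ := exists_nat_pow_near (x := -y) (y := (2 : ℝ)) (by linarith) (by norm_num)
        rw [mem_iUnion]
        exact ⟨j, by linarith [hj.2], by linarith [hj.1]⟩
    _ ≤ ∑' j : ℕ, ∫⁻ y in Ioc (-(2 : ℝ) ^ (j + 1)) (-(2 : ℝ) ^ j), ∫⁻ x in E,
          ENNReal.ofReal ((-y) ^ (-α)) * gf α f ((-y) • x) := lintegral_iUnion_le _ _
    _ ≤ _ := by
        refine ENNReal.tsum_le_tsum fun j => ?_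
        calc _ ≤ ∫⁻ y in Ioc (-(2 : ℝ) ^ (j + 1)) (-(2 : ℝ) ^ j), e2 (-(j * α)) *
              (2 * ∑' i : ℕ, e2 (K - i) *
                RR volume (gf α f) (e2 ((K + n * j + (-i - 1) : ℤ)))) := by
              refine setLIntegral_mono' measurableSet_Ioc fun y hy => ?_
              have hy2 : (2 : ℝ) ^ j ≤ -y := by linarith [hy.2]
              have hy0 : 0 < -y := lt_of_lt_of_le (by positivity) hy2
              rw [lintegral_const_mul' _ _ ENNReal.ofReal_ne_top]
              refine mul_le_mul' ?_ ?_
              · rw [e2_ofReal]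
                apply ENNReal.ofReal_le_ofReal
                have : -((j : ℝ) * α) = j * (-α) := by ring
                rw [this, Real.rpow_mul (by norm_num), Real.rpow_natCast]
                exact Real.rpow_le_rpow_of_nonpos (by positivity) hy2 (by linarith)
              · have hm : Measurable fun x : EuclideanSpace ℝ (Fin n) => gf α f ((-y) • x) :=
                  hgm.comp (measurable_const_smul (-y))
                refine (setLIntegral_le_dyadic hm.aemeasurable K E hE).trans ?_
                gcongr with i
                refine (RR_dil (gf α f) (-y) j hy2 _).trans (le_of_eq ?_)
                rw [← e2_add]
                congr 2
                push_cast; ring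
          _ = _ := by
              rw [setLIntegral_const, Real.volume_Ioc]
              have h1 : -(2 : ℝ) ^ j - -(2 : ℝ) ^ (j + 1) = 2 ^ (j : ℝ) := by
                rw [Real.rpow_natCast]; ring
              rw [h1, ← e2_ofReal, mul_comm, ← mul_assoc, ← e2_add]
              have h2 : (j : ℝ) + -(j * α) = j * (1 - α) := by ring
              rw [h2]

/-- Hardy inequality in dyadic Lorentz form. -/
lemma hardy [NeZero n] {p α s : ℝ} (hp : 1 < p) (hα : 0 < α) (hα1 : 1 - (n : ℝ) / p < α)
    (hs : 0 ≤ s) : ∃ C : ℝ≥0∞, C ≠ ∞ ∧ ∀ f : EuclideanSpace ℝ (Fin n) → ℝ,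
      ContDiff ℝ 1 f → HasCompactSupport f →
      nrm s (Sq volume p⁻¹ (h0f α f)) ≤ C * nrm s (Sq volume p⁻¹ (gf α f)) := by
  have hp0 : 0 < p := by linarith
  have hd1 : 0 < α - 1 + n / p := by linarith
  have hd2 : 0 < 1 - p⁻¹ := by
    have := inv_lt_one_of_one_lt₀ hp
    linarith
  obtain ⟨C1, hC1, H1⟩ := nrm_geo hs hd2
  obtain ⟨C2, hC2, H2⟩ := nrm_geo hs hd1
  obtain ⟨C3, hC3, H3⟩ := nrm_geo hs (inv_pos.2 hp0)
  refine ⟨2 * e2 (1 + p⁻¹) * (C3 * (C2 * C1)), ?_, ?_⟩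
  · refine ENNReal.mul_ne_top (ENNReal.mul_ne_top (by norm_num) (e2_ne_top _)) ?_
    exact ENNReal.mul_ne_top hC3 (ENNReal.mul_ne_top hC2 hC1)
  intro f hf hc
  set X := Sq volume p⁻¹ (gf α f) with hX
  set X1 : ℤ → ℝ≥0∞ := fun k => ∑' i : ℕ, e2 (-((1 - p⁻¹) * i)) * X (k + (-i - 1)) with hX1
  set X2 : ℤ → ℝ≥0∞ := fun k => ∑' j : ℕ, e2 (-((α - 1 + n / p) * j)) * X1 (k + n * j) with hX2
  set X3 : ℤ → ℝ≥0∞ := fun k => ∑' d : ℕ, e2 (-(p⁻¹ * d)) * X2 (k + d) with hX3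
  have main : ∀ k, Sq volume p⁻¹ (h0f α f) k ≤ 2 * e2 (1 + p⁻¹) * X3 k := by
    intro k
    suffices hl : ∀ l, l < RR volume (h0f α f) (e2 k) →
        e2 (k * p⁻¹) * l ≤ 2 * e2 (1 + p⁻¹) * X3 k by
      have : RR volume (h0f α f) (e2 k) ≤ e2 (-(k * p⁻¹)) * (2 * e2 (1 + p⁻¹) * X3 k) := by
        refine le_of_forall_lt_imp_le_of_dense fun l hl' => ?_
        calc l = e2 (k * p⁻¹) * e2 (-(k * p⁻¹)) * l := by rw [e2_cancel, one_mul]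
          _ = e2 (-(k * p⁻¹)) * (e2 (k * p⁻¹) * l) := by ring
          _ ≤ _ := mul_le_mul' le_rfl (hl l hl')
      calc Sq volume p⁻¹ (h0f α f) k ≤ e2 (k * p⁻¹) *
            (e2 (-(k * p⁻¹)) * (2 * e2 (1 + p⁻¹) * X3 k)) := by
            rw [Sq]; gcongr
        _ = _ := by rw [← mul_assoc, e2_cancel, one_mul]
    intro l hl
    set E := {x | l < h0f α f x} with hE
    have hEk : e2 k < volume E := by
      by_contra hcon
      exact absurd hl (not_lt.2 ((RR_le_iff _ _ _).2 (not_lt.1 hcon)))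
    have hEt : volume E ≠ ∞ := by
      refine ((measure_mono ?_).trans_lt hc.measure_lt_top).ne
      intro x hx
      apply subset_tsupport
      rw [Function.mem_support]
      intro h0
      have : l < h0f α f x := hx
      simp [h0f, h0] at this
    obtain ⟨m, hm⟩ := ENNReal.exists_mem_Ioc_zpow (x := volume E) (y := 2)
      (ne_of_gt (lt_of_le_of_lt (zero_le) hEk)) hEt (by norm_num) (by norm_num)
    have he2 : ∀ m : ℤ, (2 : ℝ≥0∞) ^ m = e2 m := fun m => by rw [e2, ENNReal.rpow_intCast]
    rw [he2, he2] at hm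
    have hkm : k < m + 1 := by
      by_contra hcon
      have : e2 ((m + 1 : ℤ)) ≤ e2 k := e2_mono (by exact_mod_cast not_lt.1 hcon)
      exact absurd (lt_of_lt_of_le hEk (hm.2.trans this)) (lt_irrefl _)
    obtain ⟨d, hd⟩ : ∃ d : ℕ, m + 1 = k + d := ⟨(m + 1 - k).toNat, by omega⟩
    have hK := hardy_set hα hf hc E (k + d) (by rw [← hd]; exact hm.2)
    have hlow : l * e2 (k + d - 1) ≤ ∫⁻ x in E, h0f α f x := by
      have h1 : l * e2 (k + d - 1) ≤ ∫⁻ x in E, l := by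
        rw [setLIntegral_const]
        gcongr
        have : ((k : ℝ) + d - 1) = m := by
          have : ((m + 1 : ℤ) : ℝ) = ((k + d : ℤ) : ℝ) := by rw [hd]
          push_cast at this; linarith
        rw [this]; exact hm.1.le
      refine h1.trans ?_
      refine setLIntegral_mono (h0f_meas hf) fun x hx => le_of_lt hx
    have h2 := hlow.trans hK
    have h3 : e2 (k * p⁻¹) * l = e2 (k * p⁻¹) * e2 (-(k + d - 1)) * (l * e2 (k + d - 1)) := by
      have := e2_cancel ((k : ℝ) + d - 1)
      calc _ = e2 (k * p⁻¹) * l * (e2 (k + d - 1) * e2 (-(k + d - 1))) := by rw [this, mul_one]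
        _ = _ := by ring
    rw [h3]
    refine (mul_le_mul' le_rfl h2).trans ?_
    refine le_trans ?_ (mul_le_mul' le_rfl (ENNReal.le_tsum d))
    simp only [hX2, hX1]
    simp only [← ENNReal.tsum_mul_left]
    refine ENNReal.tsum_le_tsum fun j => ENNReal.tsum_le_tsum fun i => le_of_eq ?_
    have hc1 : (k + (d : ℤ) + n * j + (-i - 1)) = ((k + d : ℤ) + n * j + (-i - 1) : ℤ) := rfl
    rw [RR_eq_Sq volume p⁻¹ (gf α f), ← hX]
    have : ∀ a b c d e f g A B C X : ℝ≥0∞, a * b * c * e * f = A * g * B * C →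
        a * b * (c * (d * (e * (f * X)))) = d * A * (g * (B * (C * X))) := by
      intro a b c d e f g A B C X h
      calc _ = d * X * (a * b * c * e * f) := by ring
        _ = _ := by rw [h]; ring
    apply this
    simp only [← e2_add]
    congr 1
    push_cast
    field_simp
    ring
  refine (nrm_mono hs main).trans ?_
  rw [nrm_const_mul hs, mul_assoc (2 * e2 _)]
  gcongr
  refine (H3 X2 (fun d => d)).trans ?_
  rw [mul_assoc]
  gcongr
  refine (H2 X1 (fun j => n * j)).trans ?_
  rw [mul_assoc]
  gcongr
  exact H1 X (fun i => -i - 1)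

end Hardy

section Iso
variable {n : ℕ}

/-- The auxiliary function `|x|^e |f|^κ`. -/
noncomputable def Ph (e κ : ℝ) (f : EuclideanSpace ℝ (Fin n) → ℝ)
    (x : EuclideanSpace ℝ (Fin n)) : ℝ := ‖x‖ ^ e * |f x| ^ κ

/-- Bound for the gradient of `Ph`. -/
noncomputable def Zf (e κ : ℝ) (f : EuclideanSpace ℝ (Fin n) → ℝ)
    (x : EuclideanSpace ℝ (Fin n)) : ℝ :=
  |e| * ‖x‖ ^ (e - 1) * |f x| ^ κ + κ * ‖x‖ ^ e * |f x| ^ (κ - 1) * ‖fderiv ℝ f x‖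

lemma Zf_nonneg {e κ : ℝ} (hκ : 0 ≤ κ) (f : EuclideanSpace ℝ (Fin n) → ℝ) (x) :
    0 ≤ Zf e κ f x := by
  unfold Zf; positivity

lemma Ph_nonneg (e κ : ℝ) (f : EuclideanSpace ℝ (Fin n) → ℝ) (x) : 0 ≤ Ph e κ f x := by
  unfold Ph; positivity

lemma Ph_deriv {e κ : ℝ} (hκ : 0 ≤ κ) {f : EuclideanSpace ℝ (Fin n) → ℝ} (hf : ContDiff ℝ 1 f)
    {x : EuclideanSpace ℝ (Fin n)} (hx : x ≠ 0) (hfx : f x ≠ 0) :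
    ContDiffAt ℝ 1 (Ph e κ f) x ∧ ‖fderiv ℝ (Ph e κ f) x‖ ≤ Zf e κ f x := by
  have hxn : 0 < ‖x‖ := norm_pos_iff.2 hx
  have hfn : 0 < |f x| := abs_pos.2 hfx
  have c1 : ContDiffAt ℝ 1 (fun x : EuclideanSpace ℝ (Fin n) => ‖x‖) x := contDiffAt_norm ℝ hx
  have c2 : ContDiffAt ℝ 1 (fun x : EuclideanSpace ℝ (Fin n) => |f x|) x :=
    (contDiffAt_abs hfx).comp x hf.contDiffAt
  have c3 : ContDiffAt ℝ 1 (fun x : EuclideanSpace ℝ (Fin n) => ‖x‖ ^ e) x :=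
    c1.rpow_const_of_ne hxn.ne'
  have c4 : ContDiffAt ℝ 1 (fun x : EuclideanSpace ℝ (Fin n) => |f x| ^ κ) x :=
    c2.rpow_const_of_ne hfn.ne'
  refine ⟨c3.mul c4, ?_⟩
  have d1 := (c1.differentiableAt one_ne_zero).hasFDerivAt
  have d0 := ((hf.differentiable one_ne_zero) x).hasFDerivAt
  have d2 : HasFDerivAt (fun x : EuclideanSpace ℝ (Fin n) => |f x|)
    (((SignType.sign (f x) : ℝ)) • fderiv ℝ f x) x := (hasDerivAt_abs hfx).comp_hasFDerivAt x d0
  have n1 : ‖fderiv ℝ (fun x : EuclideanSpace ℝ (Fin n) => ‖x‖) x‖ ≤ 1 := by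
    simpa using norm_fderiv_le_of_lipschitz ℝ (x₀ := x)
      (lipschitzWith_one_norm (E := EuclideanSpace ℝ (Fin n)))
  have n2 : ‖((SignType.sign (f x) : ℝ)) • fderiv ℝ f x‖ ≤ ‖fderiv ℝ f x‖ := by
    rw [norm_smul]
    refine mul_le_of_le_one_left (norm_nonneg _) ?_
    rcases lt_or_gt_of_ne hfx with h | h
    · simp [sign_neg h]
    · simp [sign_pos h]
  have d3 := d1.rpow_const (p := e) (Or.inl hxn.ne')
  have d4 := d2.rpow_const (p := κ) (Or.inl hfn.ne')
  have d5 := d3.mul d4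
  have : fderiv ℝ (Ph e κ f) x = _ := d5.fderiv
  rw [this]
  refine (norm_add_le _ _).trans ?_
  rw [norm_smul, norm_smul (κ * _), norm_smul (_ ^ κ), norm_smul (e * _), Zf, add_comm]
  simp only [Real.norm_eq_abs]
  rw [abs_of_pos (Real.rpow_pos_of_pos hxn e), abs_of_pos (Real.rpow_pos_of_pos hfn κ), abs_mul,
    abs_mul, abs_of_pos (Real.rpow_pos_of_pos hxn _), abs_of_pos (Real.rpow_pos_of_pos hfn _),
    abs_of_nonneg hκ]
  have e1 : 0 < ‖x‖ ^ e := Real.rpow_pos_of_pos hxn e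
  have e2 : 0 < |f x| ^ κ := Real.rpow_pos_of_pos hfn κ
  have e3 : 0 < ‖x‖ ^ (e-1) := Real.rpow_pos_of_pos hxn _
  have e4 : 0 < |f x| ^ (κ-1) := Real.rpow_pos_of_pos hfn _
  apply add_le_add
  · calc _ ≤ |f x| ^ κ * (|e| * ‖x‖ ^ (e - 1) * 1) := by gcongr
      _ = _ := by ring
  · calc _ ≤ ‖x‖ ^ e * (κ * |f x| ^ (κ - 1) * ‖fderiv ℝ f x‖) := by gcongr
      _ = _ := by ring

lemma st_deriv_bound : ∃ M : ℝ, 0 < M ∧ ∀ t, ‖deriv Real.smoothTransition t‖ ≤ M := by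
  have hc : Continuous (deriv Real.smoothTransition) :=
    (Real.smoothTransition.contDiff (n := 1)).continuous_deriv (by norm_num)
  have hs : HasCompactSupport (deriv Real.smoothTransition) := by
    refine HasCompactSupport.intro (isCompact_Icc (a := (0:ℝ)) (b := 1)) fun x hx => ?_
    rw [mem_Icc, not_and_or, not_le, not_le] at hx
    rcases hx with hx | hx
    · have : Real.smoothTransition =ᶠ[nhds x] fun _ => (0:ℝ) := by
        filter_upwards [Iio_mem_nhds hx] with y hy
        exact Real.smoothTransition.zero_of_nonpos (le_of_lt hy)
      rw [this.deriv_eq]; simp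
    · have : Real.smoothTransition =ᶠ[nhds x] fun _ => (1:ℝ) := by
        filter_upwards [Ioi_mem_nhds hx] with y hy
        exact Real.smoothTransition.one_of_one_le (le_of_lt hy)
      rw [this.deriv_eq]; simp
  obtain ⟨M, hM⟩ := hs.exists_bound_of_continuous hc
  exact ⟨max M 1, by positivity, fun t => (hM t).trans (le_max_left _ _)⟩

/-- Truncated test function. -/
noncomputable def uf (e κ lo hi ε : ℝ) (f : EuclideanSpace ℝ (Fin n) → ℝ)
    (x : EuclideanSpace ℝ (Fin n)) : ℝ :=
  Real.smoothTransition (‖x‖ ^ 2 / ε ^ 2 - 1) * Real.smoothTransition ((Ph e κ f x - lo) / (hi - lo))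

lemma uf_deriv {e κ : ℝ} (hκ : 0 < κ) {f : EuclideanSpace ℝ (Fin n) → ℝ} (hf : ContDiff ℝ 1 f)
    {M : ℝ} (hM0 : 0 < M) (hM : ∀ t, ‖deriv Real.smoothTransition t‖ ≤ M)
    {lo hi ε : ℝ} (hlo : 0 < lo) (hhi : lo < hi) (hε : 0 < ε) (x : EuclideanSpace ℝ (Fin n)) :
    ContDiffAt ℝ 1 (uf e κ lo hi ε f) x ∧
    ‖fderiv ℝ (uf e κ lo hi ε f) x‖ ≤
      {x | lo ≤ Ph e κ f x}.indicator (fun x => M / (hi - lo) * Zf e κ f x) x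
      + (Metric.closedBall 0 (2 * ε)).indicator (fun _ => 4 * M / ε) x := by
  have hd : 0 < hi - lo := by linarith
  have hZ := Zf_nonneg (e := e) hκ.le f x
  have r1 : 0 ≤ {x | lo ≤ Ph e κ f x}.indicator (fun x => M / (hi - lo) * Zf e κ f x) x :=
    indicator_nonneg (fun y _ => mul_nonneg (by positivity) (Zf_nonneg hκ.le f y)) x
  have r2 : 0 ≤ (Metric.closedBall (0 : EuclideanSpace ℝ (Fin n)) (2 * ε)).indicator
      (fun _ => 4 * M / ε) x :=
    indicator_nonneg (fun y _ => by positivity) x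
  have triv : (uf e κ lo hi ε f) =ᶠ[nhds x] (fun _ => (0:ℝ)) → ContDiffAt ℝ 1 (uf e κ lo hi ε f) x ∧
    ‖fderiv ℝ (uf e κ lo hi ε f) x‖ ≤
      {x | lo ≤ Ph e κ f x}.indicator (fun x => M / (hi - lo) * Zf e κ f x) x
      + (Metric.closedBall 0 (2 * ε)).indicator (fun _ => 4 * M / ε) x := by
    intro h
    refine ⟨contDiffAt_const.congr_of_eventuallyEq h, ?_⟩
    rw [h.fderiv_eq]
    simp only [fderiv_fun_const, Pi.zero_apply, norm_zero]
    positivity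
  by_cases hx1 : ‖x‖ < ε
  · apply triv
    filter_upwards [(isOpen_lt continuous_norm continuous_const).mem_nhds hx1] with y hy
    have hy : ‖y‖ < ε := hy
    have : Real.smoothTransition (‖y‖ ^ 2 / ε ^ 2 - 1) = 0 := by
      apply Real.smoothTransition.zero_of_nonpos
      rw [sub_nonpos, div_le_one (by positivity)]
      gcongr
    simp [uf, this]
  have hxn : 0 < ‖x‖ := by linarith
  have hx : x ≠ 0 := norm_pos_iff.1 hxn
  by_cases hx2 : Ph e κ f x < lo
  · apply triv
    have hcont : ContinuousAt (Ph e κ f) x := by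
      refine ContinuousAt.mul ?_ ?_
      · exact continuous_norm.continuousAt.rpow_const (Or.inl hxn.ne')
      · exact hf.continuous.abs.continuousAt.rpow_const (Or.inr hκ.le)
    filter_upwards [hcont.eventually_lt_const hx2] with y hy
    have : Real.smoothTransition ((Ph e κ f y - lo) / (hi - lo)) = 0 := by
      apply Real.smoothTransition.zero_of_nonpos
      exact div_nonpos_of_nonpos_of_nonneg (by linarith) hd.le
    simp [uf, this]
  push Not at hx2
  have hfx : f x ≠ 0 := by
    intro h
    have : Ph e κ f x = 0 := by simp [Ph, h, Real.zero_rpow hκ.ne']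
    linarith
  obtain ⟨c1, b1⟩ := Ph_deriv (e := e) hκ.le hf hx hfx
  have sT : ∀ t, HasDerivAt Real.smoothTransition (deriv Real.smoothTransition t) t := fun t =>
    ((Real.smoothTransition.contDiff (n := 1)).differentiable (by norm_num) t).hasDerivAt
  have sC : ∀ t, ContDiffAt ℝ 1 Real.smoothTransition t := fun t =>
    (Real.smoothTransition.contDiff (n := 1)).contDiffAt
  have cA : ContDiffAt ℝ 1 (fun x : EuclideanSpace ℝ (Fin n) => ‖x‖ ^ 2 / ε ^ 2 - 1) x :=
    (((contDiff_norm_sq ℝ).div_const _).sub contDiff_const).contDiffAt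
  have cB : ContDiffAt ℝ 1 (fun x => (Ph e κ f x - lo) / (hi - lo)) x :=
    (c1.sub contDiffAt_const).div_const _
  refine ⟨((sC _).comp x cA).mul ((sC _).comp x cB), ?_⟩
  have dA : HasFDerivAt (fun x : EuclideanSpace ℝ (Fin n) => ‖x‖ ^ 2 / ε ^ 2 - 1)
      ((ε ^ 2)⁻¹ • ((2:ℝ) • innerSL ℝ x)) x := by
    have := ((hasStrictFDerivAt_norm_sq x).hasFDerivAt.const_mul ((ε ^ 2)⁻¹)).sub_const 1
    rw [← ofNat_smul_eq_nsmul ℝ 2] at this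
    refine (this.congr_of_eventuallyEq ?_)
    filter_upwards with y
    simp [div_eq_inv_mul]
  have dB : HasFDerivAt (fun x => (Ph e κ f x - lo) / (hi - lo))
      ((hi - lo)⁻¹ • fderiv ℝ (Ph e κ f) x) x := by
    have := ((c1.differentiableAt one_ne_zero).hasFDerivAt.sub_const lo).const_mul ((hi - lo)⁻¹)
    refine (this.congr_of_eventuallyEq ?_)
    filter_upwards with y
    simp [div_eq_inv_mul]
  have d5 := ((sT _).comp_hasFDerivAt x dA).mul ((sT _).comp_hasFDerivAt x dB)
  have : fderiv ℝ (uf e κ lo hi ε f) x = _ := d5.fderiv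
  rw [this]
  refine (norm_add_le _ _).trans (add_le_add ?_ ?_)
  · rw [indicator_of_mem (show x ∈ {x | lo ≤ Ph e κ f x} from hx2), norm_smul, norm_smul, norm_smul]
    have h1 : ‖((Real.smoothTransition ∘ fun x => ‖x‖ ^ 2 / ε ^ 2 - 1) x)‖ ≤ 1 := by
      rw [Function.comp_apply, Real.norm_of_nonneg (Real.smoothTransition.nonneg _)]
      exact Real.smoothTransition.le_one _
    calc _ ≤ 1 * (M * (‖(hi - lo)⁻¹‖ * Zf e κ f x)) := by
          gcongr
          exact hM _
      _ = _ := by rw [Real.norm_of_nonneg (by positivity)]; ring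
  · rw [norm_smul, norm_smul]
    by_cases hx3 : ‖x‖ ≤ 2 * ε
    · rw [indicator_of_mem (by simpa using hx3), norm_smul, norm_smul, innerSL_apply_norm]
      have h1 : ‖((Real.smoothTransition ∘ fun x => (Ph e κ f x - lo) / (hi - lo)) x)‖ ≤ 1 := by
        rw [Function.comp_apply, Real.norm_of_nonneg (Real.smoothTransition.nonneg _)]
        exact Real.smoothTransition.le_one _
      calc _ ≤ 1 * (M * (‖(ε ^ 2)⁻¹‖ * (‖(2:ℝ)‖ * (2 * ε)))) := by
            gcongr
            exact hM _
        _ = _ := by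
          rw [Real.norm_of_nonneg (by positivity), Real.norm_of_nonneg (by positivity)]
          field_simp
          ring
    · have : deriv Real.smoothTransition (‖x‖ ^ 2 / ε ^ 2 - 1) = 0 := by
        have h1 : 1 < ‖x‖ ^ 2 / ε ^ 2 - 1 := by
          rw [lt_sub_iff_add_lt, lt_div_iff₀ (by positivity)]
          push Not at hx3
          nlinarith
        have : Real.smoothTransition =ᶠ[nhds (‖x‖ ^ 2 / ε ^ 2 - 1)] fun _ => (1:ℝ) := by
          filter_upwards [Ioi_mem_nhds h1] with y hy
          exact Real.smoothTransition.one_of_one_le (le_of_lt hy)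
        rw [this.deriv_eq]; simp
      rw [this]
      simpa using r2
end Iso

section Iso2
variable {n : ℕ}

lemma Ph_meas {e κ : ℝ} {f : EuclideanSpace ℝ (Fin n) → ℝ} (hf : ContDiff ℝ 1 f) :
    Measurable (Ph e κ f) := by
  have h : Measurable fun x => |f x| := hf.continuous.abs.measurable
  exact (measurable_norm.pow_const e).mul (h.pow_const κ)

lemma iso_eps (hn : 2 ≤ n) {e κ : ℝ} (hκ : 0 < κ) {M : ℝ} (hM0 : 0 < M)
    (hM : ∀ t, ‖deriv Real.smoothTransition t‖ ≤ M) :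
    ∃ K : NNReal, ∀ f : EuclideanSpace ℝ (Fin n) → ℝ, ContDiff ℝ 1 f → HasCompactSupport f →
    ∀ lo hi ε : ℝ, 0 < lo → lo < hi → 0 < ε →
    volume ({x | hi < Ph e κ f x} \ Metric.closedBall 0 (2 * ε)) ^ (1 - (n : ℝ)⁻¹) ≤
      K * (ENNReal.ofReal (M / (hi - lo)) * (∫⁻ x in {x | lo ≤ Ph e κ f x}, ENNReal.ofReal (Zf e κ f x))
        + ENNReal.ofReal (4 * M / ε) * volume (Metric.closedBall (0 : EuclideanSpace ℝ (Fin n)) (2 * ε))) := by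
  have hn1 : (1 : NNReal) < n := by exact_mod_cast hn
  have hp := NNReal.HolderConjugate.conjExponent hn1
  set P := NNReal.conjExponent (n : NNReal) with hP
  have hP' : NNReal.HolderConjugate (Module.finrank ℝ (EuclideanSpace ℝ (Fin n))) P := by
    rw [finrank_euclideanSpace_fin]; exact hp
  have hPinv : (P : ℝ)⁻¹ = 1 - (n : ℝ)⁻¹ := by
    have := hp.coe.inv_add_inv_eq_one
    push_cast at this
    linarith
  refine ⟨eLpNormLESNormFDerivOneConst (volume : Measure (EuclideanSpace ℝ (Fin n))) P, ?_⟩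
  intro f hf hc lo hi ε hlo hhi hε
  have hu : ContDiff ℝ 1 (uf e κ lo hi ε f) :=
    contDiff_iff_contDiffAt.2 fun x => (uf_deriv hκ hf hM0 hM hlo hhi hε x).1
  have hd : 0 < hi - lo := by linarith
  have huc : HasCompactSupport (uf e κ lo hi ε f) := by
    refine hc.mono fun x hx hfx => hx ?_
    have : Ph e κ f x = 0 := by simp [Ph, hfx, Real.zero_rpow hκ.ne']
    have : Real.smoothTransition ((Ph e κ f x - lo) / (hi - lo)) = 0 := by
      apply Real.smoothTransition.zero_of_nonpos
      exact div_nonpos_of_nonpos_of_nonneg (by linarith) hd.le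
    simp [uf, this]
  have main := eLpNorm_le_eLpNorm_fderiv_one volume hu huc hP'
  have hmP := Ph_meas (e := e) (κ := κ) hf
  have hSm : MeasurableSet ({x | hi < Ph e κ f x} \ Metric.closedBall (0 : EuclideanSpace ℝ (Fin n)) (2 * ε)) :=
    (measurableSet_lt measurable_const hmP).diff Metric.isClosed_closedBall.measurableSet
  have hP0 : (P : ℝ≥0∞) ≠ 0 := by
    have := hp.symm.pos
    simpa using this.ne'
  have low : volume ({x | hi < Ph e κ f x} \ Metric.closedBall 0 (2 * ε)) ^ (1 - (n : ℝ)⁻¹) ≤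
      eLpNorm (uf e κ lo hi ε f) P volume := by
    have h1 := eLpNorm_indicator_const (c := (1:ℝ)) (μ := volume) hSm hP0 ENNReal.coe_ne_top
    rw [enorm_one, one_mul, ENNReal.coe_toReal, one_div, hPinv] at h1
    rw [← h1]
    refine eLpNorm_mono fun x => ?_
    by_cases hx : x ∈ ({x | hi < Ph e κ f x} \ Metric.closedBall (0 : EuclideanSpace ℝ (Fin n)) (2 * ε))
    · rw [indicator_of_mem hx]
      obtain ⟨h1, h2⟩ := hx
      simp only [mem_ofPred_eq, Metric.mem_closedBall, dist_zero_right, not_le] at h1 h2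
      have a1 : Real.smoothTransition (‖x‖ ^ 2 / ε ^ 2 - 1) = 1 := by
        apply Real.smoothTransition.one_of_one_le
        rw [le_sub_iff_add_le, le_div_iff₀ (by positivity)]
        nlinarith
      have a2 : Real.smoothTransition ((Ph e κ f x - lo) / (hi - lo)) = 1 := by
        apply Real.smoothTransition.one_of_one_le
        rw [le_div_iff₀ hd]
        linarith
      simp [uf, a1, a2]
    · rw [indicator_of_notMem hx]; simp
  refine low.trans (main.trans (mul_le_mul' le_rfl ?_))
  rw [eLpNorm_one_eq_lintegral_enorm]
  have hlm : MeasurableSet {x | lo ≤ Ph e κ f x} := measurableSet_le measurable_const hmP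
  have hbm : MeasurableSet (Metric.closedBall (0 : EuclideanSpace ℝ (Fin n)) (2 * ε)) :=
    Metric.isClosed_closedBall.measurableSet
  calc ∫⁻ x, ‖fderiv ℝ (uf e κ lo hi ε f) x‖ₑ
      ≤ ∫⁻ x, ({x | lo ≤ Ph e κ f x}.indicator (fun x => ENNReal.ofReal (M / (hi - lo)) * ENNReal.ofReal (Zf e κ f x)) x
      + (Metric.closedBall 0 (2 * ε)).indicator (fun _ => ENNReal.ofReal (4 * M / ε)) x) := by
        refine lintegral_mono fun x => ?_
        rw [← ofReal_norm]
        refine (ENNReal.ofReal_le_ofReal (uf_deriv hκ hf hM0 hM hlo hhi hε x).2).trans ?_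
        refine ENNReal.ofReal_add_le.trans (add_le_add ?_ ?_)
        · by_cases hx : x ∈ {x | lo ≤ Ph e κ f x}
          · rw [indicator_of_mem hx, indicator_of_mem hx, ENNReal.ofReal_mul (by positivity)]
          · rw [indicator_of_notMem hx]; simp
        · by_cases hx : x ∈ Metric.closedBall (0 : EuclideanSpace ℝ (Fin n)) (2 * ε)
          · rw [indicator_of_mem hx, indicator_of_mem hx]
          · rw [indicator_of_notMem hx]; simp
    _ = _ := by
        rw [lintegral_add_right _ (measurable_const.indicator hbm), lintegral_indicator hlm,
          lintegral_indicator hbm, lintegral_const_mul' _ _ ENNReal.ofReal_ne_top, setLIntegral_const]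

open Filter Topology in
lemma iso (hn : 2 ≤ n) {e κ : ℝ} (hκ : 0 < κ) :
    ∃ K : ℝ≥0∞, K ≠ ∞ ∧ ∀ f : EuclideanSpace ℝ (Fin n) → ℝ, ContDiff ℝ 1 f → HasCompactSupport f →
    ∀ lo hi : ℝ, 0 < lo → lo < hi →
    ENNReal.ofReal (hi - lo) * volume {x | hi < Ph e κ f x} ^ (1 - (n : ℝ)⁻¹) ≤
      K * (∫⁻ x in {x | lo ≤ Ph e κ f x}, ENNReal.ofReal (Zf e κ f x)) := by
  obtain ⟨M, hM0, hM⟩ := st_deriv_bound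
  obtain ⟨K, hK⟩ := iso_eps (n := n) hn (e := e) hκ hM0 hM
  refine ⟨K * ENNReal.ofReal M, ENNReal.mul_ne_top ENNReal.coe_ne_top ENNReal.ofReal_ne_top, ?_⟩
  intro f hf hc lo hi hlo hhi
  have : NeZero n := ⟨by omega⟩
  have hd : 0 < hi - lo := by linarith
  have hexp : 0 ≤ 1 - (n : ℝ)⁻¹ := by
    have : (n : ℝ)⁻¹ ≤ 1 := inv_le_one_of_one_le₀ (by exact_mod_cast (by omega))
    linarith
  set ep : ℕ → ℝ := fun k => 1 / ((k : ℝ) + 1) with hep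
  have hep0 : ∀ k, 0 < ep k := fun k => by positivity
  have hepl : Tendsto ep atTop (𝓝 0) := tendsto_one_div_add_atTop_nhds_zero_nat
  have hepa : Antitone ep := by
    intro i j hij
    simp only [hep]
    gcongr
  set S : ℕ → Set (EuclideanSpace ℝ (Fin n)) :=
    fun k => {x | hi < Ph e κ f x} \ Metric.closedBall 0 (2 * ep k) with hS
  have hSmono : Monotone S := by
    intro i j hij
    refine sdiff_subset_sdiff_right (Metric.closedBall_subset_closedBall ?_)
    have := hepa hij
    linarith
  have hSU : volume (⋃ k, S k) = volume {x | hi < Ph e κ f x} := by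
    have : (⋃ k, S k) = {x | hi < Ph e κ f x} \ {0} := by
      ext x
      simp only [hS, mem_iUnion, Set.mem_sdiff, mem_ofPred_eq, Metric.mem_closedBall, dist_zero_right,
        not_le, mem_singleton_iff, exists_and_left]
      refine and_congr_right fun _ => ⟨?_, ?_⟩
      · rintro ⟨k, hk⟩ h0
        subst h0
        have := hep0 k
        simp at hk
        linarith
      · intro h0
        have h1 : 0 < ‖x‖ / 2 := by
          have := norm_pos_iff.2 h0
          positivity
        obtain ⟨k, hk⟩ := (hepl.eventually_lt_const h1).exists
        exact ⟨k, by linarith⟩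
    rw [this]
    exact measure_sdiff_null (measure_singleton _)
  have hl : Tendsto (fun k => volume (S k) ^ (1 - (n : ℝ)⁻¹)) atTop
      (𝓝 (volume {x | hi < Ph e κ f x} ^ (1 - (n : ℝ)⁻¹))) := by
    have := tendsto_measure_iUnion_atTop (μ := volume) hSmono
    rw [hSU] at this
    exact (ENNReal.continuous_rpow_const.tendsto _).comp this
  have hr0 : Tendsto (fun k => ENNReal.ofReal (4 * M / ep k) *
      volume (Metric.closedBall (0 : EuclideanSpace ℝ (Fin n)) (2 * ep k))) atTop (𝓝 0) := by
    have h1 : ∀ k, ENNReal.ofReal (4 * M / ep k) *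
      volume (Metric.closedBall (0 : EuclideanSpace ℝ (Fin n)) (2 * ep k)) =
      ENNReal.ofReal (4 * M * 2 ^ n * (ep k) ^ (n - 1)) *
        volume (Metric.ball (0 : EuclideanSpace ℝ (Fin n)) 1) := by
      intro k
      have := hep0 k
      rw [Measure.addHaar_closedBall _ _ (by positivity), finrank_euclideanSpace_fin, ← mul_assoc,
        ← ENNReal.ofReal_mul (by positivity)]
      congr 2
      obtain ⟨m, rfl⟩ : ∃ m, n = m + 1 := ⟨n - 1, by omega⟩
      simp only [Nat.add_sub_cancel]
      rw [mul_pow, pow_succ (ep k)]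
      field_simp
    simp_rw [h1]
    have h2 : Tendsto (fun k => 4 * M * 2 ^ n * (ep k) ^ (n - 1)) atTop (𝓝 0) := by
      have := (hepl.pow (n - 1)).const_mul (4 * M * 2 ^ n)
      rwa [zero_pow (by omega), mul_zero] at this
    have h3 := ENNReal.Tendsto.mul_const (b := volume (Metric.ball (0 : EuclideanSpace ℝ (Fin n)) 1))
      (ENNReal.tendsto_ofReal h2) (Or.inr measure_ball_lt_top.ne)
    simpa using h3
  have hr := ENNReal.Tendsto.const_mul (a := (K : ℝ≥0∞)) ((tendsto_const_nhds
    (x := ENNReal.ofReal (M / (hi - lo)) * ∫⁻ x in {x | lo ≤ Ph e κ f x}, ENNReal.ofReal (Zf e κ f x))).add hr0)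
    (Or.inr ENNReal.coe_ne_top)
  have key := le_of_tendsto_of_tendsto' hl hr (fun k => hK f hf hc lo hi (ep k) hlo hhi (hep0 k))
  rw [add_zero] at key
  refine (mul_le_mul' le_rfl key).trans (le_of_eq ?_)
  have : ENNReal.ofReal M = ENNReal.ofReal (hi - lo) * ENNReal.ofReal (M / (hi - lo)) := by
    rw [← ENNReal.ofReal_mul hd.le]
    congr 1
    field_simp
  rw [this]
  ring
end Iso2

section Iso3
variable {n : ℕ}

lemma iso_step (hn : 2 ≤ n) {e κ : ℝ} (hκ : 0 < κ) (s : ℝ) :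
    ∃ K : ℝ≥0∞, K ≠ ∞ ∧ ∀ f : EuclideanSpace ℝ (Fin n) → ℝ, ContDiff ℝ 1 f → HasCompactSupport f →
    ∀ z : EuclideanSpace ℝ (Fin n) → ℝ≥0∞, AEMeasurable z volume →
    (∀ᵐ x, ENNReal.ofReal (Zf e κ f x) ≤ z x) → ∀ k : ℤ,
    RR volume (fun x => ENNReal.ofReal (Ph e κ f x)) (e2 k) ≤
      RR volume (fun x => ENNReal.ofReal (Ph e κ f x)) (e2 (k + 1 : ℤ)) +
      K * (e2 (-(k * (s - (n : ℝ)⁻¹))) * ∑' j : ℕ, e2 (-((1 - s) * j)) * Sq volume s z (k + -(j : ℤ))) := by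
  obtain ⟨K, hK, hiso⟩ := iso (n := n) hn (e := e) hκ
  refine ⟨K * 2 * e2 1, by simp [ENNReal.mul_eq_top, hK, e2_ne_top], ?_⟩
  intro f hf hc z hz hZz k
  set Φ : EuclideanSpace ℝ (Fin n) → ℝ≥0∞ := fun x => ENNReal.ofReal (Ph e κ f x) with hΦ
  set B := 2 * ∑' j : ℕ, e2 ((k + 1 : ℤ) - j) * RR volume z (e2 ((k + 1 : ℤ) - j - 1)) with hB
  set X := K * B * e2 (-(k * (1 - (n : ℝ)⁻¹))) with hX
  have hXeq : X = K * 2 * e2 1 *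
      (e2 (-(k * (s - (n : ℝ)⁻¹))) * ∑' j : ℕ, e2 (-((1 - s) * j)) * Sq volume s z (k + -(j : ℤ))) := by
    rw [hX, hB]
    have : ∀ j : ℕ, e2 ((k + 1 : ℤ) - j) * RR volume z (e2 ((k + 1 : ℤ) - j - 1)) =
        e2 (1 + k * (1 - s)) * (e2 (-((1 - s) * j)) * Sq volume s z (k + -(j : ℤ))) := by
      intro j
      have h1 : (((k + 1 : ℤ) : ℝ) - j - 1) = ((k + -(j : ℤ) : ℤ) : ℝ) := by push_cast; ring
      rw [h1, RR_eq_Sq volume s, ← mul_assoc, ← mul_assoc, ← e2_add, ← e2_add]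
      congr 2
      push_cast
      ring
    simp_rw [this]
    rw [ENNReal.tsum_mul_left]
    have h2 : e2 (1 + k * (1 - s)) * e2 (-(k * (1 - (n : ℝ)⁻¹))) = e2 1 * e2 (-(k * (s - (n : ℝ)⁻¹))) := by
      rw [← e2_add, ← e2_add]; congr 1; ring
    calc _ = K * 2 * (e2 (1 + k * (1 - s)) * e2 (-(k * (1 - (n : ℝ)⁻¹)))) *
          ∑' j : ℕ, e2 (-((1 - s) * j)) * Sq volume s z (k + -(j : ℤ)) := by ring
      _ = _ := by rw [h2]; ring
  rw [← hXeq]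
  by_contra hcon
  push Not at hcon
  set b := RR volume Φ (e2 (k + 1 : ℤ)) with hb
  obtain ⟨c, hc1, hc2⟩ := exists_between hcon
  have hbX : b + X ≠ ∞ := (lt_of_lt_of_le hc1 le_top).ne
  have hbt : b ≠ ∞ := fun h => hbX (by simp [h])
  have hXt : X ≠ ∞ := fun h => hbX (by simp [h])
  have hct : c ≠ ∞ := (lt_of_lt_of_le hc2 le_top).ne
  have hlt : b.toReal + X.toReal < c.toReal := by
    rw [← ENNReal.toReal_add hbt hXt]
    exact (ENNReal.toReal_lt_toReal hbX hct).2 hc1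
  set lo := (b.toReal + c.toReal - X.toReal) / 2 with hlo
  have hlob : b.toReal < lo := by rw [hlo]; linarith
  have hlo0 : 0 < lo := lt_of_le_of_lt ENNReal.toReal_nonneg hlob
  have hX0 : 0 ≤ X.toReal := ENNReal.toReal_nonneg
  have hlohi : lo < c.toReal := by rw [hlo]; linarith
  have h1 := hiso f hf hc lo c.toReal hlo0 hlohi
  have hvol : e2 k ≤ volume {x | c.toReal < Ph e κ f x} := by
    have h2 : ¬ RR volume Φ (e2 k) ≤ c := not_le.2 hc2
    rw [RR_le_iff, not_le] at h2
    refine h2.le.trans (measure_mono fun x hx => ?_)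
    have hx : c < ENNReal.ofReal (Ph e κ f x) := hx
    exact (ENNReal.lt_ofReal_iff_toReal_lt hct).1 hx
  have hE : volume {x | lo ≤ Ph e κ f x} ≤ e2 (k + 1 : ℤ) := by
    refine (measure_mono fun x hx => ?_).trans (meas_RR_le Φ (e2 (k + 1 : ℤ)))
    have hx : lo ≤ Ph e κ f x := hx
    change b < ENNReal.ofReal (Ph e κ f x)
    exact (ENNReal.lt_ofReal_iff_toReal_lt hbt).2 (hlob.trans_le hx)
  have hint : ∫⁻ x in {x | lo ≤ Ph e κ f x}, ENNReal.ofReal (Zf e κ f x) ≤ B :=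
    (lintegral_mono_ae (ae_restrict_of_ae hZz)).trans (setLIntegral_le_dyadic hz (k + 1) _ hE)
  have hexp : 0 ≤ 1 - (n : ℝ)⁻¹ := by
    have : (n : ℝ)⁻¹ ≤ 1 := inv_le_one_of_one_le₀ (by exact_mod_cast (by omega))
    linarith
  have h3 : ENNReal.ofReal (c.toReal - lo) * e2 (k * (1 - (n : ℝ)⁻¹)) ≤ K * B := by
    rw [← e2_rpow]
    exact (mul_le_mul' le_rfl (ENNReal.rpow_le_rpow hvol hexp)).trans
      (h1.trans (mul_le_mul' le_rfl hint))
  have h4 : ENNReal.ofReal (c.toReal - lo) ≤ X := by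
    calc _ = ENNReal.ofReal (c.toReal - lo) * e2 (k * (1 - (n : ℝ)⁻¹)) * e2 (-(k * (1 - (n : ℝ)⁻¹))) := by
          rw [mul_assoc, e2_cancel, mul_one]
      _ ≤ _ := mul_le_mul' h3 le_rfl
  have h5 := (ENNReal.ofReal_le_iff_le_toReal hXt).1 h4
  rw [hlo] at h5
  linarith

lemma iso_nrm (hn : 2 ≤ n) {e κ : ℝ} (hκ : 0 < κ) {s σ : ℝ} (hs1 : (n : ℝ)⁻¹ < s) (hs2 : s < 1)
    (hσ : 0 ≤ σ) :
    ∃ K : ℝ≥0∞, K ≠ ∞ ∧ ∀ f : EuclideanSpace ℝ (Fin n) → ℝ, ContDiff ℝ 1 f → HasCompactSupport f →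
    ∀ z : EuclideanSpace ℝ (Fin n) → ℝ≥0∞, AEMeasurable z volume →
    (∀ᵐ x, ENNReal.ofReal (Zf e κ f x) ≤ z x) →
    nrm σ (Sq volume (s - (n : ℝ)⁻¹) (fun x => ENNReal.ofReal (Ph e κ f x))) ≤
      K * nrm σ (Sq volume s z) := by
  obtain ⟨K, hK, hstep⟩ := iso_step (n := n) hn (e := e) hκ s
  obtain ⟨C1, hC1, hg1⟩ := nrm_geo hσ (sub_pos.2 hs1)
  obtain ⟨C2, hC2, hg2⟩ := nrm_geo hσ (sub_pos.2 hs2)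
  refine ⟨K * C1 * C2, by simp [ENNReal.mul_eq_top, hK, hC1, hC2], ?_⟩
  intro f hf hc z hz hZz
  have hst := hstep f hf hc z hz hZz
  set Φ : EuclideanSpace ℝ (Fin n) → ℝ≥0∞ := fun x => ENNReal.ofReal (Ph e κ f x) with hΦ
  set y : ℤ → ℝ≥0∞ := fun k => ∑' j : ℕ, e2 (-((1 - s) * j)) * Sq volume s z (k + -(j : ℤ)) with hy
  set δ := s - (n : ℝ)⁻¹ with hδ
  have tel : ∀ (k : ℤ) (N : ℕ), RR volume Φ (e2 k) ≤ RR volume Φ (e2 (k + N : ℤ)) +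
      ∑ i ∈ Finset.range N, K * (e2 (-((k + i : ℤ) * δ)) * y (k + i)) := by
    intro k N
    induction N with
    | zero => simp
    | succ N ih =>
      refine ih.trans ?_
      rw [Finset.sum_range_succ]
      refine (add_le_add_left (hst (k + N)) _).trans (le_of_eq ?_)
      rw [show (k + N + 1 : ℤ) = k + (N + 1 : ℕ) by push_cast; ring]
      simp only [hy]
      ring
  have fin : ∀ k : ℤ, ∃ N : ℕ, RR volume Φ (e2 (k + N : ℤ)) = 0 := by
    intro k
    have hv : volume {x | 0 < Φ x} < ∞ := by
      refine lt_of_le_of_lt (measure_mono fun x hx => ?_) (hc.isCompact.measure_lt_top (μ := volume))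
      refine subset_tsupport f ?_
      intro h
      have hx : 0 < ENNReal.ofReal (Ph e κ f x) := hx
      simp [Ph, h, Real.zero_rpow hκ.ne'] at hx
    obtain ⟨N, hN⟩ := ENNReal.exists_nat_gt (r := volume {x | 0 < Φ x} * e2 (-k))
      (ENNReal.mul_ne_top hv.ne (e2_ne_top _))
    refine ⟨N, le_antisymm ((RR_le_iff _ _ _).2 ?_) (zero_le)⟩
    calc volume {x | 0 < Φ x} = volume {x | 0 < Φ x} * e2 (-k) * e2 k := by
          rw [mul_assoc, mul_comm (e2 (-k)), e2_cancel, mul_one]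
      _ ≤ N * e2 k := mul_le_mul' hN.le le_rfl
      _ ≤ e2 N * e2 k := by
          refine mul_le_mul' ?_ le_rfl
          rw [e2, ENNReal.rpow_natCast]
          exact_mod_cast (Nat.lt_two_pow_self (n := N)).le
      _ = _ := by rw [← e2_add]; congr 1; push_cast; ring
  have bound : ∀ k : ℤ, Sq volume δ Φ k ≤ K * ∑' i : ℕ, e2 (-(δ * i)) * y (k + (i : ℤ)) := by
    intro k
    obtain ⟨N, hN⟩ := fin k
    have h := tel k N
    rw [hN, zero_add] at h
    have h' := h.trans (ENNReal.sum_le_tsum (Finset.range N))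
    rw [Sq, ← ENNReal.tsum_mul_left]
    refine (mul_le_mul' le_rfl h').trans ?_
    rw [← ENNReal.tsum_mul_left]
    refine ENNReal.tsum_le_tsum fun i => le_of_eq ?_
    have : e2 (-(δ * i)) = e2 (k * δ) * e2 (-((k + i : ℤ) * δ)) := by
      rw [← e2_add]; congr 1; push_cast; ring
    rw [this]
    ring
  calc _ ≤ nrm σ (fun k => K * ∑' i : ℕ, e2 (-(δ * i)) * y (k + (i : ℤ))) := nrm_mono hσ bound
    _ = K * nrm σ (fun k => ∑' i : ℕ, e2 (-(δ * i)) * y (k + (i : ℤ))) := nrm_const_mul hσ _ _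
    _ ≤ K * (C1 * nrm σ y) := mul_le_mul' le_rfl (hg1 y _)
    _ ≤ K * (C1 * (C2 * nrm σ (Sq volume s z))) :=
      mul_le_mul' le_rfl (mul_le_mul' le_rfl (hg2 (Sq volume s z) (fun j => -(j : ℤ))))
    _ = _ := by ring
end Iso3

section Tools
variable {X : Type*} [MeasurableSpace X] {μ : Measure X}

lemma nrm_Sq_mul {s t σ τ : ℝ} (hσ : 0 ≤ σ) (hτ : 0 ≤ τ) (u v : X → ℝ≥0∞) :
    nrm (σ + τ) (Sq μ (s + t) (fun x => u x * v x)) ≤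
      e2 (s + t) * (nrm σ (Sq μ s u) * nrm τ (Sq μ t v)) := by
  rw [← nrm_shift _ _ 1]
  refine le_trans (nrm_mono (add_nonneg hσ hτ) (y := fun k => e2 (s + t) * (Sq μ s u k * Sq μ t v k))
    fun k => ?_) ?_
  · unfold Sq
    have h1 : e2 ((k + 1 : ℤ) : ℝ) = 2 * e2 k := by
      push_cast; rw [e2_add, e2_one, mul_comm]
    rw [h1]
    refine (mul_le_mul' le_rfl (RR_mul u v (e2 k))).trans (le_of_eq ?_)
    have h2 : e2 (((k + 1 : ℤ) : ℝ) * (s + t)) = e2 (s + t) * (e2 (k * s) * e2 (k * t)) := by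
      rw [← e2_add, ← e2_add]; congr 1; push_cast; ring
    rw [h2]; ring
  · rw [nrm_const_mul (add_nonneg hσ hτ)]
    exact mul_le_mul' le_rfl (nrm_mul hσ hτ _ _)

lemma nrm_Sq_rpow {s σ b : ℝ} (hσ : 0 ≤ σ) (hb : 0 ≤ b) (u : X → ℝ≥0∞) :
    nrm (b * σ) (Sq μ (b * s) (fun x => u x ^ b)) ≤ nrm σ (Sq μ s u) ^ b := by
  have h := nrm_holder hσ le_rfl hb le_rfl (Sq μ s u) (fun _ => 1)
  simp only [ENNReal.rpow_zero, mul_one, zero_mul, add_zero] at h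
  refine le_trans (nrm_mono (mul_nonneg hb hσ) fun k => ?_) h
  unfold Sq
  rw [ENNReal.mul_rpow_of_nonneg _ _ hb, e2_rpow]
  refine mul_le_mul' (le_of_eq ?_) (RR_rpow u _ hb)
  congr 1; ring

lemma nrm_add_le {s : ℝ} (hs : 0 ≤ s) (hs1 : s ≤ 1) (x y : ℤ → ℝ≥0∞) :
    nrm s (fun k => x k + y k) ≤ 2 * (nrm s x + nrm s y) := by
  rcases hs.eq_or_lt with rfl | hs'
  · simp only [nrm, if_true]
    refine le_trans ?_ (le_mul_of_one_le_left' (by norm_num : (1:ℝ≥0∞) ≤ 2))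
    exact iSup_le fun k => add_le_add (le_iSup x k) (le_iSup y k)
  · simp only [nrm, if_neg hs'.ne']
    have hp : 1 ≤ s⁻¹ := (one_le_inv₀ hs').2 hs1
    calc _ ≤ (∑' k, (2:ℝ≥0∞) ^ (s⁻¹ - 1) * (x k ^ s⁻¹ + y k ^ s⁻¹)) ^ s := by
          refine ENNReal.rpow_le_rpow (ENNReal.tsum_le_tsum fun k => ?_) hs
          exact ENNReal.rpow_add_le_mul_rpow_add_rpow _ _ hp
      _ = (2:ℝ≥0∞) ^ (1 - s) * (∑' k, x k ^ s⁻¹ + ∑' k, y k ^ s⁻¹) ^ s := by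
          rw [ENNReal.tsum_mul_left, ENNReal.tsum_add, ENNReal.mul_rpow_of_nonneg _ _ hs,
            ← ENNReal.rpow_mul]
          congr 2
          field_simp
      _ ≤ _ := by
          refine mul_le_mul' ?_ (ENNReal.rpow_add_le_add_rpow _ _ hs hs1)
          calc (2:ℝ≥0∞) ^ (1 - s) ≤ 2 ^ (1:ℝ) :=
                ENNReal.rpow_le_rpow_of_exponent_le (by norm_num) (by linarith)
            _ = 2 := ENNReal.rpow_one _

lemma nrm_Sq_add {s σ : ℝ} (hσ : 0 ≤ σ) (hσ1 : σ ≤ 1) (u v : X → ℝ≥0∞) :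
    nrm σ (Sq μ s (fun x => u x + v x)) ≤
      e2 s * 2 * (nrm σ (Sq μ s u) + nrm σ (Sq μ s v)) := by
  rw [← nrm_shift _ _ 1]
  refine le_trans (nrm_mono hσ (y := fun k => e2 s * (Sq μ s u k + Sq μ s v k))
    fun k => ?_) ?_
  · unfold Sq
    have h1 : e2 ((k + 1 : ℤ) : ℝ) = 2 * e2 k := by
      push_cast; rw [e2_add, e2_one, mul_comm]
    rw [h1]
    refine (mul_le_mul' le_rfl (RR_add u v (e2 k))).trans (le_of_eq ?_)
    have h2 : e2 (((k + 1 : ℤ) : ℝ) * s) = e2 s * e2 (k * s) := by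
      rw [← e2_add]; congr 1; push_cast; ring
    rw [h2]; ring
  · rw [nrm_const_mul hσ, mul_assoc]
    exact mul_le_mul' le_rfl (nrm_add_le hσ hσ1 _ _)

lemma nrm_Sq_const {s σ : ℝ} (hσ : 0 ≤ σ) (c : ℝ≥0∞) (u : X → ℝ≥0∞) :
    nrm σ (Sq μ s (fun x => c * u x)) ≤ c * nrm σ (Sq μ s u) := by
  rw [← nrm_const_mul hσ]
  refine nrm_mono hσ fun k => ?_
  unfold Sq
  refine (mul_le_mul' le_rfl (RR_const_mul u _ c)).trans (le_of_eq ?_)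
  ring

lemma nrm_Sq_mono {s σ : ℝ} (hσ : 0 ≤ σ) {u v : X → ℝ≥0∞} (h : ∀ᵐ x ∂μ, u x ≤ v x) :
    nrm σ (Sq μ s u) ≤ nrm σ (Sq μ s v) :=
  nrm_mono hσ fun k => mul_le_mul' le_rfl (RR_mono_ae h _)

/-- The weak-type bound for `|x|⁻¹`. -/
lemma nrm_Sq_inv {n : ℕ} [NeZero n] : ∃ C : ℝ≥0∞, C ≠ ∞ ∧
    nrm 0 (Sq (volume : Measure (EuclideanSpace ℝ (Fin n))) (n : ℝ)⁻¹
      (fun x => ENNReal.ofReal ‖x‖⁻¹)) ≤ C := by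
  have hn : (0:ℝ) < n := by exact_mod_cast Nat.pos_of_ne_zero (NeZero.ne n)
  set ω := (volume (Metric.ball (0 : EuclideanSpace ℝ (Fin n)) 1)).toReal with hω
  have hωt : volume (Metric.ball (0 : EuclideanSpace ℝ (Fin n)) 1) ≠ ∞ := measure_ball_lt_top.ne
  have hω0 : 0 < ω := ENNReal.toReal_pos (Metric.measure_ball_pos _ _ one_pos).ne' hωt
  refine ⟨ENNReal.ofReal (ω ^ (n : ℝ)⁻¹), ENNReal.ofReal_ne_top, ?_⟩
  simp only [nrm, if_true]
  refine iSup_le fun k => ?_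
  set l : ℝ := ω ^ (n : ℝ)⁻¹ * 2 ^ (-((k : ℝ) * (n : ℝ)⁻¹)) with hl
  have hl0 : 0 < l := by positivity
  have hR : RR volume (fun x : EuclideanSpace ℝ (Fin n) => ENNReal.ofReal ‖x‖⁻¹) (e2 k) ≤
      ENNReal.ofReal l := by
    rw [RR_le_iff]
    have hsub : {x : EuclideanSpace ℝ (Fin n) | ENNReal.ofReal l < ENNReal.ofReal ‖x‖⁻¹} ⊆
        Metric.closedBall 0 l⁻¹ := by
      intro x hx
      have hx : ENNReal.ofReal l < ENNReal.ofReal ‖x‖⁻¹ := hx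
      rw [ENNReal.ofReal_lt_ofReal_iff_of_nonneg hl0.le] at hx
      rw [Metric.mem_closedBall, dist_zero_right]
      have h0 : 0 < ‖x‖ := inv_pos.1 (hl0.trans hx)
      exact (lt_inv_comm₀ hl0 h0).1 hx |>.le
    refine (measure_mono hsub).trans ?_
    rw [Measure.addHaar_closedBall _ _ (by positivity), finrank_euclideanSpace_fin,
      ← ENNReal.ofReal_toReal hωt, ← hω, ← ENNReal.ofReal_mul (by positivity), e2_ofReal]
    apply ENNReal.ofReal_le_ofReal
    apply le_of_eq
    rw [hl, inv_pow, mul_pow, ← Real.rpow_natCast, ← Real.rpow_natCast, ← Real.rpow_mul hω0.le,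
      ← Real.rpow_mul (by norm_num), inv_mul_cancel₀ hn.ne', Real.rpow_one,
      show -((k:ℝ) * (n:ℝ)⁻¹) * n = -k by field_simp, Real.rpow_neg (by norm_num)]
    field_simp
  unfold Sq
  refine (mul_le_mul' le_rfl hR).trans (le_of_eq ?_)
  rw [hl, e2_ofReal, ← ENNReal.ofReal_mul (by positivity)]
  congr 1
  rw [Real.rpow_neg (by norm_num)]
  field_simp
end Tools

/-- Choice of the auxiliary parameters. -/
lemma params {a Δ ip iq N : ℝ} (ha0 : 0 < a) (ha1 : a ≤ 1) (hΔ0 : 0 ≤ Δ) (hΔa : Δ ≤ a)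
    (hip0 : 0 < ip) (hip1 : ip < 1) (hiq0 : 0 < iq) (hN0 : 0 < N) (hN1 : N < 1)
    (hr : 0 < a * ip + (1 - a) * iq - (a - Δ) * N) :
    ∃ b σ A B D : ℝ, 0 ≤ b ∧ 0 ≤ σ ∧ 0 ≤ A ∧ 0 ≤ B ∧ 0 ≤ D ∧ A + B = a ∧ A * b + D = 1 - a ∧
      A * σ + B = Δ ∧ N < ip + b * iq + σ * N ∧ ip + b * iq + σ * N < 1 := by
  obtain ⟨c, hc0, hc1, hG, hH⟩ : ∃ c : ℝ, 0 ≤ c ∧ c < 1 ∧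
      (1 - c * (1 - a)) * N < (1 - c * (1 - a)) * ip + c * (1 - a) * iq + c * Δ * N ∧
      (1 - c * (1 - a)) * ip + c * (1 - a) * iq + c * Δ * N < 1 - c * (1 - a) := by
    by_cases h0 : N < ip
    · exact ⟨0, le_rfl, one_pos, by linarith, by linarith⟩
    push Not at h0
    set g := (1 - a) * (iq - ip) + Δ * N + (1 - a) * N with hg
    have hg1 : 0 < ip - N + g := by rw [hg]; linarith
    have hg0 : 0 < g := by linarith
    set c0 := (N - ip) / g with hc0
    have hc00 : 0 ≤ c0 := div_nonneg (by linarith) hg0.le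
    have hc01 : c0 < 1 := by rw [hc0, div_lt_one hg0]; linarith
    have hcg : c0 * g = N - ip := by rw [hc0]; field_simp
    have ha' : 0 < 1 - c0 * (1 - a) := by nlinarith
    have hneg : 0 < (1 - c0 * (1 - a)) * (1 - N) := mul_pos ha' (by linarith)
    set h := g - (1 - a) * N + (1 - a) with hh
    have hη : ∃ η : ℝ, 0 < η ∧ η < 1 - c0 ∧ η * h < (1 - c0 * (1 - a)) * (1 - N) := by
      refine ⟨min ((1 - c0) / 2) ((1 - c0 * (1 - a)) * (1 - N) / (2 * (|h| + 1))), ?_, ?_, ?_⟩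
      · apply lt_min
        · linarith
        · positivity
      · exact (min_le_left _ _).trans_lt (by linarith)
      · set η := min ((1 - c0) / 2) ((1 - c0 * (1 - a)) * (1 - N) / (2 * (|h| + 1))) with hηd
        have hη0 : 0 < η := by
          apply lt_min
          · linarith
          · positivity
        have h1 : η * (2 * (|h| + 1)) ≤ (1 - c0 * (1 - a)) * (1 - N) := by
          rw [← le_div_iff₀ (by positivity)]; exact min_le_right _ _
        have h2 := le_abs_self h
        have h3 := abs_nonneg h
        nlinarith [mul_le_mul_of_nonneg_left h2 hη0.le, mul_nonneg hη0.le h3]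
    obtain ⟨η, hη0, hη1, hη2⟩ := hη
    have hηg : 0 < η * g := mul_pos hη0 hg0
    refine ⟨c0 + η, by linarith, by linarith, ?_, ?_⟩
    · have : (1 - (c0 + η) * (1 - a)) * ip + (c0 + η) * (1 - a) * iq + (c0 + η) * Δ * N
          - (1 - (c0 + η) * (1 - a)) * N = ip - N + c0 * g + η * g := by rw [hg]; ring
      linarith
    · have : (1 - (c0 + η) * (1 - a)) * ip + (c0 + η) * (1 - a) * iq + (c0 + η) * Δ * N
          - (1 - (c0 + η) * (1 - a)) = ip - N + c0 * g + η * h - (1 - c0 * (1 - a)) * (1 - N) := by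
        rw [hh, hg]; ring
      linarith
  have ha' : 0 < 1 - c * (1 - a) := by nlinarith
  have hm : 0 < 1 - c * (1 - a + Δ) := by nlinarith
  have hθ0 : 0 ≤ (a - Δ) / (1 - c * (1 - a + Δ)) := div_nonneg (by linarith) hm.le
  have hθ1 : (a - Δ) / (1 - c * (1 - a + Δ)) ≤ 1 := by
    rw [div_le_one hm]; nlinarith
  set θ := (a - Δ) / (1 - c * (1 - a + Δ)) with hθ
  have hθe : θ * (1 - c * (1 - a + Δ)) = a - Δ := by rw [hθ]; field_simp
  have hcθ : c * θ ≤ 1 := by nlinarith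
  refine ⟨c * (1 - a) / (1 - c * (1 - a)), c * Δ / (1 - c * (1 - a)), θ * (1 - c * (1 - a)),
    Δ * (1 - c * θ), (1 - a) * (1 - c * θ), ?_, ?_, ?_, ?_, ?_, ?_, ?_, ?_, ?_, ?_⟩
  · exact div_nonneg (mul_nonneg hc0 (by linarith)) ha'.le
  · exact div_nonneg (mul_nonneg hc0 hΔ0) ha'.le
  · exact mul_nonneg hθ0 ha'.le
  · exact mul_nonneg hΔ0 (by linarith)
  · exact mul_nonneg (by linarith) (by linarith)
  · linarith
  · field_simp; ring
  · field_simp; ring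
  · rw [← mul_lt_mul_iff_right₀ ha']
    refine hG.trans_eq ?_
    field_simp
  · rw [← mul_lt_mul_iff_right₀ ha', mul_one]
    refine lt_of_eq_of_lt ?_ hH
    field_simp

section Final
variable {n : ℕ}

/-- The weighted function `|x|^{-β} |f|`. -/
noncomputable def vf (β : ℝ) (f : EuclideanSpace ℝ (Fin n) → ℝ)
    (x : EuclideanSpace ℝ (Fin n)) : ℝ≥0∞ := ENNReal.ofReal (‖x‖ ^ (-β) * |f x|)

lemma vf_meas {β : ℝ} {f : EuclideanSpace ℝ (Fin n) → ℝ} (hf : ContDiff ℝ 1 f) :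
    Measurable (vf β f) := by
  have h : Measurable fun x => |f x| := hf.continuous.abs.measurable
  exact ((measurable_norm.pow_const (-β)).mul h).ennreal_ofReal

lemma Zf_le {α β b σ : ℝ} (hb : 0 ≤ b) (hσ : 0 ≤ σ) (f : EuclideanSpace ℝ (Fin n) → ℝ)
    {x : EuclideanSpace ℝ (Fin n)} (hx : x ≠ 0) :
    ENNReal.ofReal (Zf (α - σ - β * b) (1 + b) f x) ≤
      ENNReal.ofReal (|α - σ - β * b| + (1 + b)) *
        ((gf α f x + h0f α f x) * (vf β f x ^ b * ENNReal.ofReal ‖x‖⁻¹ ^ σ)) := by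
  have hxn : 0 < ‖x‖ := norm_pos_iff.2 hx
  unfold gf h0f vf
  rw [ENNReal.ofReal_rpow_of_nonneg (by positivity) hb,
    ENNReal.ofReal_rpow_of_nonneg (by positivity) hσ, ← ENNReal.ofReal_add (by positivity) (by positivity),
    ← ENNReal.ofReal_mul (by positivity), ← ENNReal.ofReal_mul (by positivity),
    ← ENNReal.ofReal_mul (by positivity)]
  apply ENNReal.ofReal_le_ofReal
  set e := α - σ - β * b with he
  have h1 : (‖x‖ ^ (-β) * |f x|) ^ b * ‖x‖⁻¹ ^ σ = ‖x‖ ^ (e - α) * |f x| ^ b := by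
    rw [Real.mul_rpow (by positivity) (abs_nonneg _), ← Real.rpow_mul hxn.le, Real.inv_rpow hxn.le,
      ← Real.rpow_neg hxn.le, mul_right_comm, ← Real.rpow_add hxn]
    congr 2
    rw [he]; ring
  rw [h1, Zf]
  have h2 : ‖x‖ ^ (e - 1) = ‖x‖ ^ (α - 1) * ‖x‖ ^ (e - α) := by
    rw [← Real.rpow_add hxn]; congr 1; ring
  have h3 : ‖x‖ ^ e = ‖x‖ ^ α * ‖x‖ ^ (e - α) := by
    rw [← Real.rpow_add hxn]; congr 1; ring
  have h4 : |f x| ^ (1 + b) = |f x| * |f x| ^ b := by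
    rw [Real.rpow_add_of_nonneg (abs_nonneg _) zero_le_one hb, Real.rpow_one]
  rw [h2, h3, h4, add_sub_cancel_left]
  set Q := ‖x‖ ^ (e - α) * |f x| ^ b with hQ
  have hQ0 : 0 ≤ Q := by positivity
  set H := ‖x‖ ^ (α - 1) * |f x| with hH
  have hH0 : 0 ≤ H := by positivity
  set G := ‖x‖ ^ α * ‖fderiv ℝ f x‖ with hG
  have hG0 : 0 ≤ G := by positivity
  have : |e| * (‖x‖ ^ (α - 1) * ‖x‖ ^ (e - α)) * (|f x| * |f x| ^ b) +
      (1 + b) * (‖x‖ ^ α * ‖x‖ ^ (e - α)) * |f x| ^ b * ‖fderiv ℝ f x‖ =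
      |e| * (H * Q) + (1 + b) * (G * Q) := by
    rw [hQ, hH, hG]; ring
  rw [this]
  have e0 := abs_nonneg e
  have t1 : 0 ≤ |e| * (G * Q) := by positivity
  have t2 : 0 ≤ (1 + b) * (H * Q) := by positivity
  nlinarith

lemma F_le {α β γ b σ A B D : ℝ} (hA : 0 ≤ A) (hB : 0 ≤ B) (hD : 0 ≤ D)
    (h1 : A * (1 + b) + B + D = 1)
    (h2 : A * (α - σ - β * b) + B * (α - 1) - D * β = -γ)
    (f : EuclideanSpace ℝ (Fin n) → ℝ) {x : EuclideanSpace ℝ (Fin n)} (hx : x ≠ 0) :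
    vf γ f x ≤ ENNReal.ofReal (Ph (α - σ - β * b) (1 + b) f x) ^ A *
      (h0f α f x ^ B * vf β f x ^ D) := by
  have hxn : 0 < ‖x‖ := norm_pos_iff.2 hx
  by_cases hf : f x = 0
  · simp [vf, hf]
  have hfn : 0 < |f x| := abs_pos.2 hf
  unfold h0f vf Ph
  rw [ENNReal.ofReal_rpow_of_nonneg (by positivity) hA,
    ENNReal.ofReal_rpow_of_nonneg (by positivity) hB,
    ENNReal.ofReal_rpow_of_nonneg (by positivity) hD,
    ← ENNReal.ofReal_mul (by positivity), ← ENNReal.ofReal_mul (by positivity)]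
  apply ENNReal.ofReal_le_ofReal
  apply le_of_eq
  rw [Real.mul_rpow (by positivity) (by positivity), Real.mul_rpow (by positivity) (by positivity),
    Real.mul_rpow (by positivity) (by positivity), ← Real.rpow_mul hxn.le, ← Real.rpow_mul hxn.le,
    ← Real.rpow_mul hxn.le, ← Real.rpow_mul hfn.le]
  have e1 : ‖x‖ ^ (-γ) = ‖x‖ ^ ((α - σ - β * b) * A) * ‖x‖ ^ ((α - 1) * B) * ‖x‖ ^ (-β * D) := by
    rw [← Real.rpow_add hxn, ← Real.rpow_add hxn, ← h2]; congr 1; ring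
  have e2 : |f x| = |f x| ^ ((1 + b) * A) * |f x| ^ B * |f x| ^ D := by
    rw [← Real.rpow_add hfn, ← Real.rpow_add hfn,
      show (1 + b) * A + B + D = 1 by linarith, Real.rpow_one]
  rw [e1]
  nth_rw 1 [e2]
  ring

lemma core (hn : 2 ≤ n) {p q α β γ a b σ A B D s2 s3 : ℝ} (hp : 1 < p)
    (hα : 0 < α) (hα1 : 1 - (n : ℝ) / p < α)
    (hb : 0 ≤ b) (hσ : 0 ≤ σ) (hA : 0 ≤ A) (hB : 0 ≤ B) (hD : 0 ≤ D)
    (hAB : A + B = a) (hAD : A * b + D = 1 - a)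
    (hs2 : 0 ≤ s2) (hs21 : s2 ≤ 1) (hs3 : 0 ≤ s3)
    (hwt : A * (α - σ - β * b) + B * (α - 1) - D * β = -γ)
    (hS1 : (n : ℝ)⁻¹ < p⁻¹ + b * q⁻¹ + σ * (n : ℝ)⁻¹)
    (hS2 : p⁻¹ + b * q⁻¹ + σ * (n : ℝ)⁻¹ < 1) :
    ∃ C : ℝ≥0∞, C ≠ ∞ ∧ ∀ f : EuclideanSpace ℝ (Fin n) → ℝ, ContDiff ℝ 1 f → HasCompactSupport f →
    nrm (a * s2 + (1 - a) * s3) (Sq volume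
      (A * (p⁻¹ + b * q⁻¹ + σ * (n : ℝ)⁻¹ - (n : ℝ)⁻¹) + (B * p⁻¹ + D * q⁻¹)) (vf γ f)) ≤
      C * (nrm s2 (Sq volume p⁻¹ (gf α f)) ^ a * nrm s3 (Sq volume q⁻¹ (vf β f)) ^ (1 - a)) := by
  have : NeZero n := ⟨by omega⟩
  obtain ⟨CI, hCI, hinv⟩ := nrm_Sq_inv (n := n)
  obtain ⟨CH, hCH, hhardy⟩ := hardy (n := n) hp hα hα1 hs2
  have hτ : 0 ≤ s2 + b * s3 := by positivity
  obtain ⟨K, hK, hiso⟩ := iso_nrm hn (e := α - σ - β * b) (κ := 1 + b) (by linarith) hS1 hS2 hτ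
  set S := p⁻¹ + b * q⁻¹ + σ * (n : ℝ)⁻¹ with hS
  set c0 := ENNReal.ofReal (|α - σ - β * b| + (1 + b)) with hc0
  set K1 := K * (c0 * (e2 S * ((e2 p⁻¹ * 2 * (1 + CH)) * (e2 (b * q⁻¹ + σ * (n : ℝ)⁻¹) * CI ^ σ)))) with hK1
  have hK1t : K1 ≠ ∞ := by
    have t1 : CI ^ σ ≠ ∞ := ENNReal.rpow_ne_top_of_nonneg hσ hCI
    have t2 : (1 + CH) ≠ ∞ := by simp [hCH]
    refine ENNReal.mul_ne_top hK (ENNReal.mul_ne_top ENNReal.ofReal_ne_top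
      (ENNReal.mul_ne_top (e2_ne_top _) (ENNReal.mul_ne_top (ENNReal.mul_ne_top
        (ENNReal.mul_ne_top (e2_ne_top _) (by norm_num)) t2) (ENNReal.mul_ne_top (e2_ne_top _) t1))))
  set c1 := e2 (A * (S - (n : ℝ)⁻¹) + (B * p⁻¹ + D * q⁻¹)) * e2 (B * p⁻¹ + D * q⁻¹) with hc1
  refine ⟨c1 * (K1 ^ A * CH ^ B), ENNReal.mul_ne_top (ENNReal.mul_ne_top (e2_ne_top _) (e2_ne_top _))
    (ENNReal.mul_ne_top (ENNReal.rpow_ne_top_of_nonneg hA hK1t) (ENNReal.rpow_ne_top_of_nonneg hB hCH)), ?_⟩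
  intro f hf hc
  set X := nrm s2 (Sq volume p⁻¹ (gf α f)) with hX
  set Y := nrm s3 (Sq volume q⁻¹ (vf β f)) with hY
  have hne : ∀ᵐ x : EuclideanSpace ℝ (Fin n), x ≠ 0 := by
    simp [ae_iff]
  have hh0 : nrm s2 (Sq volume p⁻¹ (h0f α f)) ≤ CH * X := hhardy f hf hc
  set z : EuclideanSpace ℝ (Fin n) → ℝ≥0∞ := fun x => c0 *
        ((gf α f x + h0f α f x) * (vf β f x ^ b * ENNReal.ofReal ‖x‖⁻¹ ^ σ)) with hz
  have hzm : AEMeasurable z volume := by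
    refine Measurable.aemeasurable ?_
    refine Measurable.const_mul (((gf_meas hf).add (h0f_meas hf)).mul
      (((vf_meas hf).pow_const b).mul (Measurable.pow_const ?_ σ))) _
    exact measurable_norm.inv.ennreal_ofReal
  have hzle : ∀ᵐ x, ENNReal.ofReal (Zf (α - σ - β * b) (1 + b) f x) ≤ z x := by
    filter_upwards [hne] with x hx
    exact Zf_le hb hσ f hx
  have hΦ := hiso f hf hc z hzm hzle
  have hzn : nrm (s2 + b * s3) (Sq volume S z) ≤ c0 * (e2 S * ((e2 p⁻¹ * 2 * (1 + CH)) *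
      (e2 (b * q⁻¹ + σ * (n : ℝ)⁻¹) * CI ^ σ)) * (X * Y ^ b)) := by
    refine (nrm_Sq_const hτ c0 _).trans (mul_le_mul' le_rfl ?_)
    have w1 : nrm s2 (Sq volume p⁻¹ (fun x => gf α f x + h0f α f x)) ≤ e2 p⁻¹ * 2 * (1 + CH) * X := by
      refine (nrm_Sq_add hs2 hs21 _ _).trans ?_
      rw [mul_assoc _ (1 + CH), one_add_mul]
      exact mul_le_mul' le_rfl (add_le_add le_rfl hh0)
    have w2 : nrm (b * s3 + σ * 0) (Sq volume (b * q⁻¹ + σ * (n : ℝ)⁻¹)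
        (fun x => vf β f x ^ b * ENNReal.ofReal ‖x‖⁻¹ ^ σ)) ≤
        e2 (b * q⁻¹ + σ * (n : ℝ)⁻¹) * (Y ^ b * CI ^ σ) := by
      refine (nrm_Sq_mul (by positivity) (by simp) _ _).trans (mul_le_mul' le_rfl (mul_le_mul' ?_ ?_))
      · exact nrm_Sq_rpow hs3 hb _
      · exact (nrm_Sq_rpow le_rfl hσ _).trans (ENNReal.rpow_le_rpow hinv hσ)
    have w3 := nrm_Sq_mul (μ := volume) (s := p⁻¹) (t := b * q⁻¹ + σ * (n : ℝ)⁻¹) hs2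
      (τ := b * s3 + σ * 0) (by simp; positivity) (fun x => gf α f x + h0f α f x)
      (fun x => vf β f x ^ b * ENNReal.ofReal ‖x‖⁻¹ ^ σ)
    rw [← add_assoc p⁻¹, ← hS] at w3
    have e1 : s2 + (b * s3 + σ * 0) = s2 + b * s3 := by ring
    rw [e1] at w3
    refine w3.trans ((mul_le_mul' le_rfl (mul_le_mul' w1 w2)).trans (le_of_eq ?_))
    ring
  have hΦ' : nrm (s2 + b * s3) (Sq volume (S - (n : ℝ)⁻¹)
      (fun x => ENNReal.ofReal (Ph (α - σ - β * b) (1 + b) f x))) ≤ K1 * (X * Y ^ b) := by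
    refine hΦ.trans ((mul_le_mul' le_rfl hzn).trans (le_of_eq ?_))
    rw [hK1]; ring
  have hexp : a * s2 + (1 - a) * s3 = A * (s2 + b * s3) + (B * s2 + D * s3) := by
    rw [← hAD, ← hAB]; ring
  have hF : ∀ᵐ x, vf γ f x ≤ ENNReal.ofReal (Ph (α - σ - β * b) (1 + b) f x) ^ A *
      (h0f α f x ^ B * vf β f x ^ D) := by
    filter_upwards [hne] with x hx
    exact F_le hA hB hD (by linarith) hwt f hx
  rw [hexp]
  have p1 : 0 ≤ A * (s2 + b * s3) := by positivity
  have p2 : 0 ≤ B * s2 + D * s3 := by positivity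
  calc _ ≤ _ := nrm_Sq_mono (add_nonneg p1 p2) hF
    _ ≤ _ := nrm_Sq_mul p1 p2 _ _
    _ ≤ e2 (A * (S - (n : ℝ)⁻¹) + (B * p⁻¹ + D * q⁻¹)) * ((K1 * (X * Y ^ b)) ^ A *
        (e2 (B * p⁻¹ + D * q⁻¹) * ((CH * X) ^ B * Y ^ D))) := by
      refine mul_le_mul' le_rfl (mul_le_mul' ?_ ?_)
      · exact (nrm_Sq_rpow hτ hA _).trans (ENNReal.rpow_le_rpow hΦ' hA)
      · refine (nrm_Sq_mul (by positivity) (by positivity) _ _).trans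
          (mul_le_mul' le_rfl (mul_le_mul' ?_ ?_))
        · exact (nrm_Sq_rpow hs2 hB _).trans (ENNReal.rpow_le_rpow hh0 hB)
        · exact nrm_Sq_rpow hs3 hD _
    _ = _ := by
      rw [hc1, ← hAD, ← hAB, ENNReal.rpow_add_of_nonneg _ _ hA hB,
        ENNReal.rpow_add_of_nonneg _ _ (by positivity) hD, ENNReal.mul_rpow_of_nonneg K1 _ hA,
        ENNReal.mul_rpow_of_nonneg X _ hA, ENNReal.mul_rpow_of_nonneg _ _ hB, ← ENNReal.rpow_mul,
        mul_comm b A]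
      ring
end Final

/-- Theorem 2.2 of the paper in the Euclidean case: fully weighted
Caffarelli–Kohn–Nirenberg inequalities in Lorentz norms. -/
theorem stmt_14 (n : ℕ) (hn : 2 ≤ n) (p q r α β γ a : ℝ)
    (hp : 1 < p) (hq : 1 < q) (hr : 1 < r) (hα : 0 < α)
    (ha0 : 0 < a) (ha1 : a ≤ 1)
    (hγ : γ < (n : ℝ) / r) (hβ : β < (n : ℝ) / q)
    (hα1 : 1 - (n : ℝ) / p < α) (hα2 : α < (n : ℝ) / (p / (p - 1)))
    (hbal : γ - (n : ℝ) / r =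
      a * (1 - α - (n : ℝ) / p) + (1 - a) * (β - (n : ℝ) / q))
    (q₁ q₂ q₃ : ℝ≥0∞) (hq₁ : 1 ≤ q₁) (hq₂ : 1 ≤ q₂) (hq₂₃ : q₂ ≤ q₃)
    (hqrel : 1 / q₁ = ENNReal.ofReal a / q₂ + ENNReal.ofReal (1 - a) / q₃)
    (hΔ0 : 0 ≤ γ + a * α - (1 - a) * β) (hΔa : γ + a * α - (1 - a) * β ≤ a) :
    ∃ C : ℝ, 0 < C ∧ ∀ f : EuclideanSpace ℝ (Fin n) → ℝ,
      ContDiff ℝ (⊤ : ℕ∞) f → HasCompactSupport f →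
      lorentz volume (ENNReal.ofReal r) q₁ (fun x => ‖x‖ ^ (-γ) * f x) ≤
        ENNReal.ofReal C *
          lorentz volume (ENNReal.ofReal p) q₂
            (fun x => ‖x‖ ^ α * ‖gradient f x‖) ^ a *
          lorentz volume (ENNReal.ofReal q) q₃ (fun x => ‖x‖ ^ (-β) * f x) ^ (1 - a) := by
  have hn0 : (0:ℝ) < n := by exact_mod_cast (by omega : 0 < n)
  have hn1 : (n:ℝ)⁻¹ < 1 := inv_lt_one_of_one_lt₀ (by exact_mod_cast (by omega : 1 < n))
  have hp0 : 0 < p := by linarith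
  have hq0 : 0 < q := by linarith
  have hr0 : 0 < r := by linarith
  set Δ := γ + a * α - (1 - a) * β with hΔ
  have hir : r⁻¹ = a * p⁻¹ + (1 - a) * q⁻¹ - (a - Δ) * (n : ℝ)⁻¹ := by
    have h1 : n * r⁻¹ = n * (a * p⁻¹ + (1 - a) * q⁻¹) - (a - Δ) := by
      simp only [div_eq_mul_inv] at hbal
      rw [hΔ]; linarith
    have h2 : (n : ℝ) * (n : ℝ)⁻¹ = 1 := mul_inv_cancel₀ hn0.ne'
    apply mul_left_cancel₀ hn0.ne'
    rw [h1]
    linear_combination (a - Δ) * h2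
  obtain ⟨b, σ, A, B, D, hb, hσ, hA, hB, hD, hAB, hAD, hAσ, hS1, hS2⟩ :=
    params ha0 ha1 hΔ0 hΔa (inv_pos.2 hp0) (inv_lt_one_of_one_lt₀ hp) (inv_pos.2 hq0)
      (inv_pos.2 hn0) hn1 (by rw [← hir]; exact inv_pos.2 hr0)
  have hq₃ : 1 ≤ q₃ := hq₂.trans hq₂₃
  have hs21 : q₂.toReal⁻¹ ≤ 1 := by
    rw [← ENNReal.toReal_inv]
    have h1 : q₂⁻¹ ≤ 1 := ENNReal.inv_le_one.2 hq₂
    exact ENNReal.toReal_le_of_le_ofReal zero_le_one (by simpa using h1)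
  have hs1 : q₁.toReal⁻¹ = a * q₂.toReal⁻¹ + (1 - a) * q₃.toReal⁻¹ := by
    have h := congrArg ENNReal.toReal hqrel
    have f2 : q₂⁻¹ ≠ ∞ := ENNReal.inv_ne_top.2 (zero_lt_one.trans_le hq₂).ne'
    have f3 : q₃⁻¹ ≠ ∞ := ENNReal.inv_ne_top.2 (zero_lt_one.trans_le hq₃).ne'
    rw [one_div, div_eq_mul_inv, div_eq_mul_inv,
      ENNReal.toReal_add (ENNReal.mul_ne_top ENNReal.ofReal_ne_top f2)
        (ENNReal.mul_ne_top ENNReal.ofReal_ne_top f3), ENNReal.toReal_mul, ENNReal.toReal_mul,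
      ENNReal.toReal_ofReal ha0.le, ENNReal.toReal_ofReal (by linarith), ENNReal.toReal_inv,
      ENNReal.toReal_inv, ENNReal.toReal_inv] at h
    exact h
  have hwt : A * (α - σ - β * b) + B * (α - 1) - D * β = -γ := by
    have : A * (α - σ - β * b) + B * (α - 1) - D * β =
      (A + B) * α - (A * σ + B) - (A * b + D) * β := by ring
    rw [this, hAB, hAD, hAσ, hΔ]; ring
  obtain ⟨C0, hC0, hcore⟩ := core (n := n) (q := q) (s2 := q₂.toReal⁻¹) (s3 := q₃.toReal⁻¹) hn hp hα hα1
    hb hσ hA hB hD hAB hAD (inv_nonneg.2 ENNReal.toReal_nonneg) hs21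
    (inv_nonneg.2 ENNReal.toReal_nonneg) hwt hS1 hS2
  have hexp : A * (p⁻¹ + b * q⁻¹ + σ * (n : ℝ)⁻¹ - (n : ℝ)⁻¹) + (B * p⁻¹ + D * q⁻¹) = r⁻¹ := by
    rw [hir, ← hAσ, ← hAD, ← hAB]; ring
  rw [hexp, ← hs1] at hcore
  obtain ⟨C2, hC2, hL2⟩ := nrm_le_lorentz (volume : Measure (EuclideanSpace ℝ (Fin n))) hp0 q₂ hq₂
  obtain ⟨C3, hC3, hL3⟩ := nrm_le_lorentz (volume : Measure (EuclideanSpace ℝ (Fin n))) hq0 q₃ hq₃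
  have h1a : 0 ≤ 1 - a := by linarith
  set Cf := e2 r⁻¹ * C0 * (C2 ^ a * C3 ^ (1 - a)) with hCf
  have hCft : Cf ≠ ∞ := ENNReal.mul_ne_top (ENNReal.mul_ne_top (e2_ne_top _) hC0)
    (ENNReal.mul_ne_top (ENNReal.rpow_ne_top_of_nonneg ha0.le hC2)
      (ENNReal.rpow_ne_top_of_nonneg h1a hC3))
  have hCfle : Cf ≤ ENNReal.ofReal (Cf.toReal + 1) := by
    rw [ENNReal.le_ofReal_iff_toReal_le hCft (by positivity)]
    linarith
  refine ⟨Cf.toReal + 1, by positivity, fun f hf hc => ?_⟩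
  have hf1 : ContDiff ℝ 1 f := hf.of_le (by exact_mod_cast le_top)
  have hv : ∀ η : ℝ, vf η f = fun x => ENNReal.ofReal |‖x‖ ^ (-η) * f x| := by
    intro η
    funext x
    rw [vf, abs_mul, abs_of_nonneg (by positivity : (0:ℝ) ≤ ‖x‖ ^ (-η))]
  have hg : gf α f = fun x => ENNReal.ofReal |‖x‖ ^ α * ‖gradient f x‖| := by
    funext x
    rw [gf, abs_of_nonneg (by positivity), gradient, LinearIsometryEquiv.norm_map]
  have a1 := lorentz_le_nrm (volume : Measure (EuclideanSpace ℝ (Fin n))) hr0 q₁ hq₁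
    (fun x => ‖x‖ ^ (-γ) * f x)
  rw [← hv γ] at a1
  have a2 := hL2 _ _ hg
  have a3 := hL3 _ _ (hv β)
  calc _ ≤ _ := a1
    _ ≤ e2 r⁻¹ * (C0 * ((C2 * lorentz volume (ENNReal.ofReal p) q₂
            (fun x => ‖x‖ ^ α * ‖gradient f x‖)) ^ a *
          (C3 * lorentz volume (ENNReal.ofReal q) q₃ (fun x => ‖x‖ ^ (-β) * f x)) ^ (1 - a))) := by
      refine mul_le_mul' le_rfl ((hcore f hf1 hc).trans (mul_le_mul' le_rfl (mul_le_mul' ?_ ?_)))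
      · exact ENNReal.rpow_le_rpow a2 ha0.le
      · exact ENNReal.rpow_le_rpow a3 h1a
    _ = Cf * lorentz volume (ENNReal.ofReal p) q₂
            (fun x => ‖x‖ ^ α * ‖gradient f x‖) ^ a *
          lorentz volume (ENNReal.ofReal q) q₃ (fun x => ‖x‖ ^ (-β) * f x) ^ (1 - a) := by
      rw [hCf, ENNReal.mul_rpow_of_nonneg _ _ ha0.le, ENNReal.mul_rpow_of_nonneg _ _ h1a]
      ring
    _ ≤ _ := mul_le_mul' (mul_le_mul' hCfle le_rfl) le_rfl
end

section
/- Let n ≥ 2, let p, s ≥ 1 and 1 < q₂ ≤ q₃ < ∞ with q₂' = q₂/(q₂-1), let φ(t) = t^{1/n - 1}, and let u, v : ℝⁿ → [0,∞) be locally integrable. Define T f(x) = ∫_{ℝⁿ} |y|^{1-n} f(x - y) dy (convolution with the kernel N(x) = |x|^{1-n}). Assume sup_{t>0} (∫_t^∞ τ^{q₃/s - 1} φ(τ)^{q₃} v*(τ)^{q₃} dτ)^{1/q₃} · (∫₀^t τ^{q₂' - q₂'/p - 1} u*(τ)^{q₂'} dτ)^{1/q₂'} < ∞ and sup_{t>0}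 (∫₀^t τ^{q₃/s - 1} v*(τ)^{q₃} dτ)^{1/q₃} · (∫_t^∞ τ^{q₂' - q₂'/p - 1} u*(τ)^{q₂'} φ(τ)^{q₂'} dτ)^{1/q₂'} < ∞. Then there exists C > 0 such that ‖ v · T(u f) ‖_{s,q₃} ≤ C ‖f‖_{p,q₂} for all measurable f : ℝⁿ → ℝ. -/
open MeasureTheory Set ENNReal

/-- The potential operator `T`: convolution with the kernel `N(x) = |x|^{1-n}`. -/
noncomputable def potl (n : ℕ) (f : EuclideanSpace ℝ (Fin n) → ℝ)
    (x : EuclideanSpace ℝ (Fin n)) : ℝ :=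
  ∫ y, ‖y‖ ^ ((1 : ℝ) - (n : ℝ)) * f (x - y)


theorem aux_tsum_rpow_le {ι : Type*} (a : ι → ℝ≥0∞) {r : ℝ} (hr : 1 ≤ r) :
    ∑' i, a i ^ r ≤ (∑' i, a i) ^ r := by
  have h : ∀ x : ℝ≥0∞, x ^ r = x * x ^ (r - 1) := by
    intro x
    conv_lhs => rw [show r = 1 + (r - 1) by ring]
    rw [ENNReal.rpow_add_of_nonneg _ _ zero_le_one (by linarith), ENNReal.rpow_one]
  calc ∑' i, a i ^ r ≤ ∑' i, a i * (∑' i, a i) ^ (r - 1) := by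
        refine ENNReal.tsum_le_tsum fun i => ?_
        rw [h]
        gcongr
        exact ENNReal.le_tsum i
    _ = (∑' i, a i) ^ r := by rw [ENNReal.tsum_mul_right, ← h]

theorem aux_Ioi (w : ℝ → ℝ≥0∞) (E : Set ℝ) (hE : E ⊆ Ioi 0) (c : ℝ≥0∞)
    (h : ∀ s ∈ E, ∫⁻ x in Ioi s, w x ≤ c) : ∫⁻ x in E, w x ≤ c := by
  rcases E.eq_empty_or_nonempty with rfl | hne
  · simp
  have hbd : BddBelow E := ⟨0, fun x hx => (hE hx).le⟩
  obtain ⟨u, hu1, -, hu2, hu3⟩ := (isGLB_csInf hne hbd).exists_seq_antitone_tendsto hne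
  have hsub : E ⊆ Ici (sInf E) := fun x hx => csInf_le hbd hx
  calc ∫⁻ x in E, w x ≤ ∫⁻ x in Ici (sInf E), w x := lintegral_mono_set hsub
    _ = ∫⁻ x in Ioi (sInf E), w x := by rw [restrict_Ioi_eq_restrict_Ici]
    _ ≤ ∫⁻ x in ⋃ n, Ioi (u n), w x := by
        refine lintegral_mono_set fun x hx => ?_
        obtain ⟨n, hn⟩ := (hu2.eventually (gt_mem_nhds hx)).exists
        exact mem_iUnion.2 ⟨n, hn⟩
    _ = ⨆ n, ∫⁻ x in Ioi (u n), w x := by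
        have hd : Monotone fun n => Ioi (u n) := fun a b hab => Ioi_subset_Ioi (hu1 hab)
        exact setLIntegral_iUnion_of_directed w hd.directed_le
    _ ≤ c := iSup_le fun n => h _ (hu3 n)

theorem aux_Ioc (w : ℝ → ℝ≥0∞) (E : Set ℝ) (hE : E ⊆ Ioi 0) (c : ℝ≥0∞)
    (h : ∀ s ∈ E, ∫⁻ x in Ioc 0 s, w x ≤ c) : ∫⁻ x in E, w x ≤ c := by
  rcases E.eq_empty_or_nonempty with rfl | hne
  · simp
  by_cases hbd : BddAbove E
  · obtain ⟨u, hu1, -, hu2, hu3⟩ := (isLUB_csSup hne hbd).exists_seq_monotone_tendsto hne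
    have hsub : E ⊆ Ioc 0 (sSup E) := fun x hx => ⟨hE hx, le_csSup hbd hx⟩
    calc ∫⁻ x in E, w x ≤ ∫⁻ x in Ioc 0 (sSup E), w x := lintegral_mono_set hsub
      _ = ∫⁻ x in Ioo 0 (sSup E), w x := by rw [restrict_Ioo_eq_restrict_Ioc]
      _ ≤ ∫⁻ x in ⋃ n, Ioc 0 (u n), w x := by
          refine lintegral_mono_set fun x hx => ?_
          obtain ⟨n, hn⟩ := (hu2.eventually (lt_mem_nhds hx.2)).exists
          exact mem_iUnion.2 ⟨n, hx.1, hn.le⟩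
      _ = ⨆ n, ∫⁻ x in Ioc 0 (u n), w x := by
          have hd : Monotone fun n => Ioc 0 (u n) := fun a b hab => Ioc_subset_Ioc_right (hu1 hab)
          exact setLIntegral_iUnion_of_directed w hd.directed_le
      _ ≤ c := iSup_le fun n => h _ (hu3 n)
  · calc ∫⁻ x in E, w x ≤ ∫⁻ x in ⋃ n : ℕ, Ioc (0:ℝ) n, w x := by
          refine lintegral_mono_set fun x hx => ?_
          obtain ⟨n, hn⟩ := exists_nat_ge x
          exact mem_iUnion.2 ⟨n, hE hx, hn⟩
      _ = ⨆ n : ℕ, ∫⁻ x in Ioc (0:ℝ) n, w x := by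
          have hd : Monotone fun n : ℕ => Ioc (0:ℝ) n := fun a b hab =>
            Ioc_subset_Ioc_right (by exact_mod_cast hab)
          exact setLIntegral_iUnion_of_directed w hd.directed_le
      _ ≤ c := iSup_le fun n => by
          rw [not_bddAbove_iff] at hbd
          obtain ⟨y, hy, hyn⟩ := hbd n
          exact (lintegral_mono_set (Ioc_subset_Ioc_right hyn.le)).trans (h y hy)

theorem hardy_abs (S R : ℝ → Set ℝ)
    (hmono : ∀ s x, 0 < s → x ∈ S s → 0 < x ∧ S x ⊆ S s)
    (hS : ∀ (w : ℝ → ℝ≥0∞) (E : Set ℝ), E ⊆ Ioi 0 → ∀ c : ℝ≥0∞,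
      (∀ s ∈ E, ∫⁻ x in S s, w x ≤ c) → ∫⁻ x in E, w x ≤ c)
    (hR : ∀ (w : ℝ → ℝ≥0∞) (E : Set ℝ), E ⊆ Ioi 0 → ∀ c : ℝ≥0∞,
      (∀ s ∈ E, ∫⁻ x in R s, w x ≤ c) → ∫⁻ x in E, w x ≤ c)
    (hmeas : ∀ w : ℝ → ℝ≥0∞, Measurable fun t => ∫⁻ x in S t, w x)
    {p p' q : ℝ} (hpp : p.HolderConjugate p') (hpq : p ≤ q)
    (W U F : ℝ → ℝ≥0∞) (hW : Measurable W) (hU : Measurable U) (hF : Measurable F)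
    (A : ℝ≥0∞) (hA : A ≠ ∞) (hFt : ∫⁻ t in Ioi (0:ℝ), F t ^ p ≠ ∞)
    (h : ∀ t, 0 < t → (∫⁻ x in R t, W x) ^ (1 / q) * (∫⁻ x in S t, U x ^ p') ^ (1 / p') ≤ A) :
    ∫⁻ t in Ioi (0:ℝ), W t * (∫⁻ x in S t, U x * F x) ^ q ≤
      (4 * A) ^ q * (2 * ∫⁻ t in Ioi (0:ℝ), F t ^ p) ^ (q / p) := by
  have hp0 : 0 < p := hpp.pos
  have hq0 : 0 < q := hp0.trans_le hpq
  set G : ℝ → ℝ≥0∞ := fun t => ∫⁻ x in S t, U x * F x with hG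
  have hGm : Measurable G := hmeas _
  -- key bound
  have key : ∀ s, 0 < s → ∀ D : Set ℝ, ∀ m : ℝ≥0∞, m ≤ ∫⁻ x in D ∩ S s, U x * F x →
      m * (∫⁻ x in R s, W x) ^ (1 / q) ≤ A * (∫⁻ x in D ∩ S s, F x ^ p) ^ (1 / p) := by
    intro s hs D m hm
    have h1 : ∫⁻ x in D ∩ S s, U x * F x ≤
        (∫⁻ x in S s, U x ^ p') ^ (1 / p') * (∫⁻ x in D ∩ S s, F x ^ p) ^ (1 / p) := by
      refine (ENNReal.lintegral_mul_le_Lp_mul_Lq _ hpp.symm hU.aemeasurable hF.aemeasurable).trans ?_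
      gcongr
      · have := hpp.symm.pos; positivity
      · exact inter_subset_right
    calc m * (∫⁻ x in R s, W x) ^ (1 / q) ≤ ((∫⁻ x in S s, U x ^ p') ^ (1 / p') * (∫⁻ x in D ∩ S s, F x ^ p) ^ (1 / p)) * (∫⁻ x in R s, W x) ^ (1 / q) := by
          gcongr; exact hm.trans h1
      _ = ((∫⁻ x in R s, W x) ^ (1 / q) * (∫⁻ x in S s, U x ^ p') ^ (1 / p')) * (∫⁻ x in D ∩ S s, F x ^ p) ^ (1 / p) := by ring
      _ ≤ _ := by gcongr; exact h s hs
  let E : ℤ → Set ℝ := fun k => Ioi 0 ∩ {t | (2:ℝ≥0∞) ^ k < G t ∧ G t ≤ 2 ^ (k + 1)}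
  have hEm : ∀ k, MeasurableSet (E k) := fun k =>
    measurableSet_Ioi.inter ((measurableSet_lt measurable_const hGm).inter (measurableSet_le hGm measurable_const))
  let a : ℤ → ℝ≥0∞ := fun k => ∫⁻ t in E k, F t ^ p
  have hdisj : Pairwise (Function.onFun Disjoint E) := by
    have hlt : ∀ i j : ℤ, i < j → Disjoint (E i) (E j) := by
      intro i j hij
      rw [Set.disjoint_left]
      rintro x ⟨-, hx⟩ ⟨-, hy⟩
      have : (2:ℝ≥0∞) ^ (i+1) ≤ 2 ^ j := ENNReal.zpow_le_of_le (by norm_num) (by omega)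
      exact absurd (hy.1.trans_le (hx.2.trans this)) (lt_irrefl _)
    intro i j hij
    rcases lt_or_gt_of_ne hij with h | h
    · exact hlt _ _ h
    · exact (hlt _ _ h).symm
  have hsum : ∑' k, a k ≤ ∫⁻ t in Ioi (0:ℝ), F t ^ p := by
    rw [← lintegral_iUnion hEm hdisj]
    exact lintegral_mono_set (iUnion_subset fun k => inter_subset_left)
  have htop : ∫⁻ t in Ioi 0 ∩ {t | G t = ∞}, W t = 0 := by
    rw [← nonpos_iff_eq_zero]
    refine hR W _ inter_subset_left _ ?_
    rintro s ⟨hs0, hs1⟩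
    have hs1' : G s = ∞ := hs1
    have h1 := key s hs0 univ ∞ (by rw [univ_inter]; exact hs1'.ge)
    have h2 : A * (∫⁻ x in univ ∩ S s, F x ^ p) ^ (1 / p) ≠ ∞ := by
      refine ENNReal.mul_ne_top hA (ENNReal.rpow_ne_top_of_nonneg (by positivity) ?_)
      refine ne_top_of_le_ne_top hFt (lintegral_mono_set ?_)
      rintro x ⟨-, hx⟩
      exact (hmono s x hs0 hx).1
    by_contra hne
    have h3 : (∫⁻ x in R s, W x) ^ (1 / q) ≠ 0 := by
      intro h0
      rw [ENNReal.rpow_eq_zero_iff_of_pos (by positivity)] at h0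
      exact hne h0.le
    rw [ENNReal.top_mul h3] at h1
    exact h2 (top_le_iff.1 h1)
  have hEk : ∀ k, ∫⁻ t in E k, W t * G t ^ q ≤ (4 * A) ^ q * (a (k - 1) + a k) ^ (q / p) := by
    intro k
    set m : ℝ≥0∞ := 2 ^ (k - 1) with hm
    have hm0 : m ≠ 0 := (ENNReal.zpow_pos (by norm_num) (by norm_num) _).ne'
    have hmt : m ≠ ∞ := (ENNReal.zpow_lt_top (by norm_num) (by norm_num) _).ne
    have h2 : (2:ℝ≥0∞) ^ k = m + m := by
      rw [hm, ← two_mul]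
      conv_lhs => rw [show k = 1 + (k - 1) by ring]
      rw [ENNReal.zpow_add (by norm_num) (by norm_num), zpow_one]
    have h4 : (2:ℝ≥0∞) ^ (k + 1) = 4 * m := by
      rw [ENNReal.zpow_add (by norm_num) (by norm_num), zpow_one, h2]; ring
    have hWE : ∫⁻ t in E k, W t ≤ (A * (a (k - 1) + a k) ^ (1 / p) / m) ^ q := by
      refine hR W (E k) inter_subset_left _ ?_
      rintro s ⟨hs0, hs1, hs2⟩
      have hlow : m ≤ ∫⁻ x in {x | m < G x} ∩ S s, U x * F x := by
        have hsplit := lintegral_inter_add_sdiff (μ := volume) (fun x => U x * F x) (S s)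
          (measurableSet_lt measurable_const hGm : MeasurableSet {x | m < G x})
        have hc : ∫⁻ x in S s \ {x | m < G x}, U x * F x ≤ m := by
          refine hS _ _ (fun x hx => (hmono s x hs0 hx.1).1) _ ?_
          rintro x ⟨-, hx⟩
          exact not_lt.1 hx
        have : m + m ≤ (∫⁻ x in {x | m < G x} ∩ S s, U x * F x) + m := by
          rw [← h2, inter_comm]
          refine hs1.le.trans ?_
          change ∫⁻ x in S s, U x * F x ≤ _
          rw [← hsplit]
          gcongr
        exact (ENNReal.add_le_add_iff_right hmt).1 this
      have h3 := key s hs0 _ m hlow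
      have h5 : ∫⁻ x in {x | m < G x} ∩ S s, F x ^ p ≤ a (k - 1) + a k := by
        refine le_trans (lintegral_mono_set ?_) (lintegral_union_le _ (E (k-1)) (E k))
        rintro x ⟨hx1, hx2⟩
        have hx := hmono s x hs0 hx2
        have hx3 : G x ≤ 2 ^ (k + 1) := (lintegral_mono_set hx.2).trans hs2
        rcases le_or_gt (G x) (2 ^ k) with h6 | h6
        · left; exact ⟨hx.1, hx1, by simpa using h6⟩
        · right; exact ⟨hx.1, h6, hx3⟩
      have h6 : (∫⁻ x in R s, W x) ^ (1 / q) ≤ A * (a (k - 1) + a k) ^ (1 / p) / m := by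
        rw [ENNReal.le_div_iff_mul_le (Or.inl hm0) (Or.inl hmt), mul_comm]
        refine h3.trans ?_
        gcongr
      have h7 := ENNReal.rpow_le_rpow h6 hq0.le
      rwa [← ENNReal.rpow_mul, one_div_mul_cancel hq0.ne', ENNReal.rpow_one] at h7
    calc ∫⁻ t in E k, W t * G t ^ q ≤ ∫⁻ t in E k, W t * (4 * m) ^ q := by
          refine setLIntegral_mono' (hEm k) fun t ht => ?_
          gcongr
          exact h4 ▸ ht.2.2
      _ = (∫⁻ t in E k, W t) * (4 * m) ^ q := by
          rw [lintegral_mul_const' _ _ (ENNReal.rpow_ne_top_of_nonneg hq0.le (by finiteness))]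
      _ ≤ (A * (a (k - 1) + a k) ^ (1 / p) / m) ^ q * (4 * m) ^ q := by gcongr
      _ = (4 * A) ^ q * (a (k - 1) + a k) ^ (q / p) := by
          rw [← ENNReal.mul_rpow_of_nonneg _ _ hq0.le, show q / p = 1 / p * q by ring,
            ENNReal.rpow_mul, ← ENNReal.mul_rpow_of_nonneg _ _ hq0.le]
          congr 1
          calc A * (a (k - 1) + a k) ^ (1 / p) / m * (4 * m) = 4 * (A * (a (k - 1) + a k) ^ (1 / p)) * (m⁻¹ * m) := by
                rw [div_eq_mul_inv]; ring
            _ = _ := by rw [ENNReal.inv_mul_cancel hm0 hmt]; ring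
  have hcover : Ioi (0:ℝ) ⊆ (Ioi 0 ∩ {t | G t = 0}) ∪ ((Ioi 0 ∩ {t | G t = ∞}) ∪ ⋃ k, E k) := by
    intro t ht
    by_cases h0 : G t = 0
    · left; exact ⟨ht, h0⟩
    by_cases h1 : G t = ∞
    · right; left; exact ⟨ht, h1⟩
    right; right
    obtain ⟨k, hk⟩ := ENNReal.exists_mem_Ioc_zpow h0 h1 (y := 2) (by norm_num) (by norm_num)
    exact mem_iUnion.2 ⟨k, ht, hk.1, hk.2⟩
  calc ∫⁻ t in Ioi (0:ℝ), W t * G t ^ q ≤ (∫⁻ t in Ioi 0 ∩ {t | G t = 0}, W t * G t ^ q) +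
        ((∫⁻ t in Ioi 0 ∩ {t | G t = ∞}, W t * G t ^ q) + ∫⁻ t in ⋃ k, E k, W t * G t ^ q) := by
        refine (lintegral_mono_set hcover).trans ((lintegral_union_le _ _ _).trans ?_)
        gcongr
        exact lintegral_union_le _ _ _
    _ ≤ 0 + (0 + ∑' k, ∫⁻ t in E k, W t * G t ^ q) := by
        gcongr
        · refine (setLIntegral_mono' (measurableSet_Ioi.inter (hGm (measurableSet_singleton _))) (g := fun _ => 0) ?_).trans (by simp)
          rintro t ⟨-, ht⟩
          have : G t = 0 := ht
          simp [this, hq0]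
        · refine (setLIntegral_mono' (measurableSet_Ioi.inter (hGm (measurableSet_singleton _))) (g := fun t => W t * ∞) ?_).trans ?_
          · intro t ht
            gcongr
            exact le_top
          · rw [lintegral_mul_const _ hW]
            change (∫⁻ t in Ioi 0 ∩ {t | G t = ∞}, W t) * ∞ ≤ 0
            rw [htop, zero_mul]
        · exact lintegral_iUnion_le _ _
    _ ≤ ∑' k, (4 * A) ^ q * (a (k - 1) + a k) ^ (q / p) := by
        simpa using ENNReal.tsum_le_tsum hEk
    _ = (4 * A) ^ q * ∑' k, (a (k - 1) + a k) ^ (q / p) := ENNReal.tsum_mul_left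
    _ ≤ (4 * A) ^ q * (∑' k, (a (k - 1) + a k)) ^ (q / p) := by
        gcongr
        exact aux_tsum_rpow_le _ ((one_le_div hp0).2 hpq)
    _ ≤ _ := by
        gcongr
        rw [ENNReal.tsum_add, two_mul]
        gcongr
        have := (Equiv.subRight (1:ℤ)).tsum_eq a
        simp only [Equiv.subRight_apply] at this
        rw [this]
        exact hsum

/-- Decreasing rearrangement of an extended nonnegative function. -/
noncomputable def rE {α : Type*} [MeasurableSpace α] (μ : Measure α)
    (F : α → ℝ≥0∞) (t : ℝ) : ℝ≥0∞ :=
  sInf {l : ℝ≥0∞ | 0 < l ∧ μ {x | l < F x} ≤ ENNReal.ofReal t}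

theorem rearr_eq_rE {α : Type*} [MeasurableSpace α] (μ : Measure α)
    (f : α → ℝ) (t : ℝ) : rearr μ f t = rE μ (fun x => ENNReal.ofReal |f x|) t := rfl

theorem rE_le_iff {α : Type*} [MeasurableSpace α] (μ : Measure α)
    (F : α → ℝ≥0∞) (t : ℝ) (l : ℝ≥0∞) :
    rE μ F t ≤ l ↔ μ {x | l < F x} ≤ ENNReal.ofReal t := by
  constructor
  · intro h
    by_cases hl : l = ∞
    · simp [hl]
    obtain ⟨w, hw1, hw2, hw3⟩ := exists_seq_strictAnti_tendsto' (lt_top_iff_ne_top.2 hl)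
    have hU : {x | l < F x} = ⋃ n, {x | w n < F x} := by
      ext x
      simp only [mem_ofPred_eq, mem_iUnion]
      constructor
      · intro hx
        exact (hw3.eventually (gt_mem_nhds hx)).exists
      · rintro ⟨n, hn⟩
        exact (hw2 n).1.trans hn
    have hd : Monotone fun n => {x | w n < F x} := fun a b hab x hx =>
      (hw1.antitone hab).trans_lt hx
    rw [hU, hd.measure_iUnion]
    refine iSup_le fun n => ?_
    obtain ⟨l', ⟨-, h1⟩, h2⟩ := sInf_lt_iff.1 (h.trans_lt (hw2 n).1)
    exact (measure_mono fun x hx => h2.trans hx).trans h1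
  · intro h
    refine le_of_forall_gt_imp_ge_of_dense fun l' hl' => sInf_le ⟨pos_of_gt hl', ?_⟩
    exact (measure_mono fun x hx => hl'.trans hx).trans h

theorem rE_meas {α : Type*} [MeasurableSpace α] (μ : Measure α)
    (F : α → ℝ≥0∞) (t : ℝ) : μ {x | rE μ F t < F x} ≤ ENNReal.ofReal t :=
  (rE_le_iff μ F t _).1 le_rfl

theorem rE_anti {α : Type*} [MeasurableSpace α] (μ : Measure α)
    (F : α → ℝ≥0∞) : Antitone (rE μ F) := by
  intro a b hab
  rw [rE_le_iff]
  exact (rE_meas μ F a).trans (ENNReal.ofReal_le_ofReal hab)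

theorem rE_mono {α : Type*} [MeasurableSpace α] (μ : Measure α)
    {F G : α → ℝ≥0∞} (h : ∀ᵐ x ∂μ, F x ≤ G x) (t : ℝ) : rE μ F t ≤ rE μ G t := by
  rw [rE_le_iff]
  refine (measure_mono_ae ?_).trans (rE_meas μ G t)
  filter_upwards [h] with x hx h2
  exact lt_of_lt_of_le h2 hx

theorem rE_mul {α : Type*} [MeasurableSpace α] (μ : Measure α)
    (F G : α → ℝ≥0∞) {a b : ℝ} (ha : 0 ≤ a) (hb : 0 ≤ b) :
    rE μ (fun x => F x * G x) (a + b) ≤ rE μ F a * rE μ G b := by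
  rw [rE_le_iff, ENNReal.ofReal_add ha hb]
  refine le_trans (measure_mono ?_) ((measure_union_le _ _).trans
    (add_le_add (rE_meas μ F a) (rE_meas μ G b)))
  intro x hx
  by_contra hc
  simp only [mem_union, mem_ofPred_eq, not_or, not_lt] at hc hx
  exact absurd hx (not_lt.2 (mul_le_mul' hc.1 hc.2))

theorem rE_measurable {α : Type*} [MeasurableSpace α] (μ : Measure α)
    (F : α → ℝ≥0∞) : Measurable (rE μ F) := (rE_anti μ F).measurable

theorem aux_int_rpow {a M : ℝ} (ha : 0 < a) (hM : 0 ≤ M) :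
    ∫⁻ τ in Ioc 0 M, ENNReal.ofReal (a * τ ^ (a - 1)) = ENNReal.ofReal (M ^ a) := by
  have hint : IntervalIntegrable (fun τ : ℝ => a * τ ^ (a - 1)) volume 0 M :=
    (intervalIntegral.intervalIntegrable_rpow' (by linarith)).const_mul a
  rw [← ofReal_integral_eq_lintegral_ofReal hint.1, ← intervalIntegral.integral_of_le hM,
    intervalIntegral.integral_const_mul, integral_rpow (Or.inl (by linarith))]
  · congr 1
    rw [sub_add_cancel, Real.zero_rpow ha.ne']
    field_simp
    ring
  · filter_upwards [ae_restrict_mem measurableSet_Ioc] with τ hτ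
    have := hτ.1
    simp only [Pi.zero_apply]
    positivity

theorem aux_rpow_le {a : ℝ} (ha : 0 < a) (m : ℝ≥0∞) :
    m ^ a ≤ ∫⁻ τ in Ioi (0:ℝ), ENNReal.ofReal (a * τ ^ (a - 1)) *
      ({τ | ENNReal.ofReal τ < m} : Set ℝ).indicator 1 τ := by
  refine ENNReal.le_of_forall_nnreal_lt fun r hr => ?_
  have h1 : ((r ^ (1 / a) : NNReal) : ℝ≥0∞) < m := by
    rw [ENNReal.coe_rpow_of_nonneg _ (by positivity)]
    rwa [one_div, ENNReal.rpow_inv_lt_iff ha]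
  calc (r : ℝ≥0∞) = ENNReal.ofReal (((r ^ (1 / a) : NNReal) : ℝ) ^ a) := by
        rw [← NNReal.coe_rpow, ← NNReal.rpow_mul, one_div_mul_cancel ha.ne', NNReal.rpow_one,
          ENNReal.ofReal_coe_nnreal]
    _ = ∫⁻ τ in Ioc 0 ((r ^ (1 / a) : NNReal) : ℝ), ENNReal.ofReal (a * τ ^ (a - 1)) :=
        (aux_int_rpow ha (NNReal.coe_nonneg _)).symm
    _ ≤ ∫⁻ τ in Ioc 0 ((r ^ (1 / a) : NNReal) : ℝ), ENNReal.ofReal (a * τ ^ (a - 1)) *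
      ({τ | ENNReal.ofReal τ < m} : Set ℝ).indicator 1 τ := by
        refine setLIntegral_mono' measurableSet_Ioc fun τ hτ => ?_
        rw [indicator_of_mem]
        · simp
        · refine lt_of_le_of_lt ?_ h1
          rw [← ENNReal.ofReal_coe_nnreal]
          exact ENNReal.ofReal_le_ofReal hτ.2
    _ ≤ _ := lintegral_mono_set Ioc_subset_Ioi_self

theorem aux_distrib {α : Type*} [MeasurableSpace α] (μ : Measure α) (g : α → ℝ)
    (hg : ∀ x, 0 ≤ g x) {a : ℝ} (ha : 0 < a) :
    ∫⁻ l in Ioi (0:ℝ), (μ {x | l < g x}) ^ a ≤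
      ∫⁻ τ in Ioi (0:ℝ), ENNReal.ofReal (a * τ ^ (a - 1)) * rearr μ g τ := by
  have hanti : Antitone fun l : ℝ => μ {x | l < g x} := fun a b hab =>
    measure_mono fun x hx => lt_of_le_of_lt hab hx
  calc ∫⁻ l in Ioi (0:ℝ), (μ {x | l < g x}) ^ a
      ≤ ∫⁻ l in Ioi (0:ℝ), ∫⁻ τ in Ioi (0:ℝ), ENNReal.ofReal (a * τ ^ (a - 1)) *
      ({q : ℝ × ℝ | ENNReal.ofReal q.2 < μ {x | q.1 < g x}} : Set (ℝ × ℝ)).indicator 1 (l, τ) :=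
        lintegral_mono fun l => aux_rpow_le ha _
    _ = ∫⁻ τ in Ioi (0:ℝ), ∫⁻ l in Ioi (0:ℝ), ENNReal.ofReal (a * τ ^ (a - 1)) *
      ({q : ℝ × ℝ | ENNReal.ofReal q.2 < μ {x | q.1 < g x}} : Set (ℝ × ℝ)).indicator 1 (l, τ) := by
        refine lintegral_lintegral_swap (Measurable.aemeasurable ?_)
        refine Measurable.mul (by fun_prop) ?_
        refine (measurable_one.indicator ?_)
        exact measurableSet_lt (by fun_prop) (hanti.measurable.comp measurable_fst)
    _ ≤ _ := by
        refine setLIntegral_mono' measurableSet_Ioi fun τ hτ => ?_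
        rw [lintegral_const_mul' _ _ ENNReal.ofReal_ne_top]
        gcongr
        have hms : MeasurableSet {l : ℝ | ENNReal.ofReal τ < μ {x | l < g x}} :=
          measurableSet_lt measurable_const hanti.measurable
        calc ∫⁻ l in Ioi (0:ℝ), ({q : ℝ × ℝ | ENNReal.ofReal q.2 < μ {x | q.1 < g x}} : Set (ℝ × ℝ)).indicator 1 (l, τ)
            = ∫⁻ l in Ioi (0:ℝ), ({l : ℝ | ENNReal.ofReal τ < μ {x | l < g x}} : Set ℝ).indicator 1 l := rfl
          _ = volume ({l : ℝ | ENNReal.ofReal τ < μ {x | l < g x}} ∩ Ioi 0) := by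
              rw [lintegral_indicator_one hms, Measure.restrict_apply hms]
          _ ≤ rearr μ g τ := by
              by_cases hT : rearr μ g τ = ∞
              · rw [hT]; exact le_top
              refine (measure_mono (t := Ioc 0 (rearr μ g τ).toReal) ?_).trans ?_
              · rintro l ⟨hl1, hl2⟩
                refine ⟨hl2, ?_⟩
                rw [← ENNReal.ofReal_le_iff_le_toReal hT]
                by_contra hc
                push Not at hc
                have := (rE_le_iff μ _ τ _).1 hc.le
                refine absurd hl1 (not_lt.2 (le_trans (measure_mono ?_) this))
                intro x hx
                simp only [mem_ofPred_eq] at hx ⊢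
                rw [abs_of_nonneg (hg x)]
                exact (ENNReal.ofReal_lt_ofReal_iff (lt_trans hl2 hx)).2 hx
              · rw [Real.volume_Ioc, sub_zero, ENNReal.ofReal_toReal hT]

theorem kernel_bound (n : ℕ) (hn : 2 ≤ n) : ∃ c : ℝ≥0∞, 1 ≤ c ∧ c ≠ ∞ ∧
    ∀ E : Set (EuclideanSpace ℝ (Fin n)), MeasurableSet E →
      ∫⁻ y in E, ENNReal.ofReal (‖y‖ ^ ((1:ℝ) - n)) ≤ c * volume E ^ ((1:ℝ) / n) := by
  have hn' : (2:ℝ) ≤ n := by exact_mod_cast hn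
  have hn1 : (1:ℝ) - n < 0 := by linarith
  set ω : ℝ≥0∞ := volume (Metric.ball (0 : EuclideanSpace ℝ (Fin n)) 1) with hω
  have hωt : ω ≠ ∞ := measure_ball_lt_top.ne
  refine ⟨1 + ENNReal.ofReal (n - 1) * ω, le_self_add, by finiteness, fun E hE => ?_⟩
  by_cases hE0 : volume E = 0
  · rw [setLIntegral_measure_zero _ _ hE0]; exact zero_le
  by_cases hEt : volume E = ∞
  · rw [hEt, ENNReal.top_rpow_of_pos (by positivity), ENNReal.mul_top (by simp)]
    exact le_top
  obtain ⟨M, hM0, hM⟩ : ∃ M : ℝ, 0 < M ∧ volume E = ENNReal.ofReal M :=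
    ⟨(volume E).toReal, ENNReal.toReal_pos hE0 hEt, (ENNReal.ofReal_toReal hEt).symm⟩
  set L : ℝ := M ^ ((1:ℝ) / n - 1) with hL
  have hL0 : 0 < L := by positivity
  have hexp : (n:ℝ) / (1 - n) < -1 := by
    rw [div_lt_iff_of_neg hn1]; linarith
  rw [lintegral_eq_lintegral_meas_lt (volume.restrict E)
    (Filter.Eventually.of_forall fun y => by simp only [Pi.zero_apply]; positivity)
    (Measurable.aemeasurable (by fun_prop)), ← Ioc_union_Ioi_eq_Ioi hL0.le]
  refine (lintegral_union_le _ _ _).trans ?_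
  rw [add_mul, one_mul]
  gcongr
  · calc ∫⁻ t in Ioc 0 L, (volume.restrict E) {a | t < ‖a‖ ^ ((1:ℝ) - n)}
        ≤ ∫⁻ t in Ioc 0 L, ENNReal.ofReal M := by
          refine lintegral_mono fun t => ?_
          refine (measure_mono (subset_univ _)).trans ?_
          rw [Measure.restrict_apply_univ, hM]
      _ = ENNReal.ofReal M * ENNReal.ofReal L := by
          rw [setLIntegral_const, Real.volume_Ioc, sub_zero]
      _ = volume E ^ ((1:ℝ) / n) := by
          rw [hM, ENNReal.ofReal_rpow_of_pos hM0, ← ENNReal.ofReal_mul hM0.le, hL]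
          congr 1
          rw [Real.rpow_sub_one hM0.ne']
          field_simp
  · calc ∫⁻ t in Ioi L, (volume.restrict E) {a | t < ‖a‖ ^ ((1:ℝ) - n)}
        ≤ ∫⁻ t in Ioi L, ENNReal.ofReal (t ^ ((n:ℝ) / (1 - n))) * ω := by
          refine setLIntegral_mono' measurableSet_Ioi fun t ht => ?_
          have ht0 : 0 < t := hL0.trans ht
          refine (Measure.restrict_apply_le _ _).trans ?_
          calc volume {a : EuclideanSpace ℝ (Fin n) | t < ‖a‖ ^ ((1:ℝ) - n)}
              ≤ volume (Metric.ball (0 : EuclideanSpace ℝ (Fin n)) (t ^ (1 / ((1:ℝ) - n)))) := by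
                refine measure_mono fun y hy => ?_
                rw [mem_ball_zero_iff]
                rcases (norm_nonneg y).eq_or_lt with h0 | h0
                · rw [← h0]; positivity
                · have h1 := Real.rpow_lt_rpow_of_neg ht0 hy (z := 1 / ((1:ℝ) - n)) (one_div_neg.2 hn1)
                  rwa [← Real.rpow_mul h0.le, mul_one_div_cancel hn1.ne, Real.rpow_one] at h1
            _ = _ := by
                rw [Measure.addHaar_ball_of_pos _ _ (by positivity), finrank_euclideanSpace_fin,
                  ← Real.rpow_natCast, ← Real.rpow_mul ht0.le]
                congr 3
                ring
      _ = (∫⁻ t in Ioi L, ENNReal.ofReal (t ^ ((n:ℝ) / (1 - n)))) * ω := by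
          rw [lintegral_mul_const' _ _ hωt]
      _ = ENNReal.ofReal (n - 1) * ω * volume E ^ ((1:ℝ) / n) := by
          rw [← ofReal_integral_eq_lintegral_ofReal (integrableOn_Ioi_rpow_of_lt hexp hL0),
            integral_Ioi_rpow_of_lt hexp hL0, hM, ENNReal.ofReal_rpow_of_pos hM0]
          · rw [mul_right_comm, ← ENNReal.ofReal_mul (by linarith)]
            congr 2
            have e1 : (n:ℝ) / (1 - n) + 1 = 1 / (1 - n) := by
              have := hn1.ne
              field_simp
              ring
            have e2 : ((1:ℝ) / n - 1) * (1 / (1 - n)) = 1 / n := by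
              have := hn1.ne
              field_simp
            rw [e1, hL, ← Real.rpow_mul hM0.le, e2]
            have := hn1.ne
            field_simp
            ring
          · filter_upwards [ae_restrict_mem measurableSet_Ioi] with t ht
            have : 0 < t := hL0.trans ht
            simp only [Pi.zero_apply]
            positivity

theorem aux_rpow_nonpos {x y : ℝ≥0∞} {z : ℝ} (hz : z ≤ 0) (h : x ≤ y) : y ^ z ≤ x ^ z := by
  have e : ∀ w : ℝ≥0∞, w ^ z = (w ^ (-z))⁻¹ := fun w => by rw [← ENNReal.rpow_neg, neg_neg]
  rw [e x, e y, ENNReal.inv_le_inv]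
  exact ENNReal.rpow_le_rpow h (by linarith)

/-- Convolution with the kernel, as an extended nonnegative function. -/
noncomputable def kconv (n : ℕ) (g : EuclideanSpace ℝ (Fin n) → ℝ)
    (x : EuclideanSpace ℝ (Fin n)) : ℝ≥0∞ :=
  ∫⁻ y, ENNReal.ofReal (‖y‖ ^ ((1:ℝ) - n)) * ENNReal.ofReal (g (x - y))

theorem kconv_measurable (n : ℕ) (g : EuclideanSpace ℝ (Fin n) → ℝ) (hg : Measurable g) :
    Measurable (kconv n g) := by
  unfold kconv
  refine Measurable.lintegral_prod_right' (f := fun q : EuclideanSpace ℝ (Fin n) × EuclideanSpace ℝ (Fin n) =>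
    ENNReal.ofReal (‖q.2‖ ^ ((1:ℝ) - n)) * ENNReal.ofReal (g (q.1 - q.2))) ?_
  fun_prop

theorem kconv_sup (n : ℕ) (c : ℝ≥0∞) (hct : c ≠ ∞)
    (hc : ∀ E : Set (EuclideanSpace ℝ (Fin n)), MeasurableSet E →
      ∫⁻ y in E, ENNReal.ofReal (‖y‖ ^ ((1:ℝ) - n)) ≤ c * volume E ^ ((1:ℝ) / n))
    (g : EuclideanSpace ℝ (Fin n) → ℝ) (hg : Measurable g) (hg0 : ∀ x, 0 ≤ g x)
    (x : EuclideanSpace ℝ (Fin n)) :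
    kconv n g x ≤ c * ∫⁻ l in Ioi (0:ℝ), (volume {x | l < g x}) ^ ((1:ℝ) / n) := by
  have hk : Measurable fun y : EuclideanSpace ℝ (Fin n) => ENNReal.ofReal (‖y‖ ^ ((1:ℝ) - n)) := by
    fun_prop
  have hgx : Measurable fun y => g (x - y) := by fun_prop
  have h1 : kconv n g x = ∫⁻ y, ENNReal.ofReal (g (x - y)) ∂(volume.withDensity
      fun y : EuclideanSpace ℝ (Fin n) => ENNReal.ofReal (‖y‖ ^ ((1:ℝ) - n))) := by
    rw [lintegral_withDensity_eq_lintegral_mul _ hk hgx.ennreal_ofReal]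
    rfl
  rw [h1, lintegral_eq_lintegral_meas_lt _ (Filter.Eventually.of_forall fun y => hg0 _)
    hgx.aemeasurable, ← lintegral_const_mul' _ _ hct]
  refine lintegral_mono fun l => ?_
  have hms : MeasurableSet {y | l < g (x - y)} := measurableSet_lt measurable_const hgx
  simp only
  rw [withDensity_apply _ hms]
  refine (hc _ hms).trans (le_of_eq ?_)
  have hms2 : MeasurableSet {y | l < g y} := measurableSet_lt measurable_const hg
  have := (Measure.measurePreserving_sub_left (volume : Measure (EuclideanSpace ℝ (Fin n))) x).measure_preimage
    hms2.nullMeasurableSet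
  rw [← this]
  rfl

theorem kconv_weak (n : ℕ) (hn : 2 ≤ n) (c : ℝ≥0∞) (hc1 : 1 ≤ c) (hct : c ≠ ∞)
    (hc : ∀ E : Set (EuclideanSpace ℝ (Fin n)), MeasurableSet E →
      ∫⁻ y in E, ENNReal.ofReal (‖y‖ ^ ((1:ℝ) - n)) ≤ c * volume E ^ ((1:ℝ) / n))
    (g : EuclideanSpace ℝ (Fin n) → ℝ) (hg : Measurable g) 
    (t : ℝ) (ht : 0 < t) :
    rE volume (kconv n g) t ≤ c * (ENNReal.ofReal (t ^ ((1:ℝ) / n - 1)) * ∫⁻ x, ENNReal.ofReal (g x)) := by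
  have hn' : (2:ℝ) ≤ n := by exact_mod_cast hn
  have hexp : (1:ℝ) / n - 1 ≤ 0 := by
    rw [sub_nonpos, div_le_one (by linarith)]; linarith
  set I := ∫⁻ x, ENNReal.ofReal (g x) with hI
  refine le_of_forall_gt_imp_ge_of_dense fun l hl => ?_
  rw [rE_le_iff]
  have hKm := kconv_measurable n g hg
  have hU : {x | l < kconv n g x} = ⋃ N : ℕ, ({x | l < kconv n g x} ∩ Metric.ball 0 N) := by
    rw [← inter_iUnion, Metric.iUnion_ball_nat, inter_univ]
  have hd : Monotone fun N : ℕ => ({x | l < kconv n g x} ∩ Metric.ball 0 N) := fun a b hab =>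
    inter_subset_inter_right _ (Metric.ball_subset_ball (by exact_mod_cast hab))
  rw [hU, hd.measure_iUnion]
  refine iSup_le fun N => ?_
  set E := {x | l < kconv n g x} ∩ Metric.ball 0 N with hE
  have hEm : MeasurableSet E := (measurableSet_lt measurable_const hKm).inter measurableSet_ball
  have hEt : volume E ≠ ∞ := ((measure_mono inter_subset_right).trans_lt measure_ball_lt_top).ne
  by_contra hcon
  push Not at hcon
  have hE0 : volume E ≠ 0 := (pos_of_gt hcon).ne'
  have h1 : l * volume E ≤ (c * volume E ^ ((1:ℝ) / n)) * I := by
    calc l * volume E = ∫⁻ x in E, l := by rw [setLIntegral_const]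
      _ ≤ ∫⁻ x in E, kconv n g x := setLIntegral_mono' hEm fun x hx => hx.1.le
      _ = ∫⁻ x in E, ∫⁻ z, ENNReal.ofReal (‖x - z‖ ^ ((1:ℝ) - n)) * ENNReal.ofReal (g z) := by
          refine lintegral_congr fun x => ?_
          unfold kconv
          rw [← lintegral_sub_left_eq_self _ x]
          simp
      _ = ∫⁻ z, ∫⁻ x in E, ENNReal.ofReal (‖x - z‖ ^ ((1:ℝ) - n)) * ENNReal.ofReal (g z) := by
          refine lintegral_lintegral_swap (Measurable.aemeasurable ?_)
          fun_prop
      _ ≤ ∫⁻ z, (c * volume E ^ ((1:ℝ) / n)) * ENNReal.ofReal (g z) := by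
          refine lintegral_mono fun z => ?_
          simp only
          rw [lintegral_mul_const' _ _ ENNReal.ofReal_ne_top]
          gcongr
          have hmp := measurePreserving_add_right (volume : Measure (EuclideanSpace ℝ (Fin n))) z
          have hms : MeasurableSet ((fun y => y + z) ⁻¹' E) := hmp.measurable hEm
          have h2 := hc _ hms
          rw [hmp.measure_preimage hEm.nullMeasurableSet] at h2
          refine le_trans (le_of_eq ?_) h2
          rw [← hmp.setLIntegral_comp_preimage hEm (by fun_prop)]
          simp
      _ = _ := by
          rw [lintegral_const_mul' _ _ (by finiteness)]
  have h3 : l ≤ c * (volume E ^ ((1:ℝ) / n - 1) * I) := by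
    rw [ENNReal.rpow_sub _ _ hE0 hEt, ENNReal.rpow_one]
    rw [← ENNReal.le_div_iff_mul_le (Or.inl hE0) (Or.inl hEt)] at h1
    refine h1.trans (le_of_eq ?_)
    simp only [div_eq_mul_inv]
    ring
  refine absurd hl (not_lt.2 (h3.trans ?_))
  rw [← ENNReal.ofReal_rpow_of_pos ht]
  gcongr c * (?_ * I)
  exact aux_rpow_nonpos hexp hcon.le

theorem oneil (n : ℕ) (hn : 2 ≤ n) : ∃ c : ℝ≥0∞, c ≠ ∞ ∧
    ∀ g : EuclideanSpace ℝ (Fin n) → ℝ, Measurable g → (∀ x, 0 ≤ g x) → ∀ t : ℝ, 0 < t →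
    rE volume (kconv n g) t ≤ c * (ENNReal.ofReal (t ^ ((1:ℝ) / n - 1)) *
        (∫⁻ τ in Ioc 0 t, rearr volume g τ) +
      ∫⁻ τ in Ioi t, rearr volume g τ * ENNReal.ofReal (τ ^ ((1:ℝ) / n - 1))) := by
  obtain ⟨c, hc1, hct, hc⟩ := kernel_bound n hn
  have hn' : (2:ℝ) ≤ n := by exact_mod_cast hn
  refine ⟨2 * c, by finiteness, fun g hg hg0 t ht => ?_⟩
  set G := rearr volume g t with hG
  set P := ENNReal.ofReal (t ^ ((1:ℝ) / n - 1)) with hP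
  have hP0 : P ≠ 0 := by
    rw [hP]; exact (ENNReal.ofReal_pos.2 (by positivity)).ne'
  have hGt : ENNReal.ofReal t * G ≤ ∫⁻ τ in Ioc 0 t, rearr volume g τ := by
    calc ENNReal.ofReal t * G = ∫⁻ τ in Ioc 0 t, G := by
          rw [setLIntegral_const, Real.volume_Ioc, sub_zero, mul_comm]
      _ ≤ _ := setLIntegral_mono' measurableSet_Ioc fun τ hτ => rE_anti _ _ hτ.2
  by_cases hGtop : G = ∞
  · rw [hGtop, ENNReal.mul_top (ENNReal.ofReal_pos.2 ht).ne', top_le_iff] at hGt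
    rw [hGt, ENNReal.mul_top hP0, top_add, ENNReal.mul_top]
    · exact le_top
    · exact mul_ne_zero two_ne_zero (zero_lt_one.trans_le hc1).ne'
  set Γ := G.toReal with hΓ
  have hΓG : ENNReal.ofReal Γ = G := ENNReal.ofReal_toReal hGtop
  have hΓ0 : 0 ≤ Γ := ENNReal.toReal_nonneg
  set g1 : EuclideanSpace ℝ (Fin n) → ℝ := fun x => max (g x - Γ) 0 with hg1
  set g2 : EuclideanSpace ℝ (Fin n) → ℝ := fun x => min (g x) Γ with hg2
  have hg1m : Measurable g1 := by fun_prop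
  have hg2m : Measurable g2 := by fun_prop
  have hg10 : ∀ x, 0 ≤ g1 x := fun x => le_max_right _ _
  have hg20 : ∀ x, 0 ≤ g2 x := fun x => le_min (hg0 x) hΓ0
  have hsplit : ∀ x, g x = g1 x + g2 x := by
    intro x
    simp only [hg1, hg2]
    rcases le_total (g x) Γ with h | h
    · rw [max_eq_right (by linarith), min_eq_left h]; ring
    · rw [max_eq_left (by linarith), min_eq_right h]; ring
  have hk : ∀ x, kconv n g x = kconv n g1 x + kconv n g2 x := by
    intro x
    unfold kconv
    rw [← lintegral_add_left (by fun_prop)]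
    refine lintegral_congr fun y => ?_
    rw [hsplit, ENNReal.ofReal_add (hg10 _) (hg20 _), mul_add]
  -- first piece
  have hmono1 : ∀ τ, rearr volume g1 τ ≤ rearr volume g τ := by
    intro τ
    refine rE_mono _ (Filter.Eventually.of_forall fun x => ENNReal.ofReal_le_ofReal ?_) τ
    rw [abs_of_nonneg (hg10 x), abs_of_nonneg (hg0 x), hsplit x]
    linarith [hg20 x]
  have hmono2 : ∀ τ, rearr volume g2 τ ≤ rearr volume g τ := by
    intro τ
    refine rE_mono _ (Filter.Eventually.of_forall fun x => ENNReal.ofReal_le_ofReal ?_) τ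
    rw [abs_of_nonneg (hg20 x), abs_of_nonneg (hg0 x), hsplit x]
    linarith [hg10 x]
  have hzero1 : ∀ τ, t ≤ τ → rearr volume g1 τ ≤ 0 := by
    intro τ hτ
    rw [rearr_eq_rE, rE_le_iff]
    refine (measure_mono ?_).trans ((rE_meas volume (fun x => ENNReal.ofReal |g x|) t).trans
      (ENNReal.ofReal_le_ofReal hτ))
    intro x hx
    simp only [mem_ofPred_eq, ENNReal.ofReal_pos, abs_of_nonneg (hg10 x)] at hx
    simp only [mem_ofPred_eq]
    rw [← rearr_eq_rE, ← hG, ← hΓG, abs_of_nonneg (hg0 x)]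
    have : Γ < g x := by
      simp only [hg1, lt_max_iff, lt_irrefl, or_false] at hx
      linarith
    exact (ENNReal.ofReal_lt_ofReal_iff (by linarith)).2 this
  have hbd2 : ∀ τ, 0 ≤ τ → rearr volume g2 τ ≤ G := by
    intro τ hτ
    rw [rearr_eq_rE, rE_le_iff]
    refine le_trans (le_of_eq ?_) zero_le
    convert measure_empty (μ := volume)
    ext x
    simp only [mem_ofPred_eq, mem_empty_iff_false, iff_false, not_lt]
    rw [← hΓG, abs_of_nonneg (hg20 x)]
    exact ENNReal.ofReal_le_ofReal (min_le_right _ _)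
  have hI1 : ∫⁻ x, ENNReal.ofReal (g1 x) ≤ ∫⁻ τ in Ioc 0 t, rearr volume g τ := by
    rw [lintegral_eq_lintegral_meas_lt _ (Filter.Eventually.of_forall hg10) hg1m.aemeasurable]
    have h1 := aux_distrib volume g1 hg10 (a := 1) one_pos
    simp only [ENNReal.rpow_one, sub_self, Real.rpow_zero, mul_one, ENNReal.ofReal_one, one_mul] at h1
    refine h1.trans ?_
    rw [← Ioc_union_Ioi_eq_Ioi ht.le]
    refine (lintegral_union_le _ _ _).trans ?_
    have h2 : ∫⁻ τ in Ioi t, rearr volume g1 τ ≤ 0 := by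
      refine (setLIntegral_mono' measurableSet_Ioi (g := fun _ => 0) fun τ hτ => hzero1 τ (le_of_lt hτ)).trans ?_
      simp
    calc _ ≤ (∫⁻ τ in Ioc 0 t, rearr volume g τ) + 0 := by
          gcongr
          exact hmono1 _
      _ = _ := add_zero _
  have hA := (kconv_weak n hn c hc1 hct hc g1 hg1m t ht)
  have hB : ∀ x, kconv n g2 x ≤ c * (P * (∫⁻ τ in Ioc 0 t, rearr volume g τ) +
      ∫⁻ τ in Ioi t, rearr volume g τ * ENNReal.ofReal (τ ^ ((1:ℝ) / n - 1))) := by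
    intro x
    refine (kconv_sup n c hct hc g2 hg2m hg20 x).trans ?_
    gcongr
    refine (aux_distrib volume g2 hg20 (a := 1 / n) (by positivity)).trans ?_
    rw [← Ioc_union_Ioi_eq_Ioi ht.le]
    refine (lintegral_union_le _ _ _).trans ?_
    refine add_le_add ?_ ?_
    · calc ∫⁻ τ in Ioc 0 t, ENNReal.ofReal (1 / n * τ ^ ((1:ℝ) / n - 1)) * rearr volume g2 τ
          ≤ ∫⁻ τ in Ioc 0 t, ENNReal.ofReal (1 / n * τ ^ ((1:ℝ) / n - 1)) * G := by
            refine setLIntegral_mono' measurableSet_Ioc fun τ hτ => ?_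
            gcongr
            exact hbd2 τ hτ.1.le
        _ = ENNReal.ofReal (t ^ ((1:ℝ) / n)) * G := by
            rw [lintegral_mul_const' _ _ hGtop, aux_int_rpow (by positivity) ht.le]
        _ = P * (ENNReal.ofReal t * G) := by
            rw [hP, ← mul_assoc, ← ENNReal.ofReal_mul (by positivity), Real.rpow_sub_one ht.ne']
            congr 2
            field_simp
        _ ≤ _ := by gcongr
    · refine setLIntegral_mono' measurableSet_Ioi fun τ hτ => ?_
      rw [mul_comm]
      have : 0 < τ := ht.trans hτ
      gcongr
      · exact hmono2 τ
      · have : (1:ℝ) / n ≤ 1 := by rw [div_le_one (by linarith)]; linarith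
        exact mul_le_of_le_one_left (by positivity) this
  set B := c * (P * (∫⁻ τ in Ioc 0 t, rearr volume g τ) +
      ∫⁻ τ in Ioi t, rearr volume g τ * ENNReal.ofReal (τ ^ ((1:ℝ) / n - 1))) with hBdef
  have hfin : rE volume (kconv n g) t ≤ rE volume (kconv n g1) t + B := by
    rw [rE_le_iff]
    refine (measure_mono ?_).trans (rE_meas volume (kconv n g1) t)
    intro x hx
    simp only [mem_ofPred_eq] at hx ⊢
    by_contra hcon
    push Not at hcon
    rw [hk] at hx
    exact absurd hx (not_lt.2 (add_le_add hcon (hB x)))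
  have hA2 : rE volume (kconv n g1) t ≤ B := by
    refine hA.trans ?_
    rw [hBdef]
    gcongr
    exact (mul_le_mul_right hI1 P).trans le_self_add
  calc _ ≤ B + B := hfin.trans (by gcongr)
    _ = _ := by rw [hBdef]; ring

theorem aux_scale {a : ℝ} (ha : 0 < a) (h : ℝ → ℝ≥0∞) (hh : Measurable h) (S : Set ℝ)
    (hS : MeasurableSet S) :
    ∫⁻ t in S, h t = ENNReal.ofReal a * ∫⁻ t in (fun x => a * x) ⁻¹' S, h (a * t) := by
  conv_lhs => rw [← Real.smul_map_volume_mul_left ha.ne']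
  rw [Measure.restrict_smul, lintegral_smul_measure, abs_of_pos ha, smul_eq_mul,
    setLIntegral_map hS hh (measurable_const_mul a)]

theorem potl_le (n : ℕ) (u u' f : EuclideanSpace ℝ (Fin n) → ℝ) (huu : u =ᵐ[volume] u')
    (x : EuclideanSpace ℝ (Fin n)) :
    ENNReal.ofReal |potl n (fun y => u y * f y) x| ≤ kconv n (fun y => |u' y * f y|) x := by
  rw [← Real.norm_eq_abs, ofReal_norm]
  unfold potl kconv
  refine (enorm_integral_le_lintegral_enorm _).trans (lintegral_mono_ae ?_)
  have := (Measure.measurePreserving_sub_left (volume : Measure (EuclideanSpace ℝ (Fin n))) x).quasiMeasurePreserving.ae huu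
  filter_upwards [this] with y hy
  rw [enorm_mul, hy]
  simp only [← ofReal_norm, Real.norm_eq_abs]
  rw [abs_of_nonneg (by positivity)]

theorem est_H (n : ℕ) (hn : 2 ≤ n) : ∃ c : ℝ≥0∞, c ≠ ∞ ∧
    ∀ u u' f : EuclideanSpace ℝ (Fin n) → ℝ, u =ᵐ[volume] u' → Measurable u' → Measurable f →
      ∀ r : ℝ, 0 < r →
    rE volume (kconv n (fun y => |u' y * f y|)) (2 * r) ≤ c * (ENNReal.ofReal (r ^ ((1:ℝ) / n - 1)) *
        (∫⁻ τ in Ioc 0 r, rearr volume u τ * rearr volume f τ) +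
      ∫⁻ τ in Ioi r, rearr volume u τ * rearr volume f τ * ENNReal.ofReal (τ ^ ((1:ℝ) / n - 1))) := by
  obtain ⟨c, hct, hc⟩ := oneil n hn
  have hn' : (2:ℝ) ≤ n := by exact_mod_cast hn
  have hexp : (1:ℝ) / n - 1 ≤ 0 := by
    rw [sub_nonpos, div_le_one (by linarith)]; linarith
  refine ⟨c * ENNReal.ofReal 2, by finiteness, fun u u' f huu hu' hf r hr => ?_⟩
  have hum : Measurable (rearr volume u) := rE_measurable _ _
  have hfm : Measurable (rearr volume f) := rE_measurable _ _
  have hg : ∀ τ, 0 < τ → rearr volume (fun y => |u' y * f y|) τ ≤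
      rearr volume u (2⁻¹ * τ) * rearr volume f (2⁻¹ * τ) := by
    intro τ hτ
    rw [rearr_eq_rE, rearr_eq_rE, rearr_eq_rE]
    have h1 := rE_mul volume (fun x => ENNReal.ofReal |u x|) (fun x => ENNReal.ofReal |f x|)
      (a := 2⁻¹ * τ) (b := 2⁻¹ * τ) (by positivity) (by positivity)
    rw [show 2⁻¹ * τ + 2⁻¹ * τ = τ by ring] at h1
    refine le_trans (rE_mono _ ?_ _) h1
    filter_upwards [huu] with x hx
    rw [hx, abs_abs, abs_mul, ENNReal.ofReal_mul (abs_nonneg _)]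
  have hphi : ∀ τ : ℝ, 0 < τ → ENNReal.ofReal ((2 * τ) ^ ((1:ℝ) / n - 1)) ≤
      ENNReal.ofReal (τ ^ ((1:ℝ) / n - 1)) := fun τ hτ =>
    ENNReal.ofReal_le_ofReal (Real.rpow_le_rpow_of_nonpos hτ (by linarith) hexp)
  refine (hc _ (by fun_prop) (fun x => abs_nonneg _) (2 * r) (by linarith)).trans ?_
  rw [mul_assoc]
  gcongr
  rw [mul_add]
  refine add_le_add ?_ ?_
  · rw [mul_left_comm]
    refine mul_le_mul' (hphi r hr) ?_
    calc ∫⁻ τ in Ioc 0 (2 * r), rearr volume (fun y => |u' y * f y|) τ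
        ≤ ∫⁻ τ in Ioc 0 (2 * r), rearr volume u (2⁻¹ * τ) * rearr volume f (2⁻¹ * τ) :=
          setLIntegral_mono' measurableSet_Ioc fun τ hτ => hg τ hτ.1
      _ = ENNReal.ofReal 2 * ∫⁻ τ in (fun x => 2 * x) ⁻¹' Ioc 0 (2 * r),
            rearr volume u (2⁻¹ * (2 * τ)) * rearr volume f (2⁻¹ * (2 * τ)) :=
          aux_scale two_pos _ (by fun_prop) _ measurableSet_Ioc
      _ = _ := by
          have : (fun x : ℝ => 2 * x) ⁻¹' Ioc 0 (2 * r) = Ioc 0 r := by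
            ext x; simp
          rw [this]
          simp
  · calc ∫⁻ τ in Ioi (2 * r), rearr volume (fun y => |u' y * f y|) τ * ENNReal.ofReal (τ ^ ((1:ℝ) / n - 1))
        ≤ ∫⁻ τ in Ioi (2 * r), rearr volume u (2⁻¹ * τ) * rearr volume f (2⁻¹ * τ) * ENNReal.ofReal (τ ^ ((1:ℝ) / n - 1)) :=
          setLIntegral_mono' measurableSet_Ioi fun τ hτ => by
            gcongr
            exact hg τ (lt_trans (by linarith) hτ)
      _ = ENNReal.ofReal 2 * ∫⁻ τ in (fun x => 2 * x) ⁻¹' Ioi (2 * r),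
            rearr volume u (2⁻¹ * (2 * τ)) * rearr volume f (2⁻¹ * (2 * τ)) * ENNReal.ofReal ((2 * τ) ^ ((1:ℝ) / n - 1)) :=
          aux_scale two_pos _ (by fun_prop) _ measurableSet_Ioi
      _ ≤ _ := by
          have : (fun x : ℝ => 2 * x) ⁻¹' Ioi (2 * r) = Ioi r := by
            ext x; simp
          rw [this]
          gcongr ENNReal.ofReal 2 * ?_
          refine setLIntegral_mono' measurableSet_Ioi fun τ hτ => ?_
          rw [inv_mul_cancel_left₀ two_ne_zero]
          exact mul_le_mul' le_rfl (hphi τ (hr.trans hτ))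

theorem aux_pow {r : ℝ} (hr : 0 < r) {s q : ℝ} (hq : 0 < q) (X : ℝ≥0∞) :
    (ENNReal.ofReal r ^ s⁻¹ * X) ^ q / ENNReal.ofReal r = ENNReal.ofReal r ^ (q / s - 1) * X ^ q := by
  have h0 : ENNReal.ofReal r ≠ 0 := (ENNReal.ofReal_pos.2 hr).ne'
  rw [ENNReal.mul_rpow_of_nonneg _ _ hq.le, ← ENNReal.rpow_mul,
    ENNReal.rpow_sub _ _ h0 ENNReal.ofReal_ne_top, ENNReal.rpow_one,
    show s⁻¹ * q = q / s by ring]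
  simp only [div_eq_mul_inv]
  ring

theorem lorentz_eq {α : Type*} [MeasurableSpace α] (μ : Measure α) {p q : ℝ} (hp : 0 < p)
    (hq : 0 < q) (f : α → ℝ) :
    lorentz μ (ENNReal.ofReal p) (ENNReal.ofReal q) f =
      (∫⁻ t in Ioi (0:ℝ), ENNReal.ofReal t ^ (q / p - 1) * rearr μ f t ^ q) ^ q⁻¹ := by
  unfold lorentz
  rw [if_neg ENNReal.ofReal_ne_top, ENNReal.toReal_ofReal hp.le, ENNReal.toReal_ofReal hq.le]
  congr 1
  exact setLIntegral_congr_fun measurableSet_Ioi fun t ht => aux_pow ht hq _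

/-- Proposition 5.1 of the paper in the Euclidean case: sufficient conditions on the
weights `u, v` for the weighted Lorentz boundedness `‖v T(u f)‖_{s,q₃} ≲ ‖f‖_{p,q₂}`,
where `φ(t) = t^{1/n - 1}`. -/
theorem stmt_15 (n : ℕ) (hn : 2 ≤ n) (p s q₂ q₃ : ℝ)
    (hp : 1 ≤ p) (hs : 1 ≤ s) (hq₂ : 1 < q₂) (hq₂₃ : q₂ ≤ q₃)
    (u v : EuclideanSpace ℝ (Fin n) → ℝ)
    (hu0 : ∀ x, 0 ≤ u x) (hv0 : ∀ x, 0 ≤ v x)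
    (hu : LocallyIntegrable u volume) (hv : LocallyIntegrable v volume)
    (hcond1 : (⨆ t ∈ Ioi (0 : ℝ),
      (∫⁻ τ in Ioi t, ENNReal.ofReal τ ^ (q₃ / s - 1) *
          ENNReal.ofReal (τ ^ ((1 : ℝ) / n - 1)) ^ q₃ * rearr volume v τ ^ q₃) ^ (1 / q₃) *
        (∫⁻ τ in Ioc (0 : ℝ) t, ENNReal.ofReal τ ^
            (q₂ / (q₂ - 1) - (q₂ / (q₂ - 1)) / p - 1) *
          rearr volume u τ ^ (q₂ / (q₂ - 1))) ^ ((q₂ - 1) / q₂)) < ∞)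
    (hcond2 : (⨆ t ∈ Ioi (0 : ℝ),
      (∫⁻ τ in Ioc (0 : ℝ) t, ENNReal.ofReal τ ^ (q₃ / s - 1) *
          rearr volume v τ ^ q₃) ^ (1 / q₃) *
        (∫⁻ τ in Ioi t, ENNReal.ofReal τ ^
            (q₂ / (q₂ - 1) - (q₂ / (q₂ - 1)) / p - 1) *
          rearr volume u τ ^ (q₂ / (q₂ - 1)) *
          ENNReal.ofReal (τ ^ ((1 : ℝ) / n - 1)) ^ (q₂ / (q₂ - 1))) ^ ((q₂ - 1) / q₂)) < ∞) :
    ∃ C : ℝ, 0 < C ∧ ∀ f : EuclideanSpace ℝ (Fin n) → ℝ, Measurable f →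
      lorentz volume (ENNReal.ofReal s) (ENNReal.ofReal q₃)
          (fun x => v x * potl n (fun y => u y * f y) x) ≤
        ENNReal.ofReal C * lorentz volume (ENNReal.ofReal p) (ENNReal.ofReal q₂) f := by
  have hq0 : 0 < q₂ := by linarith
  have hq30 : 0 < q₃ := by linarith
  have hp0 : 0 < p := by linarith
  have hs0 : 0 < s := by linarith
  have hq1 : q₂ - 1 ≠ 0 := by linarith
  set q' := q₂ / (q₂ - 1) with hq'
  have hpp : q₂.HolderConjugate q' := Real.HolderConjugate.conjExponent hq₂
  have hq'0 : 0 < q' := hpp.symm.pos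
  have hinv : (q₂ - 1) / q₂ = 1 / q' := by rw [hq']; field_simp
  rw [hinv] at hcond1 hcond2
  set A := max (⨆ t ∈ Ioi (0 : ℝ),
      (∫⁻ τ in Ioi t, ENNReal.ofReal τ ^ (q₃ / s - 1) *
          ENNReal.ofReal (τ ^ ((1 : ℝ) / n - 1)) ^ q₃ * rearr volume v τ ^ q₃) ^ (1 / q₃) *
        (∫⁻ τ in Ioc (0 : ℝ) t, ENNReal.ofReal τ ^
            (q' - q' / p - 1) * rearr volume u τ ^ q') ^ (1 / q'))
      (⨆ t ∈ Ioi (0 : ℝ),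
      (∫⁻ τ in Ioc (0 : ℝ) t, ENNReal.ofReal τ ^ (q₃ / s - 1) *
          rearr volume v τ ^ q₃) ^ (1 / q₃) *
        (∫⁻ τ in Ioi t, ENNReal.ofReal τ ^ (q' - q' / p - 1) *
          rearr volume u τ ^ q' *
          ENNReal.ofReal (τ ^ ((1 : ℝ) / n - 1)) ^ q') ^ (1 / q')) with hAdef
  have hA : A ≠ ∞ := (max_lt hcond1 hcond2).ne
  obtain ⟨c, hct, hc⟩ := est_H n hn
  obtain ⟨u', hu'm, huu⟩ := hu.aestronglyMeasurable
  have hum : Measurable (rearr volume u) := rE_measurable _ _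
  have hvm : Measurable (rearr volume v) := rE_measurable _ _
  -- constants
  set K : ℝ≥0∞ := ENNReal.ofReal 3 * (ENNReal.ofReal 3 ^ (q₃ / s - 1) * (c ^ q₃ * 2 ^ (q₃ - 1))) with hK
  have hKt : K ≠ ∞ := by
    rw [hK]
    refine ENNReal.mul_ne_top ENNReal.ofReal_ne_top (ENNReal.mul_ne_top ?_ (ENNReal.mul_ne_top ?_ ?_))
    · exact ENNReal.rpow_ne_top_of_ne_zero (by simp) ENNReal.ofReal_ne_top
    · exact ENNReal.rpow_ne_top_of_nonneg hq30.le hct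
    · exact ENNReal.rpow_ne_top_of_nonneg (by linarith) (by simp)
  set C0 : ℝ≥0∞ := (K * (2 * ((4 * A) ^ q₃ * 2 ^ (q₃ / q₂)))) ^ q₃⁻¹ with hC0
  have hC0t : C0 ≠ ∞ := by
    rw [hC0]
    refine ENNReal.rpow_ne_top_of_nonneg (by positivity) (ENNReal.mul_ne_top hKt
      (ENNReal.mul_ne_top (by simp) (ENNReal.mul_ne_top ?_ ?_)))
    · exact ENNReal.rpow_ne_top_of_nonneg hq30.le (by finiteness)
    · exact ENNReal.rpow_ne_top_of_nonneg (by positivity) (by simp)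
  have hCpos : 0 < C0.toReal + 1 := by have := ENNReal.toReal_nonneg (a := C0); linarith
  refine ⟨C0.toReal + 1, hCpos, fun f hf => ?_⟩
  have hfm : Measurable (rearr volume f) := rE_measurable _ _
  rw [lorentz_eq _ hs0 hq30, lorentz_eq _ hp0 hq0]
  set N := ∫⁻ t in Ioi (0:ℝ), ENNReal.ofReal t ^ (q₂ / p - 1) * rearr volume f t ^ q₂ with hN
  by_cases hNt : N = ∞
  · rw [hNt, ENNReal.top_rpow_of_pos (by positivity),
      ENNReal.mul_top (ENNReal.ofReal_pos.2 hCpos).ne']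
    exact le_top
  have hC : C0 ≤ ENNReal.ofReal (C0.toReal + 1) := by
    rw [← ENNReal.ofReal_toReal hC0t]
    refine ENNReal.ofReal_le_ofReal ?_
    rw [ENNReal.toReal_ofReal ENNReal.toReal_nonneg]
    linarith
  refine le_trans ?_ (mul_le_mul' hC le_rfl)
  -- Hardy data
  set U : ℝ → ℝ≥0∞ := fun τ => ENNReal.ofReal τ ^ (1 / q₂ - 1 / p) * rearr volume u τ with hU
  set U2 : ℝ → ℝ≥0∞ := fun τ => U τ * ENNReal.ofReal (τ ^ ((1 : ℝ) / n - 1)) with hU2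
  set F : ℝ → ℝ≥0∞ := fun τ => ENNReal.ofReal τ ^ (1 / p - 1 / q₂) * rearr volume f τ with hF
  set W1 : ℝ → ℝ≥0∞ := fun τ => ENNReal.ofReal τ ^ (q₃ / s - 1) *
          ENNReal.ofReal (τ ^ ((1 : ℝ) / n - 1)) ^ q₃ * rearr volume v τ ^ q₃ with hW1
  set W2 : ℝ → ℝ≥0∞ := fun τ => ENNReal.ofReal τ ^ (q₃ / s - 1) * rearr volume v τ ^ q₃ with hW2
  have hUm : Measurable U := by fun_prop
  have hU2m : Measurable U2 := by fun_prop
  have hFm : Measurable F := by fun_prop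
  have hW1m : Measurable W1 := by fun_prop
  have hW2m : Measurable W2 := by fun_prop
  have hUF : ∀ τ, 0 < τ → U τ * F τ = rearr volume u τ * rearr volume f τ := by
    intro τ hτ
    have h0 : ENNReal.ofReal τ ≠ 0 := (ENNReal.ofReal_pos.2 hτ).ne'
    have h1 : ENNReal.ofReal τ ^ (1 / q₂ - 1 / p) * ENNReal.ofReal τ ^ (1 / p - 1 / q₂) = 1 := by
      rw [← ENNReal.rpow_add _ _ h0 ENNReal.ofReal_ne_top]
      simp
    calc U τ * F τ = (ENNReal.ofReal τ ^ (1 / q₂ - 1 / p) * ENNReal.ofReal τ ^ (1 / p - 1 / q₂)) *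
          (rearr volume u τ * rearr volume f τ) := by simp only [hU, hF]; ring
      _ = _ := by rw [h1, one_mul]
  have hFN : ∫⁻ t in Ioi (0:ℝ), F t ^ q₂ = N := by
    refine setLIntegral_congr_fun measurableSet_Ioi fun t ht => ?_
    simp only [hF]
    rw [ENNReal.mul_rpow_of_nonneg _ _ hq0.le, ← ENNReal.rpow_mul]
    congr 2
    field_simp
  have hUq : ∀ τ, U τ ^ q' = ENNReal.ofReal τ ^ (q' - q' / p - 1) * rearr volume u τ ^ q' := by
    intro τ
    simp only [hU]
    rw [ENNReal.mul_rpow_of_nonneg _ _ hq'0.le, ← ENNReal.rpow_mul]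
    congr 2
    rw [hq']
    field_simp
    ring
  have hU2q : ∀ τ, U2 τ ^ q' = ENNReal.ofReal τ ^ (q' - q' / p - 1) * rearr volume u τ ^ q' *
      ENNReal.ofReal (τ ^ ((1 : ℝ) / n - 1)) ^ q' := by
    intro τ
    simp only [hU2]
    rw [ENNReal.mul_rpow_of_nonneg _ _ hq'0.le, hUq]
  have hardy1 := hardy_abs (fun t => Ioc 0 t) (fun t => Ioi t)
    (fun s x _ hx => ⟨hx.1, Ioc_subset_Ioc_right hx.2⟩) aux_Ioc aux_Ioi
    (fun w => Monotone.measurable fun a b hab => lintegral_mono_set (Ioc_subset_Ioc_right hab))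
    hpp hq₂₃ W1 U F hW1m hUm hFm A hA (by rw [hFN]; exact hNt) (by
      intro t ht
      simp only [hUq]
      exact (le_iSup₂ (f := fun (t : ℝ) (_ : t ∈ Ioi (0:ℝ)) => (∫⁻ τ in Ioi t, W1 τ) ^ (1 / q₃) *
        (∫⁻ τ in Ioc (0 : ℝ) t, ENNReal.ofReal τ ^
            (q' - q' / p - 1) * rearr volume u τ ^ q') ^ (1 / q')) t ht).trans (le_max_left _ _))
  have hardy2 := hardy_abs (fun t => Ioi t) (fun t => Ioc 0 t)
    (fun s x hs hx => ⟨lt_trans hs hx, Ioi_subset_Ioi (le_of_lt hx)⟩) aux_Ioi aux_Ioc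
    (fun w => Antitone.measurable fun a b hab => lintegral_mono_set (Ioi_subset_Ioi hab))
    hpp hq₂₃ W2 U2 F hW2m hU2m hFm A hA (by rw [hFN]; exact hNt) (by
      intro t ht
      simp only [hU2q]
      exact (le_iSup₂ (f := fun (t : ℝ) (_ : t ∈ Ioi (0:ℝ)) => (∫⁻ τ in Ioc 0 t, W2 τ) ^ (1 / q₃) *
        (∫⁻ τ in Ioi t, ENNReal.ofReal τ ^ (q' - q' / p - 1) * rearr volume u τ ^ q' *
          ENNReal.ofReal (τ ^ ((1 : ℝ) / n - 1)) ^ q') ^ (1 / q')) t ht).trans (le_max_right _ _))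
  rw [hFN] at hardy1 hardy2
  set X : ℝ → ℝ≥0∞ := rearr volume (fun x => v x * potl n (fun y => u y * f y) x) with hX
  have hXm : Measurable X := rE_measurable _ _
  have hXb : ∀ r, 0 < r → X (3 * r) ≤ rearr volume v r * (c *
      (ENNReal.ofReal (r ^ ((1:ℝ) / n - 1)) * (∫⁻ τ in Ioc 0 r, U τ * F τ) +
        ∫⁻ τ in Ioi r, U2 τ * F τ)) := by
    intro r hr
    have h1 := rE_mul volume (fun x => ENNReal.ofReal |v x|) (kconv n (fun y => |u' y * f y|))
      (a := r) (b := 2 * r) hr.le (by linarith)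
    rw [show r + 2 * r = 3 * r by ring] at h1
    have h2 : X (3 * r) ≤ rE volume (fun x => ENNReal.ofReal |v x| *
        kconv n (fun y => |u' y * f y|) x) (3 * r) := by
      refine rE_mono _ (Filter.Eventually.of_forall fun x => ?_) _
      rw [abs_mul, ENNReal.ofReal_mul (abs_nonneg _)]
      exact mul_le_mul' le_rfl (potl_le n u u' f huu x)
    refine (h2.trans h1).trans (mul_le_mul' le_rfl ?_)
    refine (hc u u' f huu hu'm.measurable hf r hr).trans (le_of_eq ?_)
    have e1 : ∫⁻ τ in Ioc 0 r, U τ * F τ =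
        ∫⁻ τ in Ioc 0 r, rearr volume u τ * rearr volume f τ :=
      setLIntegral_congr_fun measurableSet_Ioc fun τ hτ => hUF τ hτ.1
    have e2 : ∫⁻ τ in Ioi r, U2 τ * F τ = ∫⁻ τ in Ioi r, rearr volume u τ * rearr volume f τ *
        ENNReal.ofReal (τ ^ ((1 : ℝ) / n - 1)) := by
      refine setLIntegral_congr_fun measurableSet_Ioi fun τ hτ => ?_
      simp only [hU2]
      rw [mul_right_comm, hUF τ (hr.trans hτ)]
    rw [e1, e2]
  have hmain : ∫⁻ t in Ioi (0:ℝ), ENNReal.ofReal t ^ (q₃ / s - 1) * X t ^ q₃ ≤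
      K * (2 * ((4 * A) ^ q₃ * (2 * N) ^ (q₃ / q₂))) := by
    rw [aux_scale (a := 3) (by norm_num) _ (by fun_prop) _ measurableSet_Ioi]
    have hpre : (fun x : ℝ => 3 * x) ⁻¹' Ioi 0 = Ioi 0 := by
      ext x; simp
    rw [hpre, hK, mul_assoc (ENNReal.ofReal 3)]
    gcongr ENNReal.ofReal 3 * ?_
    calc ∫⁻ r in Ioi (0:ℝ), ENNReal.ofReal (3 * r) ^ (q₃ / s - 1) * X (3 * r) ^ q₃
        ≤ ∫⁻ r in Ioi (0:ℝ), (ENNReal.ofReal 3 ^ (q₃ / s - 1) * (c ^ q₃ * 2 ^ (q₃ - 1))) *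
          (W1 r * (∫⁻ τ in Ioc 0 r, U τ * F τ) ^ q₃ + W2 r * (∫⁻ τ in Ioi r, U2 τ * F τ) ^ q₃) := by
          refine setLIntegral_mono' measurableSet_Ioi fun r hr => ?_
          have hr0 : 0 < r := hr
          set a1 := ∫⁻ τ in Ioc 0 r, U τ * F τ
          set a2 := ∫⁻ τ in Ioi r, U2 τ * F τ
          set P := ENNReal.ofReal (r ^ ((1:ℝ) / n - 1)) with hP
          have e1 : ENNReal.ofReal (3 * r) ^ (q₃ / s - 1) =
              ENNReal.ofReal 3 ^ (q₃ / s - 1) * ENNReal.ofReal r ^ (q₃ / s - 1) := by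
            rw [ENNReal.ofReal_mul (by norm_num),
              ENNReal.mul_rpow_of_ne_top ENNReal.ofReal_ne_top ENNReal.ofReal_ne_top]
          calc _ ≤ (ENNReal.ofReal 3 ^ (q₃ / s - 1) * ENNReal.ofReal r ^ (q₃ / s - 1)) *
                (rearr volume v r * (c * (P * a1 + a2))) ^ q₃ := by
                rw [e1]
                gcongr
                exact hXb r hr0
            _ = (ENNReal.ofReal 3 ^ (q₃ / s - 1) * ENNReal.ofReal r ^ (q₃ / s - 1)) *
                (rearr volume v r ^ q₃ * (c ^ q₃ * (P * a1 + a2) ^ q₃)) := by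
                rw [ENNReal.mul_rpow_of_nonneg _ _ hq30.le, ENNReal.mul_rpow_of_nonneg _ _ hq30.le]
            _ ≤ (ENNReal.ofReal 3 ^ (q₃ / s - 1) * ENNReal.ofReal r ^ (q₃ / s - 1)) *
                (rearr volume v r ^ q₃ * (c ^ q₃ * (2 ^ (q₃ - 1) * ((P * a1) ^ q₃ + a2 ^ q₃)))) := by
                gcongr _ * (_ * (_ * ?_))
                exact ENNReal.rpow_add_le_mul_rpow_add_rpow _ _ (by linarith)
            _ = _ := by
                rw [ENNReal.mul_rpow_of_nonneg _ _ hq30.le]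
                simp only [hW1, hW2, ← hP]
                ring
      _ = (ENNReal.ofReal 3 ^ (q₃ / s - 1) * (c ^ q₃ * 2 ^ (q₃ - 1))) *
          ((∫⁻ r in Ioi (0:ℝ), W1 r * (∫⁻ τ in Ioc 0 r, U τ * F τ) ^ q₃) +
            ∫⁻ r in Ioi (0:ℝ), W2 r * (∫⁻ τ in Ioi r, U2 τ * F τ) ^ q₃) := by
          have hm1 : Measurable fun r : ℝ => ∫⁻ τ in Ioc 0 r, U τ * F τ :=
            Monotone.measurable fun a b hab => lintegral_mono_set (Ioc_subset_Ioc_right hab)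
          have hm2 : Measurable fun r : ℝ => ∫⁻ τ in Ioi r, U2 τ * F τ :=
            Antitone.measurable fun a b hab => lintegral_mono_set (Ioi_subset_Ioi hab)
          rw [lintegral_const_mul _ (by fun_prop), lintegral_add_left (by fun_prop)]
      _ ≤ _ := by
          gcongr _ * ?_
          rw [two_mul ((4 * A) ^ q₃ * (2 * N) ^ (q₃ / q₂))]
          exact add_le_add hardy1 hardy2
  refine (ENNReal.rpow_le_rpow hmain (by positivity)).trans (le_of_eq ?_)
  rw [hC0, ENNReal.mul_rpow_of_nonneg 2 N (by positivity)]
  rw [show K * (2 * ((4 * A) ^ q₃ * (2 ^ (q₃ / q₂) * N ^ (q₃ / q₂)))) =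
    (K * (2 * ((4 * A) ^ q₃ * 2 ^ (q₃ / q₂)))) * N ^ (q₃ / q₂) by ring,
    ENNReal.mul_rpow_of_nonneg _ _ (by positivity), ← ENNReal.rpow_mul N]
  congr 2
  field_simp
end
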